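/- Let D ⊂ ℂⁿ be a bounded α-regular domain and let {D_j} be an increasing sequence of α-regular domains with D_j ⊂ D_{j+1} and D = ⋃_{j=1}^∞ D_j. Let E ⋐ D₁ be relatively compact in D₁ and let ψ be a bounded function on E with sup_E ψ < 0. Then lim_{j→∞} ω*_α(z,E,D_j,ψ) = ω*_α(z,E,D,ψ) for all z ∈ D. -/

import Mathlib

open MeasureTheory Filter Topology Complex Metric

noncomputable section

/-- Complex `n`-space. -/
abbrev Cn (n : ℕ) := Fin n → ℂ

/-- The Wirtinger derivative `∂f/∂z_j` of a (real-differentiable) function `f : ℂⁿ → ℂ`. -/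
noncomputable def wdz {n : ℕ} (j : Fin n) (f : Cn n → ℂ) (z : Cn n) : ℂ :=
  (fderiv ℝ f z (Pi.single j 1) - Complex.I * fderiv ℝ f z (Pi.single j Complex.I)) / 2

/-- The Wirtinger derivative `∂f/∂z̄_j` of a (real-differentiable) function `f : ℂⁿ → ℂ`. -/
noncomputable def wdzbar {n : ℕ} (j : Fin n) (f : Cn n → ℂ) (z : Cn n) : ℂ :=
  (fderiv ℝ f z (Pi.single j 1) + Complex.I * fderiv ℝ f z (Pi.single j Complex.I)) / 2

/-- The square of the Euclidean norm `|z|² = ∑ |z_i|²` on `ℂⁿ`. -/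
noncomputable def sqNorm {n : ℕ} (z : Cn n) : ℝ := ∑ i, Complex.normSq (z i)

/-- A closed, strictly positive differential form `α` of bidegree `(n-1, n-1)` with `C¹`
coefficients on `ℂⁿ`, recorded through its normalized coefficient matrix:  `coeff j k` is
the Hermitian positive-definite matrix `A_{jk}` such that
`dd^c u ∧ α = (∑_{j,k} A_{jk} ∂²u/∂z_j∂z̄_k) dV`.  In these terms closedness of `α`
reads `∑_j ∂A_{jk}/∂z_j = 0` for every `k` (the conjugate identity follows by
Hermitian symmetry). -/
structure AlphaForm (n : ℕ) where
  coeff : Fin n → Fin n → Cn n → ℂ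
  contDiff : ∀ j k, ContDiff ℝ 1 (coeff j k)
  hermitian : ∀ j k z, coeff k j z = starRingEnd ℂ (coeff j k z)
  strictlyPositive : ∀ z : Cn n, ∀ ξ : Fin n → ℂ, ξ ≠ 0 →
    0 < (∑ j, ∑ k, coeff j k z * ξ j * starRingEnd ℂ (ξ k)).re
  closed : ∀ k, ∀ z : Cn n, (∑ j, wdz j (coeff j k) z) = 0

/-- The second order operator `f ↦ ∑_{j,k} A_{jk} ∂²f/∂z_j∂z̄_k` representing the
top-degree form `dd^c f ∧ α` (with respect to Lebesgue measure). -/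
noncomputable def alphaOp {n : ℕ} (A : AlphaForm n) (f : Cn n → ℂ) (z : Cn n) : ℂ :=
  ∑ j, ∑ k, A.coeff j k z * wdzbar k (wdz j f) z

/-- The operator `alphaOp` applied to a real-valued function, returning the real part. -/
noncomputable def alphaOpR {n : ℕ} (A : AlphaForm n) (ω : Cn n → ℝ) (z : Cn n) : ℝ :=
  (alphaOp A (fun w => (ω w : ℂ)) z).re

/-- `u : ℂⁿ → EReal` is `α`-subharmonic on `D`: it is finite-or-`-∞`, strongly upper
semicontinuous on `D`, locally integrable on `D`, and the current `dd^c u ∧ α` is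
positive, i.e. `∫_D u · (α ∧ dd^c ω) ≥ 0` for every nonnegative test function `ω` on `D`. -/
def IsAlphaSubharmonicE {n : ℕ} (A : AlphaForm n) (D : Set (Cn n)) (u : Cn n → EReal) : Prop :=
  (∀ z ∈ D, u z ≠ ⊤) ∧
  UpperSemicontinuousOn u D ∧
  (∀ z₀ ∈ D, ∀ S : Set (Cn n),
      (∃ N ∈ 𝓝 z₀, volume (N \ S) = 0) → Filter.limsup u (𝓝[S] z₀) = u z₀) ∧
  LocallyIntegrableOn (fun z => (u z).toReal) D volume ∧
  ∀ ω : Cn n → ℝ, ContDiff ℝ (⊤ : ℕ∞) ω → HasCompactSupport ω → tsupport ω ⊆ D →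
    (∀ z, 0 ≤ ω z) → 0 ≤ ∫ z in D, (u z).toReal * alphaOpR A ω z

/-- A real-valued function is `α`-subharmonic on `D` if it is so as an `EReal`-valued
function. -/
def IsAlphaSubharmonic {n : ℕ} (A : AlphaForm n) (D : Set (Cn n)) (u : Cn n → ℝ) : Prop :=
  IsAlphaSubharmonicE A D (fun z => (u z : EReal))

/-- `h` is `α`-harmonic on the open set `U`: `dd^c h ∧ α = 0` there, in the sense of
currents. -/
def IsAlphaHarmonicOn {n : ℕ} (A : AlphaForm n) (U : Set (Cn n)) (h : Cn n → ℝ) : Prop :=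
  LocallyIntegrableOn h U volume ∧
  ∀ ω : Cn n → ℝ, ContDiff ℝ (⊤ : ℕ∞) ω → HasCompactSupport ω → tsupport ω ⊆ U →
    (∫ z in U, h z * alphaOpR A ω z) = 0

/-- `u` is strictly `α`-subharmonic on `G`: for every compact subdomain `G' ⋐ G` there is
`ε > 0` with `u - ε|z|²` `α`-subharmonic on `G'`. -/
def IsStrictlyAlphaSubharmonic {n : ℕ} (A : AlphaForm n) (G : Set (Cn n)) (u : Cn n → ℝ) :
    Prop :=
  ∀ G' : Set (Cn n), IsOpen G' → IsCompact (closure G') → closure G' ⊆ G →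
    ∃ ε > (0 : ℝ), IsAlphaSubharmonic A G' (fun z => u z - ε * sqNorm z)

/-- `D` is a bounded `α`-regular domain: a bounded domain carrying a negative
`α`-subharmonic exhaustion `ρ` with boundary limit `0`. -/
def IsAlphaRegularDomain {n : ℕ} (A : AlphaForm n) (D : Set (Cn n)) : Prop :=
  IsOpen D ∧ IsConnected D ∧ Bornology.IsBounded D ∧
  ∃ ρ : Cn n → ℝ, IsAlphaSubharmonic A D ρ ∧ (∀ z ∈ D, ρ z < 0) ∧
    ∀ ζ ∈ frontier D, Filter.Tendsto ρ (𝓝[D] ζ) (𝓝 0)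

/-- `D` is a strongly `α`-regular domain: `D = {ρ < 0}` for some `ρ` which is `C²` and
strictly `α`-subharmonic on a neighborhood `D⁺` of `closure D`. -/
def IsStronglyAlphaRegularDomain {n : ℕ} (A : AlphaForm n) (D : Set (Cn n)) : Prop :=
  IsOpen D ∧ IsConnected D ∧ Bornology.IsBounded D ∧
  ∃ Dp : Set (Cn n), IsOpen Dp ∧ closure D ⊆ Dp ∧
    ∃ ρ : Cn n → ℝ, ContDiffOn ℝ 2 ρ Dp ∧ IsStrictlyAlphaSubharmonic A Dp ρ ∧
      D = {z ∈ Dp | ρ z < 0}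

/-- The class `U(E, D, ψ)` of `α`-subharmonic functions `u` on `D` with `u ≤ ψ` on `E`
and `u < 0` on `D`. -/
def Uclass {n : ℕ} (A : AlphaForm n) (E D : Set (Cn n)) (ψ : Cn n → ℝ) :
    Set (Cn n → ℝ) :=
  {u | IsAlphaSubharmonic A D u ∧ (∀ z ∈ E, u z ≤ ψ z) ∧ ∀ z ∈ D, u z < 0}

/-- The weighted extremal function `ω_α(z, E, D, ψ)`. -/
noncomputable def omegaW {n : ℕ} (A : AlphaForm n) (E D : Set (Cn n)) (ψ : Cn n → ℝ)
    (z : Cn n) : ℝ :=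
  sSup ((fun u : Cn n → ℝ => u z) '' Uclass A E D ψ)

/-- The weighted `α`-subharmonic measure `ω*_α(z, E, D, ψ)`: the upper semicontinuous
regularization of `ω_α(·, E, D, ψ)`. -/
noncomputable def omegaWStar {n : ℕ} (A : AlphaForm n) (E D : Set (Cn n)) (ψ : Cn n → ℝ)
    (z : Cn n) : ℝ :=
  Filter.limsup (omegaW A E D ψ) (𝓝 z)

/-- The (unweighted) extremal function `ω_α(z, E, D)`. -/
noncomputable def omega0 {n : ℕ} (A : AlphaForm n) (E D : Set (Cn n)) : Cn n → ℝ :=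
  omegaW A E D (fun _ => (-1 : ℝ))

/-- The (unweighted) `α`-subharmonic measure `ω*_α(z, E, D)`. -/
noncomputable def omega0Star {n : ℕ} (A : AlphaForm n) (E D : Set (Cn n)) : Cn n → ℝ :=
  omegaWStar A E D (fun _ => (-1 : ℝ))

/-- `S` is `α`-polar in `D`: there is an `α`-subharmonic `ρ` on `D`, not identically
`-∞`, with `ρ = -∞` on `S`. -/
def IsAlphaPolar {n : ℕ} (A : AlphaForm n) (D S : Set (Cn n)) : Prop :=
  ∃ ρ : Cn n → EReal, IsAlphaSubharmonicE A D ρ ∧ (∃ z ∈ D, ρ z ≠ ⊥) ∧ ∀ z ∈ S, ρ z = ⊥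

/-- `u` is plurisubharmonic on `D`: upper semicontinuous, locally integrable, and with
positive semidefinite complex Hessian in the sense of distributions. -/
def IsPlurisubharmonic {n : ℕ} (D : Set (Cn n)) (u : Cn n → ℝ) : Prop :=
  UpperSemicontinuousOn u D ∧ LocallyIntegrableOn u D volume ∧
  ∀ ξ : Fin n → ℂ, ∀ ω : Cn n → ℝ, ContDiff ℝ (⊤ : ℕ∞) ω → HasCompactSupport ω →
    tsupport ω ⊆ D → (∀ z, 0 ≤ ω z) →
    0 ≤ ∫ z in D, u z *
      (∑ j, ∑ k, ξ j * starRingEnd ℂ (ξ k) * wdzbar k (wdz j (fun w => (ω w : ℂ))) z).re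

/-- The class `U(E,D)` for the plurisubharmonic measure. -/
def UclassPsh {n : ℕ} (E D : Set (Cn n)) : Set (Cn n → ℝ) :=
  {u | IsPlurisubharmonic D u ∧ (∀ z ∈ E, u z ≤ -1) ∧ ∀ z ∈ D, u z < 0}

/-- The plurisubharmonic extremal function `ω(z, E, D)`. -/
noncomputable def omegaPsh {n : ℕ} (E D : Set (Cn n)) (z : Cn n) : ℝ :=
  sSup ((fun u : Cn n → ℝ => u z) '' UclassPsh E D)

/-- The plurisubharmonic measure `ω*(z, E, D)`. -/
noncomputable def omegaPshStar {n : ℕ} (E D : Set (Cn n)) (z : Cn n) : ℝ :=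
  Filter.limsup (omegaPsh E D) (𝓝 z)

end

section P1
open MeasureTheory Filter Topology Complex Metric
open scoped ContDiff

/-- A smooth function on the line equal to `r^{-m}` for `r ≥ 1` and to `1` for `r ≤ 1/4`. -/
noncomputable def profB (m : ℕ) (r : ℝ) : ℝ :=
  (1 - Real.smoothTransition ((4 * r - 1) / 3)) +
    Real.smoothTransition ((4 * r - 1) / 3) * (r ^ m)⁻¹

lemma profB_of_le (m : ℕ) {r : ℝ} (hr : r ≤ 1 / 4) : profB m r = 1 := by
  have : Real.smoothTransition ((4 * r - 1) / 3) = 0 :=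
    Real.smoothTransition.zero_of_nonpos (by linarith)
  simp [profB, this]

lemma profB_of_ge (m : ℕ) {r : ℝ} (hr : 1 ≤ r) : profB m r = (r ^ m)⁻¹ := by
  have : Real.smoothTransition ((4 * r - 1) / 3) = 1 :=
    Real.smoothTransition.one_of_one_le (by linarith)
  simp [profB, this]

lemma one_le_inv_pow (m : ℕ) {r : ℝ} (h0 : 0 < r) (h1 : r ≤ 1) : 1 ≤ (r ^ m)⁻¹ :=
  (one_le_inv₀ (by positivity)).2 (pow_le_one₀ h0.le h1)

lemma contDiff_profB (m : ℕ) : ContDiff ℝ ∞ (profB m) := by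
  rw [contDiff_iff_contDiffAt]
  intro r
  by_cases hr : r < 1 / 4
  · have : profB m =ᶠ[𝓝 r] fun _ => (1 : ℝ) := by
      filter_upwards [Iio_mem_nhds hr] with x hx
      exact profB_of_le m (le_of_lt hx)
    exact contDiffAt_const.congr_of_eventuallyEq this
  · have hr0 : r ≠ 0 := by intro h; apply hr; rw [h]; norm_num
    have hS : ContDiff ℝ ∞ (fun r : ℝ => Real.smoothTransition ((4 * r - 1) / 3)) :=
      Real.smoothTransition.contDiff.comp (by fun_prop)
    unfold profB
    exact (contDiffAt_const.sub hS.contDiffAt).add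
      (hS.contDiffAt.mul ((contDiffAt_id.pow m).inv (pow_ne_zero _ hr0)))

lemma profB_ge (m : ℕ) {r : ℝ} (_h0 : 0 ≤ r) : profB m r ≤ 4 ^ m * profB m (4 * r) := by
  rcases lt_or_ge r (1/4) with hr | hr
  · rw [profB_of_le m hr.le]
    have h1 : 1 ≤ profB m (4 * r) := by
      rcases le_or_gt (4 * r) (1/4) with h | h
      · rw [profB_of_le m h]
      · have := one_le_inv_pow m (r := 4 * r) (by linarith) (by linarith)
        have h2 := Real.smoothTransition.nonneg ((4 * (4 * r) - 1) / 3)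
        unfold profB
        nlinarith
    have : (1:ℝ) ≤ 4 ^ m := one_le_pow₀ (by norm_num)
    nlinarith
  · rw [profB_of_ge m (r := 4 * r) (by linarith), mul_pow, mul_inv, ← mul_assoc,
      mul_inv_cancel₀ (by positivity), one_mul]
    rcases le_or_gt r 1 with h | h
    · have := one_le_inv_pow m (r := r) (by linarith) h
      have h2 := Real.smoothTransition.le_one ((4 * r - 1) / 3)
      unfold profB
      nlinarith
    · rw [profB_of_ge m h.le]

lemma exists_profile (m : ℕ) (hm : 1 ≤ m) : ∃ F φ : ℝ → ℝ, ContDiff ℝ ∞ F ∧ ContDiff ℝ ∞ φ ∧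
    (∀ r, 0 ≤ r → 0 ≤ F r) ∧ (∀ r, 1 ≤ r → F r = 0) ∧
    (∀ r, 0 ≤ r → 0 ≤ φ r) ∧ (∀ r, 1 ≤ r → φ r = 0) ∧ φ 0 ≠ 0 ∧
    ∀ r, 4 * (m * deriv F r + r * deriv (deriv F) r) = φ r - 4 ^ m * φ (4 * r) := by
  set b := profB m with hb
  have hbs : ContDiff ℝ ∞ b := contDiff_profB m
  have hbd : Differentiable ℝ b := hbs.differentiable (by simp)
  set β : ℝ → ℝ := fun r => (1/4) * (4 ^ m * b (4 * r) - b r) with hβ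
  have hβs : ContDiff ℝ ∞ β := by
    have : ContDiff ℝ ∞ (fun r => b (4 * r)) := hbs.comp (by fun_prop)
    fun_prop
  have hβ0 : ∀ r, 0 ≤ r → 0 ≤ β r := fun r hr => by
    have := profB_ge m hr
    simp only [hβ]; linarith
  have hβ1 : ∀ r, 1 ≤ r → β r = 0 := fun r hr => by
    simp only [hβ]
    rw [hb, profB_of_ge m hr, profB_of_ge m (by linarith : 1 ≤ 4 * r), mul_pow, mul_inv, ← mul_assoc,
      mul_inv_cancel₀ (by positivity)]
    ring
  set F : ℝ → ℝ := fun r => - ∫ x in (1:ℝ)..r, β x with hF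
  have hFd : ∀ r, HasDerivAt F (- β r) r := fun r =>
    (intervalIntegral.integral_hasDerivAt_right (hβs.continuous.intervalIntegrable _ _)
      hβs.continuous.stronglyMeasurable.stronglyMeasurableAtFilter hβs.continuous.continuousAt).neg
  have hF' : deriv F = fun r => - β r := funext fun r => (hFd r).deriv
  have hFs : ContDiff ℝ ∞ F := by
    rw [contDiff_infty_iff_deriv]
    exact ⟨fun r => (hFd r).differentiableAt, by rw [hF']; exact hβs.neg⟩
  have hb' : ContDiff ℝ ∞ (deriv b) := (contDiff_infty_iff_deriv.1 hbs).2
  have key : ∀ r, 1 < r → (m:ℝ) * b r + r * deriv b r = 0 := by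
    intro r h
    have hr : 0 < r := by linarith
    have h6 : b =ᶠ[𝓝 r] fun r => (r^m)⁻¹ := by
      filter_upwards [Ioi_mem_nhds h] with x hx
      exact profB_of_ge m (le_of_lt hx)
    rw [h6.deriv_eq, h6.eq_of_nhds,
        ((hasDerivAt_pow m r).fun_inv (pow_ne_zero _ hr.ne')).deriv]
    obtain ⟨k, rfl⟩ : ∃ k, m = k + 1 := ⟨m - 1, by omega⟩
    simp only [Nat.add_sub_cancel]
    field_simp
    ring
  refine ⟨F, fun r => m * b r + r * deriv b r, hFs, by fun_prop, ?_, ?_, ?_, ?_, ?_, ?_⟩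
  · intro r hr
    rcases le_or_gt r 1 with h | h
    · simp only [hF]
      rw [← intervalIntegral.integral_symm]
      exact intervalIntegral.integral_nonneg h fun x hx => hβ0 x (hr.trans hx.1)
    · simp only [hF]
      rw [intervalIntegral.integral_congr (g := fun _ => 0)]
      · simp
      · intro x hx
        rw [Set.uIcc_of_le h.le] at hx
        exact hβ1 x hx.1
  · intro r h
    simp only [hF]
    rw [intervalIntegral.integral_congr (g := fun _ => 0)]
    · simp
    · intro x hx
      rw [Set.uIcc_of_le h] at hx
      exact hβ1 x hx.1
  · intro r hr
    rcases hr.eq_or_lt with rfl | hr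
    · simp only [zero_mul, add_zero]
      rw [hb, profB_of_le m (by norm_num)]; positivity
    · set S : ℝ → ℝ := fun r : ℝ => Real.smoothTransition ((4 * r - 1) / 3) with hS
      have hSs : ContDiff ℝ ∞ S := Real.smoothTransition.contDiff.comp (by fun_prop)
      have hSm : Monotone S := fun x y hxy => Real.smoothTransition.monotone (by linarith)
      have hSd := (hSs.differentiable (by simp) r).hasDerivAt
      have hS' : 0 ≤ deriv S r := hSm.deriv_nonneg
      have h1 : HasDerivAt b (-(deriv S r) + (deriv S r * (r^m)⁻¹ +
          S r * (-(m * r^(m-1)) / (r^m)^2))) r := by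
        have h2 := ((hasDerivAt_const r (1:ℝ)).sub hSd).add
          (hSd.mul ((hasDerivAt_pow m r).inv (pow_ne_zero _ hr.ne')))
        refine h2.congr_deriv ?_
        simp only [Pi.inv_apply]
        ring
      show 0 ≤ m * b r + r * deriv b r
      rw [h1.deriv]
      rcases le_or_gt r 1 with h | h
      · have h3 := one_le_inv_pow m hr h
        have h4 : S r ≤ 1 := Real.smoothTransition.le_one _
        have h5 : (m:ℝ) * b r + r * (-(deriv S r) + (deriv S r * (r^m)⁻¹ +
          S r * (-(m * r^(m-1)) / (r^m)^2))) = m * (1 - S r) + r * deriv S r * ((r^m)⁻¹ - 1) := by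
          have : b r = (1 - S r) + S r * (r^m)⁻¹ := rfl
          rw [this]
          obtain ⟨k, rfl⟩ : ∃ k, m = k + 1 := ⟨m - 1, by omega⟩
          simp only [Nat.add_sub_cancel]
          field_simp
          ring
        rw [h5]
        have : 0 ≤ r * deriv S r * ((r^m)⁻¹ - 1) := by
          apply mul_nonneg (by positivity); linarith
        have : 0 ≤ (m:ℝ) * (1 - S r) := mul_nonneg (by positivity) (by linarith)
        linarith
      · rw [← h1.deriv, key r h]
  · intro r h
    have hr : 0 < r := by linarith
    have hc : Continuous (fun r => (m:ℝ) * b r + r * deriv b r) := by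
      have := hbs.continuous
      have := hb'.continuous
      fun_prop
    have hcl : IsClosed {r | (m:ℝ) * b r + r * deriv b r = 0} := isClosed_eq hc continuous_const
    have : closure (Set.Ioi (1:ℝ)) ⊆ {r | (m:ℝ) * b r + r * deriv b r = 0} :=
      closure_minimal (fun r hr => key r hr) hcl
    rw [closure_Ioi] at this
    exact this h
  · simp only [zero_mul, add_zero]
    rw [hb, profB_of_le m (by norm_num)]
    simp; omega
  · intro r
    have h1 : HasDerivAt β ((1/4) * (4^m * (deriv b (4 * r) * 4) - deriv b r)) r := by
      have h2 : HasDerivAt (fun r => b (4 * r)) (deriv b (4*r) * 4) r := by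
        have := (hbd (4*r)).hasDerivAt.comp r ((hasDerivAt_id' r).const_mul 4)
        rw [mul_one] at this
        exact this
      exact ((h2.const_mul _).sub (hbd r).hasDerivAt).const_mul _
    rw [hF']
    simp only [deriv.fun_neg]
    rw [h1.deriv]
    simp only [hβ]
    ring
end P1

section P2
open MeasureTheory Filter Topology Complex Metric
open scoped ContDiff

set_option linter.unusedSectionVars false

noncomputable section
section generic
variable {V : Type*} [NormedAddCommGroup V] [NormedSpace ℝ V] 

/-- second derivative -/
def D2 (f : V → ℝ) (x v w : V) : ℝ := fderiv ℝ (fderiv ℝ f) x v w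

lemma fderiv_fderiv_apply {f : V → ℝ} (hf : ContDiff ℝ 2 f) (x v w : V) :
    fderiv ℝ (fun y => fderiv ℝ f y w) x v = D2 f x v w := by
  have h1 : DifferentiableAt ℝ (fderiv ℝ f) x :=
    (hf.fderiv_right (m := 1) (by norm_num)).differentiable (by norm_num) x
  rw [fderiv_clm_apply h1 (differentiableAt_const w)]
  simp [D2]

lemma contDiff_fderiv_apply' {f : V → ℝ} {m n : WithTop ℕ∞} (hf : ContDiff ℝ n f) (h : m + 1 ≤ n) (v : V) :
    ContDiff ℝ m (fun y => fderiv ℝ f y v) :=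
  (hf.fderiv_right h).clm_apply contDiff_const

lemma continuous_D2 {f : V → ℝ} (hf : ContDiff ℝ 2 f) (v w : V) :
    Continuous (fun x => D2 f x v w) := by
  have h1 : ContDiff ℝ 1 (fderiv ℝ f) := hf.fderiv_right (by norm_num)
  have := (h1.continuous_fderiv (by norm_num))
  exact (this.clm_apply continuous_const).clm_apply continuous_const

lemma D2_symm {f : V → ℝ} (hf : ContDiff ℝ 2 f) (x v w : V) : D2 f x v w = D2 f x w v := by
  have := (hf.contDiffAt (x := x)).isSymmSndFDerivAt (by simp)
  exact this v w

lemma hcs_fderiv_apply {f : V → ℝ} (hf : HasCompactSupport f) (v : V) :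
    HasCompactSupport (fun y => fderiv ℝ f y v) :=
  hf.fderiv_apply ℝ v

lemma hcs_D2 {f : V → ℝ} (hf : HasCompactSupport f) (v w : V) :
    HasCompactSupport (fun y => D2 f y v w) := by
  have h1 := (hf.fderiv (𝕜 := ℝ)).fderiv (𝕜 := ℝ)
  refine h1.mono ?_
  intro x hx
  contrapose! hx
  simp only [Function.mem_support, not_not] at hx ⊢
  simp [D2, hx]

lemma D2_eq_zero_of_notMem_tsupport {f : V → ℝ} {x : V} (hx : x ∉ tsupport f) (v w : V) : D2 f x v w = 0 := by
  have h1 := (tsupport_fderiv_subset (𝕜 := ℝ) (f := fderiv ℝ f)).trans (tsupport_fderiv_subset (𝕜 := ℝ) (f := f))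
  have : fderiv ℝ (fderiv ℝ f) x = 0 := image_eq_zero_of_notMem_tsupport (fun h => hx (h1 h))
  simp [D2, this]

lemma D2_add {f g : V → ℝ} (hf : ContDiff ℝ 2 f) (hg : ContDiff ℝ 2 g) (x v w : V) :
    D2 (fun y => f y + g y) x v w = D2 f x v w + D2 g x v w := by
  have e : fderiv ℝ (fun y => f y + g y) = fun y => fderiv ℝ f y + fderiv ℝ g y := by
    funext y
    exact fderiv_fun_add (hf.differentiable (by norm_num) y) (hg.differentiable (by norm_num) y)
  unfold D2
  rw [e, fderiv_fun_add]
  · rfl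
  · exact (hf.fderiv_right (m := 1) (by norm_num)).differentiable (by norm_num) x
  · exact (hg.fderiv_right (m := 1) (by norm_num)).differentiable (by norm_num) x

lemma D2_const_mul {f : V → ℝ} (hf : ContDiff ℝ 2 f) (c : ℝ) (x v w : V) :
    D2 (fun y => c * f y) x v w = c * D2 f x v w := by
  have e : fderiv ℝ (fun y => c * f y) = fun y => c • fderiv ℝ f y := by
    funext y
    exact fderiv_const_mul (hf.differentiable (by norm_num) y) c
  unfold D2
  have h1 : DifferentiableAt ℝ (fderiv ℝ f) x :=
    (hf.fderiv_right (m := 1) (by norm_num)).differentiable (by norm_num) x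
  have h2 := (h1.hasFDerivAt.const_smul c).fderiv
  rw [e]
  change fderiv ℝ (c • fderiv ℝ f) x v w = _
  rw [h2]
  rfl

/-- derivative after `y ↦ (x - y)/s` -/
lemma fderiv_comp_scale {f : V → ℝ} (hf : ContDiff ℝ 1 f) (x : V) (c : ℝ) (y v : V) :
    fderiv ℝ (fun y => f (c • (x - y))) y v = - (c * fderiv ℝ f (c • (x - y)) v) := by
  have h1 : HasFDerivAt (fun y : V => c • (x - y)) (c • (- ContinuousLinearMap.id ℝ V)) y := by
    exact ((hasFDerivAt_id (𝕜 := ℝ) y).const_sub x).const_smul c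
  have h2 := ((hf.differentiable (by norm_num)) (c • (x - y))).hasFDerivAt.comp y h1
  have h3 := h2.fderiv
  have : (fun y => f (c • (x - y))) = f ∘ (fun y => c • (x - y)) := rfl
  rw [this, h3]
  simp

lemma D2_comp_scale {f : V → ℝ} (hf : ContDiff ℝ 2 f) (x : V) (c : ℝ) (y v w : V) :
    D2 (fun y => f (c • (x - y))) y v w = c ^ 2 * D2 f (c • (x - y)) v w := by
  have hsc : ContDiff ℝ 2 (fun y : V => f (c • (x - y))) := by fun_prop
  rw [← fderiv_fderiv_apply hsc]
  have : (fun z => fderiv ℝ (fun y => f (c • (x - y))) z w) = fun z => (fun ζ => - (c * fderiv ℝ f ζ w)) (c • (x - z)) := by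
    funext z
    exact fderiv_comp_scale (hf.of_le (by norm_num)) x c z w
  rw [this]
  have hg : ContDiff ℝ 1 (fun ζ => fderiv ℝ f ζ w) := contDiff_fderiv_apply' hf (by norm_num) w
  rw [fderiv_comp_scale (f := fun ζ => - (c * fderiv ℝ f ζ w)) (by fun_prop) x c y v]
  have h4 : fderiv ℝ (fun ζ => - (c * fderiv ℝ f ζ w)) (c • (x - y)) v = - (c * D2 f (c • (x - y)) v w) := by
    rw [fderiv_fun_neg, fderiv_const_mul (hg.differentiable (by norm_num) _)]
    simp [fderiv_fderiv_apply hf]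
  rw [h4]; ring

variable [FiniteDimensional ℝ V] [MeasurableSpace V] [BorelSpace V] (μ : Measure V) [μ.IsAddHaarMeasure]
variable {ι : Type*} [Fintype ι] (B : ι → V)

def Lop (a : ι → ι → V → ℝ) (f : V → ℝ) (x : V) : ℝ := ∑ i, ∑ j, a i j x * D2 f x (B i) (B j)

lemma continuous_Lop {a : ι → ι → V → ℝ} (ha : ∀ i j, Continuous (a i j)) {f : V → ℝ}
    (hf : ContDiff ℝ 2 f) : Continuous (Lop B a f) := by
  unfold Lop
  refine continuous_finsetSum _ fun i _ => continuous_finsetSum _ fun j _ => ?_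
  exact (ha i j).mul (continuous_D2 hf _ _)

lemma Lop_eq_zero {a : ι → ι → V → ℝ} {f : V → ℝ} {x : V} (hx : x ∉ tsupport f) : Lop B a f x = 0 := by
  simp [Lop, D2_eq_zero_of_notMem_tsupport hx]

lemma hcs_Lop {a : ι → ι → V → ℝ} {f : V → ℝ} (hf : HasCompactSupport f) : HasCompactSupport (Lop B a f) := by
  refine HasCompactSupport.of_support_subset_isCompact hf ?_
  intro x hx
  by_contra h
  exact hx (Lop_eq_zero B h)

lemma Lop_add {a : ι → ι → V → ℝ} {f g : V → ℝ} (hf : ContDiff ℝ 2 f) (hg : ContDiff ℝ 2 g) (x : V) :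
    Lop B a (fun y => f y + g y) x = Lop B a f x + Lop B a g x := by
  simp only [Lop, D2_add hf hg, mul_add, Finset.sum_add_distrib]

lemma Lop_const_mul {a : ι → ι → V → ℝ} {f : V → ℝ} (hf : ContDiff ℝ 2 f) (c : ℝ) (x : V) :
    Lop B a (fun y => c * f y) x = c * Lop B a f x := by
  simp only [Lop, D2_const_mul hf, Finset.mul_sum]
  refine Finset.sum_congr rfl fun i _ => Finset.sum_congr rfl fun j _ => by ring

theorem weakform (b : ι → ι → V → ℝ) (hb : ∀ i j, ContDiff ℝ 1 (b i j))
    (hdiv : ∀ j x, ∑ i, fderiv ℝ (b i j) x (B i) = 0)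
    {f φ : V → ℝ} (hf : ContDiff ℝ 1 f) (hφ : ContDiff ℝ 2 φ)
    (hc : HasCompactSupport f ∨ HasCompactSupport φ) :
    ∫ x, f x * Lop B b φ x ∂μ
      = - ∫ x, ∑ i, ∑ j, b i j x * fderiv ℝ f x (B i) * fderiv ℝ φ x (B j) ∂μ := by
  -- individual integrability
  have hfd : ∀ v, Continuous (fun x => fderiv ℝ f x v) := fun v =>
    (contDiff_fderiv_apply' hf (m := 0) (by norm_num) v).continuous
  have hφd : ∀ v, ContDiff ℝ 1 (fun x => fderiv ℝ φ x v) := fun v =>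
    contDiff_fderiv_apply' hφ (by norm_num) v
  have hbd : ∀ i j v, Continuous (fun x => fderiv ℝ (b i j) x v) := fun i j v =>
    (contDiff_fderiv_apply' (hb i j) (m := 0) (by norm_num) v).continuous
  have I1 : ∀ i j, Integrable (fun x => f x * b i j x * D2 φ x (B i) (B j)) μ := by
    intro i j
    refine Continuous.integrable_of_hasCompactSupport ?_ ?_
    · exact (hf.continuous.mul (hb i j).continuous).mul (continuous_D2 hφ _ _)
    · rcases hc with h | h
      · exact (h.mul_right).mul_right
      · exact (hcs_D2 h _ _).mul_left
  have I2 : ∀ i j, Integrable (fun x => b i j x * fderiv ℝ f x (B i) * fderiv ℝ φ x (B j)) μ := by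
    intro i j
    refine Continuous.integrable_of_hasCompactSupport ?_ ?_
    · exact ((hb i j).continuous.mul (hfd _)).mul (hφd _).continuous
    · rcases hc with h | h
      · exact (hcs_fderiv_apply h _).mul_left.mul_right
      · exact (hcs_fderiv_apply h _).mul_left
  have I3 : ∀ i j, Integrable (fun x => f x * fderiv ℝ (b i j) x (B i) * fderiv ℝ φ x (B j)) μ := by
    intro i j
    refine Continuous.integrable_of_hasCompactSupport ?_ ?_
    · exact (hf.continuous.mul (hbd _ _ _)).mul (hφd _).continuous
    · rcases hc with h | h
      · exact (h.mul_right).mul_right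
      · exact (hcs_fderiv_apply h _).mul_left
  have I4 : ∀ i j, Integrable (fun x => f x * b i j x * fderiv ℝ φ x (B j)) μ := by
    intro i j
    refine Continuous.integrable_of_hasCompactSupport ?_ ?_
    · exact (hf.continuous.mul (hb _ _).continuous).mul (hφd _).continuous
    · rcases hc with h | h
      · exact (h.mul_right).mul_right
      · exact (hcs_fderiv_apply h _).mul_left
  have key : ∀ i j, ∫ x, f x * b i j x * D2 φ x (B i) (B j) ∂μ
      = - ∫ x, b i j x * fderiv ℝ f x (B i) * fderiv ℝ φ x (B j) ∂μ
        - ∫ x, f x * fderiv ℝ (b i j) x (B i) * fderiv ℝ φ x (B j) ∂μ := by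
    intro i j
    have hfb : ContDiff ℝ 1 (fun x => f x * b i j x) := hf.mul (hb i j)
    have e1 : ∀ x, fderiv ℝ (fun x => f x * b i j x) x (B i) =
        b i j x * fderiv ℝ f x (B i) + f x * fderiv ℝ (b i j) x (B i) := by
      intro x
      rw [fderiv_fun_mul (hf.differentiable (by norm_num) x) ((hb i j).differentiable (by norm_num) x)]
      simp; ring
    have e2 : ∀ x, fderiv ℝ (fun y => fderiv ℝ φ y (B j)) x (B i) = D2 φ x (B i) (B j) :=
      fun x => fderiv_fderiv_apply hφ x _ _
    have := integral_mul_fderiv_eq_neg_fderiv_mul_of_integrable (μ := μ) (v := B i)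
      (f := fun x => f x * b i j x) (g := fun x => fderiv ℝ φ x (B j)) ?_ ?_ (I4 i j)
      (fun x _ => hfb.differentiable (by norm_num) x) (fun x _ => (hφd (B j)).differentiable (by norm_num) x)
    · simp only [e1, e2] at this
      rw [this]
      simp only [add_mul]
      rw [integral_add (I2 i j) (I3 i j)]
      ring
    · simp only [e1, add_mul]
      exact (I2 i j).add (I3 i j)
    · simp only [e2]; exact I1 i j
  have SS : ∀ (g : ι → ι → V → ℝ), (∀ i j, Integrable (g i j) μ) →
      ∫ x, ∑ i, ∑ j, g i j x ∂μ = ∑ i, ∑ j, ∫ x, g i j x ∂μ := by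
    intro g hg
    rw [integral_finsetSum _ (fun i _ => integrable_finsetSum _ fun j _ => hg i j)]
    exact Finset.sum_congr rfl fun i _ => integral_finsetSum _ fun j _ => hg i j
  have L1 : ∫ x, f x * Lop B b φ x ∂μ = ∑ i, ∑ j, ∫ x, f x * b i j x * D2 φ x (B i) (B j) ∂μ := by
    rw [← SS _ I1]
    congr 1; funext x
    simp only [Lop, Finset.mul_sum, mul_assoc]
  have L3 : ∑ i, ∑ j, ∫ x, f x * fderiv ℝ (b i j) x (B i) * fderiv ℝ φ x (B j) ∂μ = 0 := by
    rw [← SS _ I3]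
    have : ∀ x, ∑ i, ∑ j, f x * fderiv ℝ (b i j) x (B i) * fderiv ℝ φ x (B j) = 0 := by
      intro x
      rw [Finset.sum_comm]
      refine Finset.sum_eq_zero fun j _ => ?_
      rw [← Finset.sum_mul, ← Finset.mul_sum, hdiv]; simp
    simp [this]
  rw [L1, SS _ I2]
  simp only [key, Finset.sum_sub_distrib, Finset.sum_neg_distrib]
  rw [L3]; ring

theorem integral_Lop_eq_zero (b : ι → ι → V → ℝ) (hb : ∀ i j, ContDiff ℝ 1 (b i j))
    (hdiv : ∀ j x, ∑ i, fderiv ℝ (b i j) x (B i) = 0)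
    {φ : V → ℝ} (hφ : ContDiff ℝ 2 φ) (hc : HasCompactSupport φ) :
    ∫ x, Lop B b φ x ∂μ = 0 := by
  have := weakform μ B b hb hdiv (f := fun _ => (1 : ℝ)) contDiff_const hφ (Or.inr hc)
  simpa using this

theorem Lop_selfadjoint (b : ι → ι → V → ℝ) (hb : ∀ i j, ContDiff ℝ 1 (b i j))
    (hsymm : ∀ i j x, b i j x = b j i x)
    (hdiv : ∀ j x, ∑ i, fderiv ℝ (b i j) x (B i) = 0)
    {f φ : V → ℝ} (hf : ContDiff ℝ 2 f) (hφ : ContDiff ℝ 2 φ) (hc : HasCompactSupport φ) :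
    ∫ x, f x * Lop B b φ x ∂μ = ∫ x, φ x * Lop B b f x ∂μ := by
  rw [weakform μ B b hb hdiv (hf.of_le (by norm_num)) hφ (Or.inr hc),
    weakform μ B b hb hdiv (hφ.of_le (by norm_num)) hf (Or.inl hc)]
  congr 2; funext x
  rw [Finset.sum_comm]
  refine Finset.sum_congr rfl fun i _ => Finset.sum_congr rfl fun j _ => ?_
  rw [hsymm]; ring
end generic
end
end P2

section P3
open MeasureTheory Filter Topology Complex Metric
open scoped ContDiff

set_option linter.unusedSectionVars false

noncomputable section
section generic
variable {V : Type*} [NormedAddCommGroup V] [NormedSpace ℝ V] [FiniteDimensional ℝ V] [MeasurableSpace V] [BorelSpace V] (μ : Measure V) [μ.IsAddHaarMeasure]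

/-- convolution -/
def cv (u g : V → ℝ) (x : V) : ℝ := ∫ y, u y * g (x - y) ∂μ

lemma cv_eq (u g : V → ℝ) : cv μ u g = MeasureTheory.convolution u g (ContinuousLinearMap.mul ℝ ℝ) μ := by
  funext x; simp [cv, MeasureTheory.convolution]

lemma cv_contDiff {u g : V → ℝ} (hu : LocallyIntegrable u μ) {n : ℕ∞} (hg : ContDiff ℝ n g) (hc : HasCompactSupport g) :
    ContDiff ℝ n (cv μ u g) := by
  rw [cv_eq]
  exact hc.contDiff_convolution_right _ hu hg

lemma integrable_mul_sub {u g : V → ℝ} (hu : LocallyIntegrable u μ) (hg : Continuous g) (hc : HasCompactSupport g) (x : V) :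
    Integrable (fun y => u y * g (x - y)) μ := by
  have := hc.convolutionExists_right (ContinuousLinearMap.mul ℝ ℝ) hu hg x
  simpa [ConvolutionExistsAt] using this

lemma cv_fderiv {u g : V → ℝ} (hu : LocallyIntegrable u μ) (hg : ContDiff ℝ 1 g) (hc : HasCompactSupport g) (x v : V) :
    fderiv ℝ (cv μ u g) x v = cv μ u (fun z => fderiv ℝ g z v) x := by
  rw [cv_eq]
  have h := hc.hasFDerivAt_convolution_right (ContinuousLinearMap.mul ℝ ℝ) hu hg x
  rw [h.fderiv]
  have hex := (hc.fderiv (𝕜 := ℝ)).convolutionExists_right ((ContinuousLinearMap.mul ℝ ℝ).precompR V) hu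
    (hg.continuous_fderiv (by norm_num)) x
  unfold MeasureTheory.convolution cv
  rw [ContinuousLinearMap.integral_apply hex]
  simp

lemma cv_D2 {u g : V → ℝ} (hu : LocallyIntegrable u μ) (hg : ContDiff ℝ 2 g) (hc : HasCompactSupport g) (x v w : V) :
    D2 (cv μ u g) x v w = ∫ y, u y * D2 g (x - y) v w ∂μ := by
  have h2 : ContDiff ℝ 2 (cv μ u g) := cv_contDiff μ hu (n := 2) hg hc
  rw [← fderiv_fderiv_apply h2]
  have : (fun y => fderiv ℝ (cv μ u g) y w) = cv μ u (fun z => fderiv ℝ g z w) := by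
    funext y
    exact cv_fderiv μ hu (hg.of_le (by norm_num)) hc y w
  rw [this, cv_fderiv μ hu (contDiff_fderiv_apply' hg (by norm_num) w) (hcs_fderiv_apply hc w)]
  simp only [fderiv_fderiv_apply hg, cv]

/-- L¹ modulus of translation -/
def Nm (u : V → ℝ) (K : Set V) (h : V) : ENNReal := ∫⁻ x in K, ‖u (x + h) - u x‖ₑ ∂μ

lemma Nm_mono {u : V → ℝ} {K K' : Set V} (h : K ⊆ K') (v : V) : Nm μ u K v ≤ Nm μ u K' v :=
  lintegral_mono_set h

lemma Nm_le_two {u : V → ℝ} (hu : Measurable u) (K : Set V) (h : V) :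
    Nm μ u K h ≤ 2 * ∫⁻ x, ‖u x‖ₑ ∂μ := by
  calc Nm μ u K h ≤ ∫⁻ x, ‖u (x + h) - u x‖ₑ ∂μ := setLIntegral_le_lintegral _ _
    _ ≤ ∫⁻ x, (‖u (x + h)‖ₑ + ‖u x‖ₑ) ∂μ := lintegral_mono fun x => enorm_sub_le
    _ = ∫⁻ x, ‖u (x + h)‖ₑ ∂μ + ∫⁻ x, ‖u x‖ₑ ∂μ := lintegral_add_right _ hu.enorm
    _ = 2 * ∫⁻ x, ‖u x‖ₑ ∂μ := by
      rw [lintegral_add_right_eq_self (μ := μ) (fun x => ‖u x‖ₑ) h, two_mul]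

theorem kernel_bound {u : V → ℝ} (hu : Measurable u) {K : Set V} (hK : MeasurableSet K)
    {k : V → V → ℝ} {M ρ θ : ℝ} (hM : 0 ≤ M) (hρ : 0 ≤ ρ)
    (hk : ∀ x ∈ K, ∀ y, |k x y| ≤ M) (hs : ∀ x ∈ K, ∀ y, ρ < ‖x - y‖ → k x y = 0)
    (hθ : ∀ h : V, ‖h‖ ≤ ρ → Nm μ u K h ≤ ENNReal.ofReal θ) :
    ∫⁻ x in K, ‖∫ y, k x y * (u y - u x) ∂μ‖ₑ ∂μ ≤
      ENNReal.ofReal (M * ρ ^ (Module.finrank ℝ V) * μ.real (closedBall 0 1) * θ) := by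
  have h1 : ∀ x ∈ K, ‖∫ y, k x y * (u y - u x) ∂μ‖ₑ ≤
      ENNReal.ofReal M * ∫⁻ h in closedBall 0 ρ, ‖u (x + h) - u x‖ₑ ∂μ := by
    intro x hx
    calc ‖∫ y, k x y * (u y - u x) ∂μ‖ₑ ≤ ∫⁻ y, ‖k x y * (u y - u x)‖ₑ ∂μ :=
          enorm_integral_le_lintegral_enorm _
      _ = ∫⁻ h, ‖k x (x + h) * (u (x + h) - u x)‖ₑ ∂μ :=
          (lintegral_add_left_eq_self (μ := μ) (fun y => ‖k x y * (u y - u x)‖ₑ) x).symm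
      _ ≤ ∫⁻ h, (closedBall (0 : V) ρ).indicator (fun h => ENNReal.ofReal M * ‖u (x + h) - u x‖ₑ) h ∂μ := by
          refine lintegral_mono fun h => ?_
          by_cases hh : h ∈ closedBall (0 : V) ρ
          · rw [Set.indicator_of_mem hh, enorm_mul]
            gcongr
            rw [← ofReal_norm]
            exact ENNReal.ofReal_le_ofReal (hk x hx _)
          · rw [Set.indicator_of_notMem hh, hs x hx]
            · simp
            · simpa using hh
      _ = _ := by
          rw [lintegral_indicator measurableSet_closedBall, lintegral_const_mul]
          exact ((hu.comp (measurable_const_add x)).sub_const _).enorm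
  have hmeas : Measurable (Function.uncurry fun x h : V => ‖u (x + h) - u x‖ₑ) := by
    unfold Function.uncurry
    fun_prop
  calc ∫⁻ x in K, ‖∫ y, k x y * (u y - u x) ∂μ‖ₑ ∂μ
      ≤ ∫⁻ x in K, ENNReal.ofReal M * ∫⁻ h in closedBall 0 ρ, ‖u (x + h) - u x‖ₑ ∂μ ∂μ :=
        setLIntegral_mono' hK h1
    _ = ENNReal.ofReal M * ∫⁻ x in K, ∫⁻ h in closedBall 0 ρ, ‖u (x + h) - u x‖ₑ ∂μ ∂μ :=
        lintegral_const_mul' _ _ ENNReal.ofReal_ne_top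
    _ = ENNReal.ofReal M * ∫⁻ h in closedBall 0 ρ, Nm μ u K h ∂μ := by
        rw [lintegral_lintegral_swap hmeas.aemeasurable]; rfl
    _ ≤ ENNReal.ofReal M * ∫⁻ h in closedBall (0 : V) ρ, ENNReal.ofReal θ ∂μ := by
        gcongr ENNReal.ofReal M * ?_
        refine setLIntegral_mono' measurableSet_closedBall fun h hh => hθ h (by simpa using hh)
    _ = _ := by
        rw [setLIntegral_const]
        have : closedBall (0 : V) ρ = closedBall (0 : V) (ρ * 1) := by rw [mul_one]
        rw [this, Measure.addHaar_closedBall_mul μ 0 hρ zero_le_one,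
          ← ofReal_measureReal (μ := μ) (s := closedBall (0 : V) 1) (isCompact_closedBall _ _).measure_lt_top.ne]
        rw [mul_comm (ENNReal.ofReal θ), ← mul_assoc, ← ENNReal.ofReal_mul (by positivity),
          ← ENNReal.ofReal_mul (by positivity), ← ENNReal.ofReal_mul (by positivity)]
        ring_nf

/-- continuity of translation in L¹ -/
theorem Nm_tendsto {u : V → ℝ} (hu : Integrable u μ) (hum : Measurable u) {ε : ℝ} (hε : 0 < ε) :
    ∃ δ > 0, ∀ h : V, ‖h‖ ≤ δ → Nm μ u Set.univ h ≤ ENNReal.ofReal ε := by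
  obtain ⟨g, gc, hg, gcont, gint⟩ := hu.exists_hasCompactSupport_lintegral_sub_le (ε := ENNReal.ofReal (ε / 3)) (by simp; positivity)
  obtain ⟨R, hR⟩ := gc.isCompact.isBounded.subset_closedBall (0 : V)
  set m := μ.real (closedBall (0 : V) (R + 1)) with hm
  have huc := gc.uniformContinuous_of_continuous gcont
  have hm0 : 0 ≤ m := measureReal_nonneg
  obtain ⟨δ, hδ, hδ'⟩ := Metric.uniformContinuous_iff.1 huc (ε / (3 * (m + 1))) (by positivity)
  refine ⟨min (δ / 2) 1, by positivity, fun h hh => ?_⟩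
  have hh1 : ‖h‖ ≤ 1 := hh.trans (min_le_right _ _)
  have hh2 : ‖h‖ < δ := lt_of_le_of_lt (hh.trans (min_le_left _ _)) (by linarith)
  have hgN : ∫⁻ x, ‖g (x + h) - g x‖ₑ ∂μ ≤ ENNReal.ofReal (ε / 3) := by
    calc ∫⁻ x, ‖g (x + h) - g x‖ₑ ∂μ ≤ ∫⁻ x, (closedBall (0 : V) (R + 1)).indicator (fun _ => ENNReal.ofReal (ε / (3 * (m + 1)))) x ∂μ := by
          refine lintegral_mono fun x => ?_
          by_cases hx : x ∈ closedBall (0 : V) (R + 1)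
          · rw [Set.indicator_of_mem hx, ← ofReal_norm, ← dist_eq_norm]
            exact ENNReal.ofReal_le_ofReal (hδ' (by simpa [dist_eq_norm] using hh2)).le
          · rw [Set.indicator_of_notMem hx]
            simp only [mem_closedBall, dist_zero_right, not_le] at hx
            have z : ∀ y : V, R < ‖y‖ → g y = 0 := by
              intro y hy
              refine image_eq_zero_of_notMem_tsupport fun hh => ?_
              have := hR hh
              simp at this; linarith
            have : R < ‖x + h‖ := by
              have := norm_sub_le (x + h) h
              simp only [add_sub_cancel_right] at this; linarith
            rw [z _ this, z x (by linarith)]; simp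
      _ = ENNReal.ofReal (ε / (3 * (m + 1))) * ENNReal.ofReal m := by
          rw [lintegral_indicator measurableSet_closedBall, setLIntegral_const,
            ofReal_measureReal (isCompact_closedBall _ _).measure_lt_top.ne]
      _ ≤ _ := by
          rw [← ENNReal.ofReal_mul (by positivity)]
          refine ENNReal.ofReal_le_ofReal ?_
          rw [div_mul_eq_mul_div, div_le_div_iff₀ (by positivity) (by positivity)]
          nlinarith
  have gm := gcont.measurable
  calc Nm μ u Set.univ h ≤ ∫⁻ x, (‖u (x + h) - g (x + h)‖ₑ + ‖g (x + h) - g x‖ₑ + ‖u x - g x‖ₑ) ∂μ := by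
        unfold Nm
        rw [setLIntegral_univ]
        refine lintegral_mono fun x => ?_
        have : u (x + h) - u x = (u (x + h) - g (x + h)) + (g (x + h) - g x) - (u x - g x) := by ring
        rw [this]
        exact enorm_sub_le.trans (by gcongr; exact enorm_add_le _ _)
    _ = ∫⁻ x, ‖u (x + h) - g (x + h)‖ₑ ∂μ + ∫⁻ x, ‖g (x + h) - g x‖ₑ ∂μ + ∫⁻ x, ‖u x - g x‖ₑ ∂μ := by
        rw [lintegral_add_right _ (by fun_prop), lintegral_add_right _ (by fun_prop)]
    _ ≤ ENNReal.ofReal (ε / 3) + ENNReal.ofReal (ε / 3) + ENNReal.ofReal (ε / 3) := by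
        gcongr
        rw [lintegral_add_right_eq_self (μ := μ) (fun x => ‖u x - g x‖ₑ) h]; exact hg
    _ = _ := by
        rw [← ENNReal.ofReal_add (by positivity) (by positivity), ← ENNReal.ofReal_add (by positivity) (by positivity)]
        congr 1; ring
end generic
end
end P3

section P4
open MeasureTheory Filter Topology Complex Metric
open scoped ContDiff

set_option linter.unusedSectionVars false

noncomputable section
section generic
variable {V : Type*} [NormedAddCommGroup V] [NormedSpace ℝ V] [FiniteDimensional ℝ V] [MeasurableSpace V] [BorelSpace V] (μ : Measure V) [μ.IsAddHaarMeasure]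
variable {ι : Type*} [Fintype ι] (B : ι → V)

structure IsProf (X : Set V) (R C : ℝ) (H : V → V → ℝ) : Prop where
  supp : ∀ x ∈ X, ∀ ζ, R < ‖ζ‖ → H x ζ = 0
  bound : ∀ x ∈ X, ∀ ζ, |H x ζ| ≤ C
  lip : ∀ x ∈ X, ∀ x' ∈ X, ∀ ζ ζ', |H x ζ - H x' ζ'| ≤ C * (‖x - x'‖ + ‖ζ - ζ'‖)

lemma IsProf.mono {X : Set V} {R C C' : ℝ} {H : V → V → ℝ} (h : IsProf X R C H) (hC : C ≤ C') : IsProf X R C' H :=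
  ⟨h.supp, fun x hx ζ => (h.bound x hx ζ).trans hC, fun x hx x' hx' ζ ζ' =>
    (h.lip x hx x' hx' ζ ζ').trans (by gcongr)⟩

lemma exists_lip {W : Type*} [NormedAddCommGroup W] [NormedSpace ℝ W] {f : W → ℝ} (hf : ContDiff ℝ 1 f) {S : Set W} (hS : IsCompact S) :
    ∃ C : ℝ, 0 ≤ C ∧ (∀ x ∈ S, |f x| ≤ C) ∧ ∀ x ∈ S, ∀ y ∈ S, |f x - f y| ≤ C * ‖x - y‖ := by
  obtain ⟨C1, h1⟩ := (hf.locallyLipschitz.locallyLipschitzOn (s := S)).exists_lipschitzOnWith_of_compact hS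
  obtain ⟨C2, h2⟩ := hS.exists_bound_of_continuousOn hf.continuous.continuousOn
  refine ⟨max C1 C2, le_max_of_le_left C1.2, fun x hx => (h2 x hx).trans (le_max_right _ _), fun x hx y hy => ?_⟩
  have := h1.dist_le_mul x hx y hy
  rw [dist_eq_norm, dist_eq_norm, Real.norm_eq_abs] at this
  refine this.trans ?_
  gcongr
  exact le_max_left _ _

lemma exists_isProf {H : V → V → ℝ} (hH : ContDiff ℝ 1 (Function.uncurry H)) {X : Set V} (hX : IsCompact X) {R : ℝ}
    (hs : ∀ x ∈ X, ∀ ζ, R < ‖ζ‖ → H x ζ = 0) : ∃ C : ℝ, 0 ≤ C ∧ IsProf X R C H := by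
  obtain ⟨C, hC, hb, hl⟩ := exists_lip hH (hX.prod (isCompact_closedBall (0 : V) (R + 1)))
  have hb' : ∀ x ∈ X, ∀ ζ, |H x ζ| ≤ C := by
    intro x hx ζ
    by_cases h : ‖ζ‖ ≤ R + 1
    · exact hb (x, ζ) ⟨hx, by simpa using h⟩
    · rw [hs x hx ζ (by linarith)]; simpa using hC
  have hhalf : ∀ x ∈ X, ∀ x' ∈ X, ∀ ζ ζ', ‖ζ‖ ≤ ‖ζ'‖ → |H x ζ - H x' ζ'| ≤ C * (‖x - x'‖ + ‖ζ - ζ'‖) := by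
    intro x hx x' hx' ζ ζ' hle
    by_cases h : ‖ζ'‖ ≤ R + 1
    · refine (hl (x, ζ) ⟨hx, by simpa using hle.trans h⟩ (x', ζ') ⟨hx', by simpa using h⟩).trans ?_
      gcongr
      rw [Prod.mk_sub_mk, Prod.norm_mk]
      exact max_le (by linarith [norm_nonneg (ζ - ζ')]) (by linarith [norm_nonneg (x - x')])
    · rw [hs x' hx' ζ' (by linarith), sub_zero]
      by_cases h2 : ‖ζ‖ ≤ R
      · have h3 : 1 ≤ ‖ζ - ζ'‖ := by
          have := norm_sub_norm_le ζ' ζ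
          rw [norm_sub_rev] at this; linarith
        calc |H x ζ| ≤ C * 1 := by rw [mul_one]; exact hb' x hx ζ
          _ ≤ _ := by gcongr; linarith [norm_nonneg (x - x')]
      · rw [hs x hx ζ (by linarith), abs_zero]; positivity
  refine ⟨C, hC, hs, hb', fun x hx x' hx' ζ ζ' => ?_⟩
  rcases le_total ‖ζ‖ ‖ζ'‖ with h | h
  · exact hhalf x hx x' hx' ζ ζ' h
  · rw [abs_sub_comm, norm_sub_rev x, norm_sub_rev ζ]
    exact hhalf x' hx' x hx ζ' ζ h

def kern (s : ℝ) (H : V → V → ℝ) (x y : V) : ℝ := (s⁻¹) ^ (Module.finrank ℝ V) * H x (s⁻¹ • (x - y))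

lemma scale_lt {s R : ℝ} (hs : 0 < s) {v : V} (h : R * s < ‖v‖) : R < ‖s⁻¹ • v‖ := by
  rw [norm_smul, Real.norm_of_nonneg (by positivity), inv_mul_eq_div, lt_div_iff₀ hs]; exact h

lemma kern_supp {X : Set V} {R C : ℝ} {H : V → V → ℝ} (h : IsProf X R C H) {s : ℝ} (hs : 0 < s) {x y : V} (hx : x ∈ X)
    (hxy : R * s < ‖x - y‖) : kern s H x y = 0 := by
  rw [kern, h.supp x hx _ (scale_lt hs hxy), mul_zero]

lemma kern_bound {X : Set V} {R C : ℝ} {H : V → V → ℝ} (h : IsProf X R C H) {s : ℝ} (hs : 0 < s) {x : V} (hx : x ∈ X)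
    (y : V) : |kern s H x y| ≤ (s⁻¹) ^ (Module.finrank ℝ V) * C := by
  rw [kern, abs_mul, abs_of_pos (by positivity)]
  gcongr
  exact h.bound x hx _

lemma kern_lip {X : Set V} {R C : ℝ} (hC : 0 ≤ C) {H : V → V → ℝ} (h : IsProf X R C H) {s : ℝ} (hs : 0 < s) (hs1 : s ≤ 1) {x x' : V} (hx : x ∈ X)
    (hx' : x' ∈ X) (y : V) : |kern s H x y - kern s H x' y| ≤ (s⁻¹) ^ (Module.finrank ℝ V) * (2 * C * s⁻¹ * ‖x - x'‖) := by
  rw [kern, kern, ← mul_sub, abs_mul, abs_of_pos (by positivity)]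
  gcongr
  refine (h.lip x hx x' hx' _ _).trans ?_
  rw [← smul_sub, norm_smul, Real.norm_of_nonneg (by positivity)]
  have : x - y - (x' - y) = x - x' := by abel
  rw [this]
  have h1 : 1 ≤ s⁻¹ := (one_le_inv₀ hs).2 hs1
  have : ‖x - x'‖ ≤ s⁻¹ * ‖x - x'‖ := le_mul_of_one_le_left (norm_nonneg _) h1
  calc C * (‖x - x'‖ + s⁻¹ * ‖x - x'‖) ≤ C * (s⁻¹ * ‖x - x'‖ + s⁻¹ * ‖x - x'‖) := by gcongr
    _ = _ := by ring

/-- zero mean kernels -/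
lemma zero_mean {u k : V → ℝ} (hu : LocallyIntegrable u μ) (hk : Continuous k) (hc : HasCompactSupport k)
    (h0 : ∫ y, k y ∂μ = 0) (c : ℝ) : ∫ y, k y * u y ∂μ = ∫ y, k y * (u y - c) ∂μ := by
  have i1 : Integrable (fun y => k y * u y) μ := hu.integrable_smul_left_of_hasCompactSupport hk hc
  have i2 : Integrable k μ := hk.integrable_of_hasCompactSupport hc
  simp only [mul_sub]
  rw [integral_sub i1 (i2.mul_const c), integral_mul_const, h0]; simp

def eker (a : ι → ι → V → ℝ) (s : ℝ) (P : V → V → ℝ) (x y : V) : ℝ :=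
  Lop B (fun i j z => a i j x - a i j z) (fun z => kern s P x z) y

lemma kern_contDiff {n : WithTop ℕ∞} {s : ℝ} {P : V → V → ℝ} {x : V} (hP : ContDiff ℝ n (P x)) : ContDiff ℝ n (fun z => kern s P x z) := by
  unfold kern; fun_prop

lemma hcs_of_norm {f : V → ℝ} {x : V} {r : ℝ} (h : ∀ y, r < ‖x - y‖ → f y = 0) : HasCompactSupport f := by
  refine HasCompactSupport.intro (isCompact_closedBall x r) fun y hy => h y ?_
  rw [mem_closedBall, dist_comm, dist_eq_norm] at hy; linarith

lemma D2_kern {s : ℝ} {P : V → V → ℝ} {x : V} (hP : ContDiff ℝ 2 (P x)) (y v w : V) :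
    D2 (fun z => kern s P x z) y v w = s⁻¹ ^ 2 * kern s (fun x ζ => D2 (P x) ζ v w) x y := by
  unfold kern
  rw [D2_const_mul (by fun_prop), D2_comp_scale hP]; ring

lemma eker_eq {a : ι → ι → V → ℝ} {s : ℝ} {P : V → V → ℝ} {x : V} (hP : ContDiff ℝ 2 (P x)) (y : V) :
    eker B a s P x y = s⁻¹ ^ 2 * ∑ i, ∑ j, (a i j x - a i j y) * kern s (fun x ζ => D2 (P x) ζ (B i) (B j)) x y := by
  simp only [eker, Lop, D2_kern hP, Finset.mul_sum]
  refine Finset.sum_congr rfl fun i _ => Finset.sum_congr rfl fun j _ => by ring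

/-- a C² profile with good second derivatives -/
structure IsProf2 (X : Set V) (R C : ℝ) (P : V → V → ℝ) : Prop where
  C2 : ∀ x, ContDiff ℝ 2 (P x)
  supp : ∀ x ∈ X, ∀ ζ, R < ‖ζ‖ → P x ζ = 0
  prof : ∀ i j, IsProf X R C (fun x ζ => D2 (P x) ζ (B i) (B j))

def err (a : ι → ι → V → ℝ) (s : ℝ) (P : V → V → ℝ) (u : V → ℝ) (x : V) : ℝ :=
  ∫ y, eker B a s P x y * u y ∂μ

structure IsCoef (a : ι → ι → V → ℝ) : Prop where
  C1 : ∀ i j, ContDiff ℝ 1 (a i j)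
  symm : ∀ i j x, a i j x = a j i x
  div : ∀ j x, ∑ i, fderiv ℝ (a i j) x (B i) = 0
  pos : ∀ x (ξ : ι → ℝ), ξ ≠ 0 → 0 < ∑ i, ∑ j, a i j x * ξ i * ξ j

section
variable {B} {a : ι → ι → V → ℝ} (ha : IsCoef B a)
include ha

lemma IsCoef.frozen (x : V) : (∀ i j, ContDiff ℝ 1 (fun z => a i j x - a i j z)) ∧
    ∀ j z, ∑ i, fderiv ℝ (fun z => a i j x - a i j z) z (B i) = 0 := by
  have := ha.C1
  refine ⟨fun i j => by fun_prop, fun j z => ?_⟩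
  simp [fderiv_const_sub, ha.div]

lemma eker_hcs {X : Set V} {R C : ℝ} {P : V → V → ℝ} (hP : IsProf2 B X R C P) {s : ℝ} (hs : 0 < s) {x : V} (hx : x ∈ X) :
    HasCompactSupport (eker B a s P x) := by
  refine hcs_Lop B (hcs_of_norm (x := x) (r := R * s) fun y hy => ?_)
  rw [kern, hP.supp x hx _ (scale_lt hs hy), mul_zero]

lemma eker_cont {P : V → V → ℝ} {x : V} (hP : ContDiff ℝ 2 (P x)) (s : ℝ) : Continuous (eker B a s P x) :=
  continuous_Lop B (fun i j => ((ha.frozen x).1 i j).continuous) (kern_contDiff hP)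

lemma eker_mean {X : Set V} {R C : ℝ} {P : V → V → ℝ} (hP : IsProf2 B X R C P) {s : ℝ} (hs : 0 < s) {x : V} (hx : x ∈ X) :
    ∫ y, eker B a s P x y ∂μ = 0 := by
  refine integral_Lop_eq_zero μ B _ (ha.frozen x).1 (ha.frozen x).2 (kern_contDiff (hP.C2 x)) 
    (hcs_of_norm (x := x) (r := R * s) fun y hy => ?_)
  rw [kern, hP.supp x hx _ (scale_lt hs hy), mul_zero]

/-- pointwise bounds on the commutator kernel -/
lemma eker_bounds {r R C : ℝ} (hR : 0 ≤ R) (hC : 0 ≤ C) {P : V → V → ℝ} (hP : IsProf2 B (closedBall 0 r) R C P) :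
    ∃ C', 0 ≤ C' ∧ ∀ s, 0 < s → s ≤ 1 → ∀ x ∈ closedBall (0 : V) r,
      (∀ y, |eker B a s P x y| ≤ C' * s⁻¹ * s⁻¹ ^ (Module.finrank ℝ V)) ∧
      (∀ y, R * s < ‖x - y‖ → eker B a s P x y = 0) ∧
      ∀ x' ∈ closedBall (0 : V) r, ‖x - x'‖ ≤ s → 
        (∀ y, (R + 1) * s < ‖x - y‖ → eker B a s P x' y - eker B a s P x y = 0) ∧
        ∀ y, |eker B a s P x' y - eker B a s P x y| ≤ C' * ‖x - x'‖ * s⁻¹ ^ 2 * s⁻¹ ^ (Module.finrank ℝ V) := by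
  have hS : IsCompact (closedBall (0 : V) (r + R + 1)) := isCompact_closedBall _ _
  choose Λ' hΛ0 _ hΛ using fun ij : ι × ι => exists_lip (ha.C1 ij.1 ij.2) hS
  obtain ⟨Λ, hΛ1⟩ : ∃ Λ : ℝ, ∀ ij, Λ' ij ≤ Λ := by
    obtain ⟨M, hM⟩ := (Set.finite_range Λ').bddAbove
    exact ⟨M, fun ij => hM ⟨ij, rfl⟩⟩
  have hlip : ∀ i j, ∀ x ∈ closedBall (0 : V) (r + R + 1), ∀ y ∈ closedBall (0 : V) (r + R + 1),
      |a i j x - a i j y| ≤ |Λ| * ‖x - y‖ := fun i j x hx y hy =>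
    (hΛ (i, j) x hx y hy).trans (by gcongr; exact (hΛ1 _).trans (le_abs_self _))
  set N : ℝ := (Fintype.card ι : ℝ) * (Fintype.card ι : ℝ)
  have hN : 0 ≤ N := by positivity
  have hsum : ∀ (g : ι → ι → ℝ) (m : ℝ), (∀ i j, |g i j| ≤ m) → |∑ i, ∑ j, g i j| ≤ N * m := by
    intro g m hg
    calc |∑ i, ∑ j, g i j| ≤ ∑ i, |∑ j, g i j| := Finset.abs_sum_le_sum_abs _ _
      _ ≤ ∑ i, ∑ j, |g i j| := Finset.sum_le_sum fun i _ => Finset.abs_sum_le_sum_abs _ _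
      _ ≤ ∑ i : ι, ∑ j : ι, m := Finset.sum_le_sum fun i _ => Finset.sum_le_sum fun j _ => hg i j
      _ = _ := by simp [N]; ring
  have hsupp : ∀ s, 0 < s → ∀ x ∈ closedBall (0 : V) r, ∀ y, R * s < ‖x - y‖ → eker B a s P x y = 0 := by
    intro s hs x hx y hy
    rw [eker_eq B (hP.C2 x)]
    simp only [kern_supp (hP.prof _ _) hs hx hy]; simp
  have hin : ∀ s, 0 < s → s ≤ 1 → ∀ x ∈ closedBall (0 : V) r, ∀ y, ‖x - y‖ ≤ (R + 1) * s → y ∈ closedBall (0 : V) (r + R + 1) := by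
    intro s hs hs1 x hx y hy
    simp only [mem_closedBall, dist_zero_right] at hx ⊢
    have h1 : (R + 1) * s ≤ R + 1 := mul_le_of_le_one_right (by linarith) hs1
    have := norm_sub_le x (x - y)
    rw [sub_sub_cancel] at this; linarith
  refine ⟨N * |Λ| * C * (2 * R + 3), by positivity, fun s hs hs1 x hx => ⟨?_, hsupp s hs x hx, ?_⟩⟩
  · intro y
    by_cases hy : R * s < ‖x - y‖
    · rw [hsupp s hs x hx y hy, abs_zero]; positivity
    · push Not at hy
      rw [eker_eq B (hP.C2 x), abs_mul, abs_of_pos (by positivity)]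
      have hx1 : x ∈ closedBall (0 : V) (r + R + 1) := closedBall_subset_closedBall (by linarith) hx
      have hy1 := hin s hs hs1 x hx y (by linarith)
      calc s⁻¹ ^ 2 * |∑ i, ∑ j, (a i j x - a i j y) * kern s (fun x ζ => D2 (P x) ζ (B i) (B j)) x y|
          ≤ s⁻¹ ^ 2 * (N * ((|Λ| * (R * s)) * (s⁻¹ ^ (Module.finrank ℝ V) * C))) := by
            gcongr
            refine hsum _ _ fun i j => ?_
            rw [abs_mul]
            have h1 := hlip i j x hx1 y hy1
            have h2 := kern_bound (hP.prof i j) hs hx y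
            have h3 : |Λ| * ‖x - y‖ ≤ |Λ| * (R * s) := by gcongr
            gcongr
            exact h1.trans h3
        _ = N * |Λ| * C * R * s⁻¹ * s⁻¹ ^ (Module.finrank ℝ V) := by field_simp
        _ ≤ _ := by gcongr; linarith
  · intro x' hx' hxx'
    have hz : ∀ y, (R + 1) * s < ‖x - y‖ → eker B a s P x' y = 0 ∧ eker B a s P x y = 0 := by
      intro y hy
      refine ⟨hsupp s hs x' hx' y ?_, hsupp s hs x hx y (by linarith)⟩
      have := norm_sub_le_norm_sub_add_norm_sub x x' y
      linarith
    refine ⟨fun y hy => by rw [(hz y hy).1, (hz y hy).2, sub_zero], fun y => ?_⟩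
    by_cases hy : (R + 1) * s < ‖x - y‖
    · rw [(hz y hy).1, (hz y hy).2, sub_zero, abs_zero]; positivity
    · push Not at hy
      have hx1 : x ∈ closedBall (0 : V) (r + R + 1) := closedBall_subset_closedBall (by linarith) hx
      have hx1' : x' ∈ closedBall (0 : V) (r + R + 1) := closedBall_subset_closedBall (by linarith) hx'
      have hy1 := hin s hs hs1 x hx y (by linarith)
      rw [eker_eq B (hP.C2 x), eker_eq B (hP.C2 x'), ← mul_sub, abs_mul, abs_of_pos (by positivity),
        ← Finset.sum_sub_distrib]
      simp only [← Finset.sum_sub_distrib]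
      calc s⁻¹ ^ 2 * |∑ i, ∑ j, ((a i j x' - a i j y) * kern s (fun x ζ => D2 (P x) ζ (B i) (B j)) x' y
             - (a i j x - a i j y) * kern s (fun x ζ => D2 (P x) ζ (B i) (B j)) x y)|
          ≤ s⁻¹ ^ 2 * (N * ((|Λ| * ‖x - x'‖) * (s⁻¹ ^ (Module.finrank ℝ V) * C) + 
              (|Λ| * ((R + 1) * s)) * (s⁻¹ ^ (Module.finrank ℝ V) * (2 * C * s⁻¹ * ‖x - x'‖)))) := by
            gcongr
            refine hsum _ _ fun i j => ?_
            set k1 := kern s (fun x ζ => D2 (P x) ζ (B i) (B j)) x' y with hk1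
            set k0 := kern s (fun x ζ => D2 (P x) ζ (B i) (B j)) x y with hk0
            have e : (a i j x' - a i j y) * k1 - (a i j x - a i j y) * k0
              = (a i j x' - a i j x) * k1 + (a i j x - a i j y) * (k1 - k0) := by ring
            rw [e]
            refine (abs_add_le _ _).trans ?_
            rw [abs_mul, abs_mul]
            have h1 := hlip i j x' hx1' x hx1
            rw [norm_sub_rev] at h1
            have h2 := kern_bound (hP.prof i j) hs hx' y
            have h3 := hlip i j x hx1 y hy1
            have h4 := kern_lip hC (hP.prof i j) hs hs1 hx' hx y
            rw [norm_sub_rev] at h4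
            have h5 : |Λ| * ‖x - y‖ ≤ |Λ| * ((R + 1) * s) := by gcongr
            gcongr
            exact h3.trans h5
        _ = N * |Λ| * C * (2 * R + 3) * ‖x - x'‖ * s⁻¹ ^ 2 * s⁻¹ ^ (Module.finrank ℝ V) := by field_simp; ring
        _ ≤ _ := le_rfl
end
end generic
end
end P4

section P5
open MeasureTheory Filter Topology Complex Metric
open scoped ContDiff

set_option linter.unusedSectionVars false

noncomputable section
section generic
variable {V : Type*} [NormedAddCommGroup V] [NormedSpace ℝ V] [FiniteDimensional ℝ V] [MeasurableSpace V] [BorelSpace V] (μ : Measure V) [μ.IsAddHaarMeasure]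
variable {ι : Type*} [Fintype ι] {B : ι → V}

def UU (s : ℝ) (H : V → V → ℝ) (u : V → ℝ) (x : V) : ℝ := ∫ y, kern s H x y * u y ∂μ

lemma kern_mean {s : ℝ} (hs : 0 < s) {H : V → V → ℝ} {x : V} : ∫ y, kern s H x y ∂μ = ∫ ζ, H x ζ ∂μ := by
  unfold kern
  rw [integral_const_mul, integral_sub_left_eq_self (fun z => H x (s⁻¹ • z)) μ x, Measure.integral_comp_smul,
    smul_eq_mul, ← mul_assoc, abs_of_pos (by positivity), mul_inv_cancel₀ (by positivity), one_mul]

theorem err_L1 {a : ι → ι → V → ℝ} (ha : IsCoef B a) {r R C : ℝ} (hR : 0 ≤ R) (hC : 0 ≤ C) {P : V → V → ℝ} (hP : IsProf2 B (closedBall 0 r) R C P) :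
    ∃ C', 0 ≤ C' ∧ ∀ (u : V → ℝ) (K : Set V) (s θ : ℝ), Measurable u → LocallyIntegrable u μ → MeasurableSet K →
      K ⊆ closedBall 0 r → 0 < s → s ≤ 1 → 0 ≤ θ → (∀ h : V, ‖h‖ ≤ (R + 1) * s → Nm μ u K h ≤ ENNReal.ofReal θ) →
      ∫⁻ x in K, ‖err μ B a s P u x‖ₑ ∂μ ≤ ENNReal.ofReal (C' * s⁻¹ * θ) ∧
      ∀ h : V, ‖h‖ ≤ s → (∀ x ∈ K, x + h ∈ closedBall (0 : V) r) → 
        ∫⁻ x in K, ‖err μ B a s P u (x + h) - err μ B a s P u x‖ₑ ∂μ ≤ ENNReal.ofReal (C' * ‖h‖ * s⁻¹ ^ 2 * θ) := by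
  obtain ⟨C', hC', hb⟩ := eker_bounds ha hR hC hP
  set d := Module.finrank ℝ V
  set vB := μ.real (closedBall (0 : V) 1)
  have hvB : 0 ≤ vB := measureReal_nonneg
  refine ⟨C' * (R + 1) ^ d * vB, by positivity, fun u K s θ hum hu hK hKr hs hs1 hθ0 hθ => ⟨?_, fun h hh hKh => ?_⟩⟩
  · have e : ∀ x ∈ K, err μ B a s P u x = ∫ y, eker B a s P x y * (u y - u x) ∂μ := fun x hx =>
      zero_mean μ hu (eker_cont ha (hP.C2 x) s) (eker_hcs ha hP hs (hKr hx)) (eker_mean μ ha hP hs (hKr hx)) (u x)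
    rw [setLIntegral_congr_fun hK (fun x hx => by rw [e x hx])]
    refine (kernel_bound μ hum hK (M := C' * s⁻¹ * s⁻¹ ^ d) (ρ := (R + 1) * s) (θ := θ) (by positivity) (by positivity)
      (fun x hx => (hb s hs hs1 x (hKr hx)).1) (fun x hx y hy => (hb s hs hs1 x (hKr hx)).2.1 y ?_) hθ).trans ?_
    · linarith
    · refine ENNReal.ofReal_le_ofReal (le_of_eq ?_)
      rw [mul_pow, inv_pow]; field_simp
      simp only [d, vB]; ring
  · have e : ∀ x ∈ K, err μ B a s P u (x + h) - err μ B a s P u x = ∫ y, (eker B a s P (x + h) y - eker B a s P x y) * (u y - u x) ∂μ := by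
      intro x hx
      have hx' := hKh x hx
      have c1 := eker_cont ha (hP.C2 x) s
      have c2 := eker_cont ha (hP.C2 (x + h)) s
      have s1 := eker_hcs ha hP hs (hKr hx)
      have s2 := eker_hcs ha hP hs hx'
      have i1 : Integrable (fun y => eker B a s P x y * u y) μ := hu.integrable_smul_left_of_hasCompactSupport c1 s1
      have i2 : Integrable (fun y => eker B a s P (x + h) y * u y) μ := hu.integrable_smul_left_of_hasCompactSupport c2 s2
      rw [err, err, ← integral_sub i2 i1]
      have zz := zero_mean μ hu (c2.sub c1) (s2.sub s1) ?_ (u x)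
      · simp only [Pi.sub_apply] at zz
        rw [← zz]; simp only [sub_mul]
      · simp only [Pi.sub_apply]
        rw [integral_sub (c2.integrable_of_hasCompactSupport s2) (c1.integrable_of_hasCompactSupport s1),
          eker_mean μ ha hP hs (hKr hx), eker_mean μ ha hP hs hx', sub_zero]
    rw [setLIntegral_congr_fun hK (fun x hx => by rw [e x hx])]
    have hn : ∀ x : V, ‖x - (x + h)‖ = ‖h‖ := fun x => by rw [sub_add_cancel_left, norm_neg]
    refine (kernel_bound μ hum hK (M := C' * ‖h‖ * s⁻¹ ^ 2 * s⁻¹ ^ d) (ρ := (R + 1) * s) (θ := θ) (by positivity) (by positivity)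
      (fun x hx y => ?_) (fun x hx y hy => ?_) hθ).trans ?_
    · have := ((hb s hs hs1 x (hKr hx)).2.2 (x + h) (hKh x hx) (by rwa [hn])).2 y
      rwa [hn] at this
    · exact ((hb s hs hs1 x (hKr hx)).2.2 (x + h) (hKh x hx) (by rwa [hn])).1 y hy
    · refine ENNReal.ofReal_le_ofReal (le_of_eq ?_)
      rw [mul_pow, inv_pow, inv_pow]; field_simp
      simp only [d, vB]; ring

theorem UU_L1 {r R C : ℝ} (hR : 0 ≤ R) (hC : 0 ≤ C) {H : V → V → ℝ} (hH : IsProf (closedBall 0 r) R C H)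
    (hc : ∀ x, Continuous (H x)) (hi : ∀ x, ∫ ζ, H x ζ ∂μ = 1) :
    ∃ C', 0 ≤ C' ∧ ∀ (u : V → ℝ) (K : Set V) (s θ : ℝ), Measurable u → LocallyIntegrable u μ → MeasurableSet K →
      K ⊆ closedBall 0 r → 0 < s → s ≤ 1 → 0 ≤ θ → (∀ h : V, ‖h‖ ≤ (R + 1) * s → Nm μ u K h ≤ ENNReal.ofReal θ) →
      ∫⁻ x in K, ‖UU μ s H u x - u x‖ₑ ∂μ ≤ ENNReal.ofReal (C' * θ) ∧
      ∀ h : V, ‖h‖ ≤ s → (∀ x ∈ K, x + h ∈ closedBall (0 : V) r) → 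
        ∫⁻ x in K, ‖UU μ s H u (x + h) - UU μ s H u x‖ₑ ∂μ ≤ ENNReal.ofReal (C' * ‖h‖ * s⁻¹ * θ) := by
  set d := Module.finrank ℝ V
  set vB := μ.real (closedBall (0 : V) 1)
  have hvB : 0 ≤ vB := measureReal_nonneg
  have kc : ∀ s x, Continuous (fun y => kern s H x y) := by
    intro s x
    have := hc x
    unfold kern; fun_prop
  have ks : ∀ s, 0 < s → ∀ x ∈ closedBall (0 : V) r, HasCompactSupport (fun y => kern s H x y) := fun s hs x hx =>
    hcs_of_norm (x := x) (r := R * s) fun y hy => kern_supp hH hs hx hy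
  refine ⟨2 * C * (R + 1) ^ d * vB, by positivity, fun u K s θ hum hu hK hKr hs hs1 hθ0 hθ => ⟨?_, fun h hh hKh => ?_⟩⟩
  · have e : ∀ x ∈ K, UU μ s H u x - u x = ∫ y, kern s H x y * (u y - u x) ∂μ := by
      intro x hx
      have i1 : Integrable (fun y => kern s H x y * u y) μ := hu.integrable_smul_left_of_hasCompactSupport (kc s x) (ks s hs x (hKr hx))
      have i2 := ((kc s x).integrable_of_hasCompactSupport (μ := μ) (ks s hs x (hKr hx)))
      simp only [mul_sub]
      rw [integral_sub i1 (i2.mul_const _), integral_mul_const, kern_mean μ hs, hi, one_mul, UU]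
    rw [setLIntegral_congr_fun hK (fun x hx => by rw [e x hx])]
    refine (kernel_bound μ hum hK (M := s⁻¹ ^ d * C) (ρ := (R + 1) * s) (θ := θ) (by positivity) (by positivity)
      (fun x hx => kern_bound hH hs (hKr hx)) (fun x hx y hy => kern_supp hH hs (hKr hx) ?_) hθ).trans ?_
    · linarith
    · refine ENNReal.ofReal_le_ofReal ?_
      calc s⁻¹ ^ d * C * ((R + 1) * s) ^ d * vB * θ = C * (R + 1) ^ d * vB * θ := by
            rw [mul_pow, inv_pow]; field_simp
        _ ≤ _ := by gcongr; linarith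
  · have e : ∀ x ∈ K, UU μ s H u (x + h) - UU μ s H u x = ∫ y, (kern s H (x + h) y - kern s H x y) * (u y - u x) ∂μ := by
      intro x hx
      have hx' := hKh x hx
      have c1 := kc s x
      have c2 := kc s (x + h)
      have s1 := ks s hs x (hKr hx)
      have s2 := ks s hs (x + h) hx'
      have i1 : Integrable (fun y => kern s H x y * u y) μ := hu.integrable_smul_left_of_hasCompactSupport c1 s1
      have i2 : Integrable (fun y => kern s H (x + h) y * u y) μ := hu.integrable_smul_left_of_hasCompactSupport c2 s2
      rw [UU, UU, ← integral_sub i2 i1]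
      have zz := zero_mean μ hu (c2.sub c1) (s2.sub s1) ?_ (u x)
      · simp only [Pi.sub_apply] at zz
        rw [← zz]; simp only [sub_mul]
      · simp only [Pi.sub_apply]
        rw [integral_sub (c2.integrable_of_hasCompactSupport s2) (c1.integrable_of_hasCompactSupport s1),
          kern_mean μ hs, kern_mean μ hs, hi, hi, sub_self]
    rw [setLIntegral_congr_fun hK (fun x hx => by rw [e x hx])]
    have hn : ∀ x : V, ‖(x + h) - x‖ = ‖h‖ := fun x => by rw [add_sub_cancel_left]
    refine (kernel_bound μ hum hK (M := s⁻¹ ^ d * (2 * C * s⁻¹ * ‖h‖)) (ρ := (R + 1) * s) (θ := θ) (by positivity) (by positivity)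
      (fun x hx y => ?_) (fun x hx y hy => ?_) hθ).trans ?_
    · have := kern_lip hC hH hs hs1 (hKh x hx) (hKr hx) y
      rwa [hn] at this
    · rw [kern_supp hH hs (hKr hx) (by linarith), kern_supp hH hs (hKh x hx), sub_zero]
      have := norm_sub_le_norm_sub_add_norm_sub x (x + h) y
      rw [norm_sub_rev x (x + h), hn] at this; linarith
    · refine ENNReal.ofReal_le_ofReal (le_of_eq ?_)
      rw [mul_pow, inv_pow]; field_simp
      simp only [d, vB]; ring
end generic
end
end P5

section P6
open MeasureTheory Filter Topology Complex Metric
open scoped ContDiff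

set_option linter.unusedSectionVars false

noncomputable section
section generic
variable {V : Type*} [NormedAddCommGroup V] [NormedSpace ℝ V] [FiniteDimensional ℝ V] [MeasurableSpace V] [BorelSpace V] (μ : Measure V) [μ.IsAddHaarMeasure]
variable {ι : Type*} [Fintype ι] {B : ι → V}

open scoped Manifold in
lemma exists_cutoff {K Ω : Set V} (hK : IsCompact K) (hΩ : IsOpen Ω) (hKΩ : K ⊆ Ω) :
    ∃ η : V → ℝ, ContDiff ℝ ∞ η ∧ HasCompactSupport η ∧ tsupport η ⊆ Ω ∧ (∀ x, 0 ≤ η x) ∧ (∀ x, η x ≤ 1) ∧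
      ∃ δ > 0, ∀ x ∈ cthickening δ K, η x = 1 := by
  obtain ⟨δ, hδ, hδΩ⟩ := hK.exists_cthickening_subset_open hΩ hKΩ
  obtain ⟨f, hf0, hf1, hf⟩ := exists_contMDiffMap_zero_one_of_isClosed 𝓘(ℝ, V) (n := ⊤) (s := (thickening δ K)ᶜ) (t := cthickening (δ / 2) K)
    isOpen_thickening.isClosed_compl isClosed_cthickening
    (by
      rw [Set.disjoint_compl_left_iff_subset]
      exact cthickening_subset_thickening' hδ (by linarith) K)
  have hsupp : Function.support f ⊆ thickening δ K := by
    intro x hx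
    by_contra h
    exact hx (hf0 h)
  have hts : tsupport f ⊆ cthickening δ K :=
    closure_minimal (hsupp.trans (thickening_subset_cthickening _ _)) isClosed_cthickening
  refine ⟨f, f.contMDiff.contDiff, ?_, hts.trans hδΩ, fun x => (hf x).1, fun x => (hf x).2, δ / 2, by linarith, fun x hx => hf1 hx⟩
  exact hK.cthickening.of_isClosed_subset (isClosed_tsupport _) hts

def IsTest (Ω : Set V) (φ : V → ℝ) : Prop := ContDiff ℝ ∞ φ ∧ HasCompactSupport φ ∧ tsupport φ ⊆ Ω

def TT (B : ι → V) (a : ι → ι → V → ℝ) (u φ : V → ℝ) : ℝ := ∫ y, u y * Lop B a φ y ∂μ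

/-- distributional subsolution -/
def IsSub (B : ι → V) (a : ι → ι → V → ℝ) (Ω : Set V) (u : V → ℝ) : Prop :=
  ∀ φ, IsTest Ω φ → (∀ x, 0 ≤ φ x) → 0 ≤ TT μ B a u φ

lemma ContDiff.two_of_infty {φ : V → ℝ} (h : ContDiff ℝ ∞ φ) : ContDiff ℝ 2 φ := h.of_le (by norm_cast)

lemma locInt_mul {u g : V → ℝ} (hu : LocallyIntegrable u μ) (hg : Continuous g) : LocallyIntegrable (fun y => u y * g y) μ := by
  have h1 : LocallyIntegrableOn u Set.univ μ := hu.locallyIntegrableOn _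
  have := h1.mul_continuousOn hg.continuousOn isOpen_univ.isLocallyClosed
  exact locallyIntegrableOn_univ.1 this

section
variable {a : ι → ι → V → ℝ} (ha : ∀ i j, Continuous (a i j))
include ha

lemma TT_integrable {u φ : V → ℝ} (hu : LocallyIntegrable u μ) (hφ : ContDiff ℝ 2 φ) (hc : HasCompactSupport φ) :
    Integrable (fun y => u y * Lop B a φ y) μ :=
  hu.integrable_smul_right_of_hasCompactSupport (continuous_Lop B ha hφ) (hcs_Lop B hc)

lemma TT_add {u φ ψ : V → ℝ} (hu : LocallyIntegrable u μ) (hφ : ContDiff ℝ 2 φ) (hc : HasCompactSupport φ)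
    (hψ : ContDiff ℝ 2 ψ) (hc' : HasCompactSupport ψ) :
    TT μ B a u (fun y => φ y + ψ y) = TT μ B a u φ + TT μ B a u ψ := by
  unfold TT
  rw [← integral_add (TT_integrable μ ha hu hφ hc) (TT_integrable μ ha hu hψ hc')]
  simp only [Lop_add B hφ hψ, mul_add]

omit ha in
lemma TT_const_mul {u φ : V → ℝ} (hφ : ContDiff ℝ 2 φ) (c : ℝ) :
    TT μ B a u (fun y => c * φ y) = c * TT μ B a u φ := by
  unfold TT
  rw [← integral_const_mul]
  simp only [Lop_const_mul B hφ]
  congr 1; funext y; ring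

omit ha in
lemma IsTest.add {Ω : Set V} {φ ψ : V → ℝ} (h : IsTest Ω φ) (h' : IsTest Ω ψ) : IsTest Ω (fun y => φ y + ψ y) :=
  ⟨h.1.add h'.1, h.2.1.add h'.2.1, (tsupport_add φ ψ).trans (Set.union_subset h.2.2 h'.2.2)⟩

omit ha in
lemma IsTest.const_mul {Ω : Set V} {φ : V → ℝ} (h : IsTest Ω φ) (c : ℝ) : IsTest Ω (fun y => c * φ y) :=
  ⟨contDiff_const.mul h.1, h.2.1.mul_left, (tsupport_mul_subset_right (f := fun _ => c)).trans h.2.2⟩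

lemma IsSub.mono {Ω : Set V} {u φ ψ : V → ℝ} (hs : IsSub μ B a Ω u) (hu : LocallyIntegrable u μ)
    (hφ : IsTest Ω φ) (hψ : IsTest Ω ψ) (h : ∀ y, φ y ≤ ψ y) : TT μ B a u φ ≤ TT μ B a u ψ := by
  have h1 := hs (fun y => ψ y + (-1) * φ y) (hψ.add (hφ.const_mul (-1))) (fun x => by linarith [h x])
  rw [TT_add μ ha hu hψ.1.two_of_infty hψ.2.1 (hφ.const_mul (-1)).1.two_of_infty (hφ.const_mul (-1)).2.1,
    TT_const_mul μ hφ.1.two_of_infty] at h1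
  linarith

lemma IsSub.abs_le {Ω : Set V} {u φ ψ : V → ℝ} (hs : IsSub μ B a Ω u) (hu : LocallyIntegrable u μ)
    (hφ : IsTest Ω φ) (hψ : IsTest Ω ψ) (m : ℝ) (h : ∀ y, |φ y| ≤ m * ψ y) : |TT μ B a u φ| ≤ m * TT μ B a u ψ := by
  rw [_root_.abs_le]
  have h1 := hs.mono μ ha hu hφ (hψ.const_mul m) (fun y => (le_abs_self _).trans (h y))
  have h2 := hs.mono μ ha hu (hψ.const_mul (-m)) hφ (fun y => by linarith [h y, neg_abs_le (φ y)])
  rw [TT_const_mul μ hψ.1.two_of_infty] at h1 h2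
  constructor <;> linarith

omit ha in
lemma kern_test {χ : V → ℝ} (hχ : ContDiff ℝ ∞ χ) {R' : ℝ} (hχs : ∀ ζ, R' < ‖ζ‖ → χ ζ = 0)
    {Ω : Set V} {s : ℝ} (hs : 0 < s) {x : V} (hx : closedBall x (R' * s) ⊆ Ω) : IsTest Ω (kern s (fun _ => χ) x) := by
  have hz : ∀ y, R' * s < ‖x - y‖ → kern s (fun _ => χ) x y = 0 := by
    intro y hy
    rw [kern, hχs _ (scale_lt hs hy), mul_zero]
  refine ⟨kern_contDiff (P := fun _ => χ) hχ, hcs_of_norm hz, ?_⟩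
  refine (closure_minimal ?_ isClosed_closedBall).trans hx
  intro y hy
  by_contra h
  refine hy (hz y ?_)
  rw [mem_closedBall, dist_comm, dist_eq_norm] at h; linarith

/-- the mass function -/
def MM (B : ι → V) (a : ι → ι → V → ℝ) (u χ : V → ℝ) (s : ℝ) (x : V) : ℝ := TT μ B a u (kern s (fun _ => χ) x)

lemma MM_eq {u χ : V → ℝ} (hu : LocallyIntegrable u μ) (hχ : ContDiff ℝ ∞ χ) (hc : HasCompactSupport χ) {s : ℝ} (hs : 0 < s) (x : V) :
    MM μ B a u χ s x = ∑ i, ∑ j, cv μ (fun y => u y * a i j y)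
      (D2 (fun z => s⁻¹ ^ (Module.finrank ℝ V) * χ (s⁻¹ • z)) · (B i) (B j)) x := by
  set χs : V → ℝ := fun z => s⁻¹ ^ (Module.finrank ℝ V) * χ (s⁻¹ • z) with hχs
  have hχs2 : ContDiff ℝ 2 χs := by have := hχ.two_of_infty; fun_prop
  have hχsc : HasCompactSupport χs := by
    refine HasCompactSupport.mul_left ?_
    exact hc.comp_homeomorph (Homeomorph.smulOfNeZero s⁻¹ (by positivity))
  have hk : kern s (fun _ => χ) x = fun y => χs ((1 : ℝ) • (x - y)) := by
    funext y; simp [kern, χs]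
  unfold MM TT
  rw [hk]
  have hL : ∀ y, u y * Lop B a (fun y => χs ((1 : ℝ) • (x - y))) y = ∑ i, ∑ j, u y * a i j y * D2 χs (x - y) (B i) (B j) := by
    intro y
    simp only [Lop, D2_comp_scale hχs2, Finset.mul_sum]
    simp [mul_assoc]
  simp only [hL]
  have hi : ∀ i j, Integrable (fun y => u y * a i j y * D2 χs (x - y) (B i) (B j)) μ := by
    intro i j
    refine integrable_mul_sub μ (u := fun y => u y * a i j y) ?_ (continuous_D2 hχs2 (B i) (B j)) (hcs_D2 hχsc _ _) x
    exact locInt_mul μ hu (ha i j)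
  rw [integral_finsetSum _ (fun i _ => integrable_finsetSum _ fun j _ => hi i j)]
  exact Finset.sum_congr rfl fun i _ => integral_finsetSum _ fun j _ => hi i j

lemma MM_continuous {u χ : V → ℝ} (hu : LocallyIntegrable u μ) (hχ : ContDiff ℝ ∞ χ) (hc : HasCompactSupport χ) {s : ℝ} (hs : 0 < s) :
    Continuous (MM μ B a u χ s) := by
  have : MM μ B a u χ s = fun x => ∑ i, ∑ j, cv μ (fun y => u y * a i j y)
      (D2 (fun z => s⁻¹ ^ (Module.finrank ℝ V) * χ (s⁻¹ • z)) · (B i) (B j)) x := by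
    funext x; exact MM_eq μ ha hu hχ hc hs x
  rw [this]
  have hχs2 : ContDiff ℝ 2 (fun z => s⁻¹ ^ (Module.finrank ℝ V) * χ (s⁻¹ • z)) := by have := hχ.two_of_infty; fun_prop
  have hχsc : HasCompactSupport (fun z => s⁻¹ ^ (Module.finrank ℝ V) * χ (s⁻¹ • z)) := by
    refine HasCompactSupport.mul_left ?_
    exact hc.comp_homeomorph (Homeomorph.smulOfNeZero s⁻¹ (by positivity))
  refine continuous_finsetSum _ fun i _ => continuous_finsetSum _ fun j _ => ?_
  rw [cv_eq]
  exact (hcs_D2 hχsc _ _).continuous_convolution_right _ (locInt_mul μ hu (ha i j)) (continuous_D2 hχs2 _ _)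

/-- Fubini for the mass function -/
lemma MM_fubini {u χ η : V → ℝ} (hu : Integrable u μ) (huc : HasCompactSupport u) (hχ : ContDiff ℝ ∞ χ) (hc : HasCompactSupport χ) {s : ℝ} (hs : 0 < s)
    (hη : ContDiff ℝ ∞ η) (hηc : HasCompactSupport η) :
    ∫ x, η x * MM μ B a u χ s x ∂μ = TT μ B a u (cv μ η (fun z => s⁻¹ ^ (Module.finrank ℝ V) * χ (s⁻¹ • ((1 : ℝ) • (0 - z))))) := by
  set χs : V → ℝ := fun z => s⁻¹ ^ (Module.finrank ℝ V) * χ (s⁻¹ • z) with hχs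
  have hχs2 : ContDiff ℝ 2 χs := by have := hχ.two_of_infty; fun_prop
  have hχsc : HasCompactSupport χs := by
    refine HasCompactSupport.mul_left ?_
    exact hc.comp_homeomorph (Homeomorph.smulOfNeZero s⁻¹ (by positivity))
  have hul := hu.locallyIntegrable
  have hηl : LocallyIntegrable η μ := hη.continuous.locallyIntegrable
  have hneg2 : ContDiff ℝ 2 (fun z => χs ((1 : ℝ) • (0 - z))) := by fun_prop
  have hnegc : HasCompactSupport (fun z => χs ((1 : ℝ) • (0 - z))) := by
    have := hχsc.comp_homeomorph (Homeomorph.neg V)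
    convert this using 2 with z
    simp
  change _ = TT μ B a u (cv μ η (fun z => χs ((1 : ℝ) • (0 - z))))
  have hD : ∀ i j y, D2 (cv μ η (fun z => χs ((1 : ℝ) • (0 - z)))) y (B i) (B j) = ∫ x, η x * D2 χs (x - y) (B i) (B j) ∂μ := by
    intro i j y
    rw [cv_D2 μ hηl hneg2 hnegc]
    congr 1; funext x
    rw [D2_comp_scale hχs2]; simp
  -- double integrals
  have hw : ∀ i j, Integrable (fun y => u y * a i j y) μ := by
    intro i j
    obtain ⟨C, hC⟩ := huc.isCompact.exists_bound_of_continuousOn (ha i j).continuousOn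
    have : (fun y => u y * a i j y) = fun y => u y * (tsupport u).indicator (a i j) y := by
      funext y
      by_cases hy : y ∈ tsupport u
      · rw [Set.indicator_of_mem hy]
      · rw [image_eq_zero_of_notMem_tsupport hy]; simp
    rw [this]
    refine hu.mul_bdd (c := |C|) ((ha i j).aestronglyMeasurable.indicator (isClosed_tsupport u).measurableSet) ?_
    filter_upwards with y
    by_cases hy : y ∈ tsupport u
    · rw [Set.indicator_of_mem hy]; exact (hC y hy).trans (le_abs_self _)
    · rw [Set.indicator_of_notMem hy]; simp
  have hprod : ∀ i j, Integrable (Function.uncurry fun x y => η x * (u y * a i j y * D2 χs (x - y) (B i) (B j))) (μ.prod μ) := by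
    intro i j
    have h1 := (hη.continuous.integrable_of_hasCompactSupport (μ := μ) hηc).mul_prod (hw i j)
    obtain ⟨C, hC⟩ := (hcs_D2 hχsc (B i) (B j)).exists_bound_of_continuous (continuous_D2 hχs2 (B i) (B j))
    have h2 := h1.mul_bdd (c := C) (g := fun p : V × V => D2 χs (p.1 - p.2) (B i) (B j))
      ((continuous_D2 hχs2 (B i) (B j)).comp (continuous_fst.sub continuous_snd)).aestronglyMeasurable
      (Filter.Eventually.of_forall fun p => hC _)
    refine h2.congr (Filter.Eventually.of_forall fun p => ?_)
    simp only [Function.uncurry]; ring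
  have e1 : ∀ x, η x * MM μ B a u χ s x = ∑ i, ∑ j, ∫ y, η x * (u y * a i j y * D2 χs (x - y) (B i) (B j)) ∂μ := by
    intro x
    rw [MM_eq μ ha hul hχ hc hs x]
    simp only [Finset.mul_sum, cv, integral_const_mul, χs]
  have e2 : ∀ y, u y * Lop B a (cv μ η (fun z => χs ((1 : ℝ) • (0 - z)))) y = 
      ∑ i, ∑ j, ∫ x, η x * (u y * a i j y * D2 χs (x - y) (B i) (B j)) ∂μ := by
    intro y
    simp only [Lop, hD, Finset.mul_sum, ← integral_const_mul]
    refine Finset.sum_congr rfl fun i _ => Finset.sum_congr rfl fun j _ => ?_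
    congr 1; funext x; ring
  unfold TT
  simp only [e1, e2]
  have hl : ∀ i j, Integrable (fun x => ∫ y, η x * (u y * a i j y * D2 χs (x - y) (B i) (B j)) ∂μ) μ := fun i j => (hprod i j).integral_prod_left
  have hr : ∀ i j, Integrable (fun y => ∫ x, η x * (u y * a i j y * D2 χs (x - y) (B i) (B j)) ∂μ) μ := fun i j => (hprod i j).integral_prod_right
  rw [integral_finsetSum _ (fun i _ => integrable_finsetSum _ fun j _ => hl i j),
    integral_finsetSum _ (fun i _ => integrable_finsetSum _ fun j _ => hr i j)]
  refine Finset.sum_congr rfl fun i _ => ?_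
  rw [integral_finsetSum _ (fun j _ => hl i j), integral_finsetSum _ (fun j _ => hr i j)]
  refine Finset.sum_congr rfl fun j _ => ?_
  exact integral_integral_swap (hprod i j)

theorem mass_bound {u χ : V → ℝ} (hu : Integrable u μ) (huc : HasCompactSupport u) (hχ : ContDiff ℝ ∞ χ) 
    (hχ0 : ∀ ζ, 0 ≤ χ ζ) {R' : ℝ} (hR' : 0 < R') (hχs : ∀ ζ, R' < ‖ζ‖ → χ ζ = 0)
    {Ω : Set V} (hΩ : IsOpen Ω) (hs : IsSub μ B a Ω u) {K : Set V} (hK : IsCompact K) (hKΩ : K ⊆ Ω) :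
    ∃ C s₀ : ℝ, 0 ≤ C ∧ 0 < s₀ ∧ ∀ s, 0 < s → s ≤ s₀ → 
      (∀ x ∈ K, IsTest Ω (kern s (fun _ => χ) x)) ∧ ∫⁻ x in K, ENNReal.ofReal (MM μ B a u χ s x) ∂μ ≤ ENNReal.ofReal C := by
  have hul := hu.locallyIntegrable
  have hc : HasCompactSupport χ := hcs_of_norm (x := 0) (r := R') fun y hy => hχs y (by simpa using hy)
  obtain ⟨η, hη, hηc, hηΩ, hη0, hη1, δ₁, hδ₁, hηK⟩ := exists_cutoff hK hΩ hKΩ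
  obtain ⟨η₂, hη₂, hη₂c, hη₂Ω, hη₂0, hη₂1, δ, hδ, hη₂K⟩ := exists_cutoff hηc.isCompact hΩ hηΩ
  have hη1K : ∀ x ∈ K, η x = 1 := fun x hx => hηK x (self_subset_cthickening K hx)
  set I := ∫ ζ, χ ζ ∂μ
  have hI : 0 ≤ I := integral_nonneg hχ0
  have hTη₂ : 0 ≤ TT μ B a u η₂ := hs η₂ ⟨hη₂, hη₂c, hη₂Ω⟩ hη₂0
  refine ⟨I * TT μ B a u η₂, δ / R', by positivity, by positivity, fun s hs0 hss => ?_⟩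
  have hRs : R' * s ≤ δ := by rwa [le_div_iff₀ hR', mul_comm] at hss
  have hball : ∀ x ∈ tsupport η, closedBall x (R' * s) ⊆ cthickening δ (tsupport η) := fun x hx =>
    (closedBall_subset_closedBall hRs).trans (closedBall_subset_cthickening hx δ)
  have hthΩ : cthickening δ (tsupport η) ⊆ Ω := by
    intro y hy
    refine hη₂Ω (subset_tsupport _ ?_)
    rw [Function.mem_support, hη₂K y hy]; exact one_ne_zero
  have htest : ∀ x ∈ tsupport η, IsTest Ω (kern s (fun _ => χ) x) := fun x hx =>
    kern_test hχ hχs hs0 ((hball x hx).trans hthΩ)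
  have hk0 : ∀ x y, 0 ≤ kern s (fun _ => χ) x y := fun x y => by
    unfold kern; exact mul_nonneg (by positivity) (hχ0 _)
  have hKη : K ⊆ tsupport η := fun x hx => subset_tsupport _ (by
    rw [Function.mem_support, hη1K x hx]; exact one_ne_zero)
  refine ⟨fun x hx => htest x (hKη hx), ?_⟩
  have hMcont := MM_continuous (B := B) μ ha hul hχ hc hs0
  have hM0 : ∀ x, 0 ≤ η x * MM μ B a u χ s x := by
    intro x
    by_cases hx : x ∈ tsupport η
    · exact mul_nonneg (hη0 x) (hs _ (htest x hx) (hk0 x))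
    · rw [image_eq_zero_of_notMem_tsupport hx, zero_mul]
  have hIntg : Integrable (fun x => η x * MM μ B a u χ s x) μ :=
    (hη.continuous.mul hMcont).integrable_of_hasCompactSupport hηc.mul_right
  set g : V → ℝ := cv μ η (fun z => s⁻¹ ^ (Module.finrank ℝ V) * χ (s⁻¹ • ((1 : ℝ) • (0 - z)))) with hg
  have hgker : ∀ y, g y = ∫ x, η x * kern s (fun _ => χ) x y ∂μ := by
    intro y
    simp only [hg, cv, kern]
    congr 1; funext x; simp
  have hnegc : HasCompactSupport (fun z => s⁻¹ ^ (Module.finrank ℝ V) * χ (s⁻¹ • ((1 : ℝ) • (0 - z)))) := by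
    refine hcs_of_norm (x := 0) (r := R' * s) fun y hy => ?_
    rw [hχs _ (scale_lt hs0 (by simpa using hy)), mul_zero]
  have hgsm : ContDiff ℝ ∞ g := cv_contDiff μ hη.continuous.locallyIntegrable (n := ⊤) (by fun_prop) hnegc
  have hgz : ∀ y, y ∉ cthickening δ (tsupport η) → g y = 0 := by
    intro y hy
    rw [hgker]
    refine integral_eq_zero_of_ae (Eventually.of_forall fun x => ?_)
    by_cases hx : x ∈ tsupport η
    · have : R' * s < ‖x - y‖ := by
        by_contra h
        refine hy (hball x hx ?_)
        rw [mem_closedBall, dist_comm, dist_eq_norm]; linarith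
      simp only [Pi.zero_apply]
      rw [kern, hχs _ (scale_lt hs0 this), mul_zero, mul_zero]
    · simp [image_eq_zero_of_notMem_tsupport hx]
  have hth : IsCompact (cthickening δ (tsupport η)) := hηc.isCompact.cthickening
  have hgts : tsupport g ⊆ cthickening δ (tsupport η) := by
    refine closure_minimal ?_ isClosed_cthickening
    intro y hy
    by_contra h
    exact hy (hgz y h)
  have hgtest : IsTest Ω g := ⟨hgsm, hth.of_isClosed_subset (isClosed_tsupport _) hgts, hgts.trans hthΩ⟩
  have hgle : ∀ y, g y ≤ I * η₂ y := by
    intro y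
    by_cases hy : y ∈ cthickening δ (tsupport η)
    · rw [hη₂K y hy, mul_one, hgker]
      have hIe : I = ∫ x, s⁻¹ ^ (Module.finrank ℝ V) * χ (s⁻¹ • (x - y)) ∂μ := by
        rw [integral_const_mul, integral_sub_right_eq_self (fun z => χ (s⁻¹ • z)) y, Measure.integral_comp_smul,
          smul_eq_mul, ← mul_assoc, abs_of_pos (by positivity), mul_inv_cancel₀ (by positivity), one_mul]
      rw [hIe]
      have hkc : Integrable (fun x => s⁻¹ ^ (Module.finrank ℝ V) * χ (s⁻¹ • (x - y))) μ := by
        refine Continuous.integrable_of_hasCompactSupport (by have := hχ.continuous; fun_prop) ?_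
        refine hcs_of_norm (x := y) (r := R' * s) fun x hx => ?_
        rw [norm_sub_rev] at hx
        rw [hχs _ (scale_lt hs0 hx), mul_zero]
      refine integral_mono (Integrable.bdd_mul (c := 1) hkc hη.continuous.aestronglyMeasurable ?_) hkc fun x => ?_
      · exact Eventually.of_forall fun x => by rw [Real.norm_of_nonneg (hη0 x)]; exact hη1 x
      · exact mul_le_of_le_one_left (hk0 x y) (hη1 x)
    · rw [hgz y hy]; exact mul_nonneg hI (hη₂0 y)
  calc ∫⁻ x in K, ENNReal.ofReal (MM μ B a u χ s x) ∂μ ≤ ∫⁻ x in K, ENNReal.ofReal (η x * MM μ B a u χ s x) ∂μ := by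
        refine setLIntegral_mono' hK.measurableSet fun x hx => ?_
        rw [hη1K x hx, one_mul]
    _ ≤ ∫⁻ x, ENNReal.ofReal (η x * MM μ B a u χ s x) ∂μ := setLIntegral_le_lintegral _ _
    _ = ENNReal.ofReal (∫ x, η x * MM μ B a u χ s x ∂μ) := 
        (ofReal_integral_eq_lintegral_ofReal hIntg (Eventually.of_forall hM0)).symm
    _ = ENNReal.ofReal (TT μ B a u g) := by rw [MM_fubini μ ha hu huc hχ hc hs0 hη hηc]
    _ ≤ ENNReal.ofReal (I * TT μ B a u η₂) := by
        refine ENNReal.ofReal_le_ofReal ?_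
        have := hs.mono μ ha hul hgtest (IsTest.const_mul ⟨hη₂, hη₂c, hη₂Ω⟩ I) hgle
        rwa [TT_const_mul μ hη₂.two_of_infty] at this
end
end generic
end
end P6

section P7
open MeasureTheory Filter Topology Complex Metric
open scoped ContDiff

set_option linter.unusedSectionVars false

noncomputable section
section generic
variable {V : Type*} [NormedAddCommGroup V] [NormedSpace ℝ V] [FiniteDimensional ℝ V] [MeasurableSpace V] [BorelSpace V] (μ : Measure V) [μ.IsAddHaarMeasure]
variable {ι : Type*} [Fintype ι] {B : ι → V}

structure IsPtx (B : ι → V) (a : ι → ι → V → ℝ) (P Φ : V → V → ℝ) : Prop where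
  smooth : ∀ x, ContDiff ℝ ∞ (P x)
  P1 : ContDiff ℝ 1 (Function.uncurry P)
  Φ1 : ContDiff ℝ 1 (Function.uncurry Φ)
  D1 : ∀ i j, ContDiff ℝ 1 (Function.uncurry fun x ζ => D2 (P x) ζ (B i) (B j))
  supp : ∀ r : ℝ, ∃ R : ℝ, 0 < R ∧ ∀ x : V, ‖x‖ ≤ r → ∀ ζ : V, R < ‖ζ‖ → P x ζ = 0 ∧ Φ x ζ = 0
  int : ∀ x, ∫ ζ, Φ x ζ ∂μ = 1
  eqn : ∀ x ζ, ∑ i, ∑ j, a i j x * D2 (P x) ζ (B i) (B j) = Φ x ζ - 2 ^ (Module.finrank ℝ V) * Φ x ((2 : ℝ) • ζ)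

lemma D2_zero_far {f : V → ℝ} {R : ℝ} (h : ∀ ζ, R < ‖ζ‖ → f ζ = 0) (ζ v w : V) (hζ : R < ‖ζ‖) : D2 f ζ v w = 0 := by
  apply D2_eq_zero_of_notMem_tsupport
  intro hm
  have : tsupport f ⊆ closedBall 0 R := by
    refine closure_minimal ?_ isClosed_closedBall
    intro y hy
    by_contra h'
    exact hy (h y (by simpa using h'))
  have := this hm
  rw [mem_closedBall_zero_iff] at this
  linarith

lemma exists_isProf2 {P : V → V → ℝ} {r R : ℝ} (hP : ∀ x, ContDiff ℝ 2 (P x)) (hD : ∀ i j, ContDiff ℝ 1 (Function.uncurry fun x ζ => D2 (P x) ζ (B i) (B j)))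
    (hs : ∀ x : V, ‖x‖ ≤ r → ∀ ζ : V, R < ‖ζ‖ → P x ζ = 0) : ∃ C, 0 ≤ C ∧ IsProf2 B (closedBall 0 r) R C P := by
  have : ∀ i j, ∃ C : ℝ, 0 ≤ C ∧ IsProf (closedBall 0 r) R C (fun x ζ => D2 (P x) ζ (B i) (B j)) := fun i j =>
    exists_isProf (hD i j) (isCompact_closedBall 0 r) fun x hx ζ hζ => D2_zero_far (hs x (by simpa using hx)) _ _ _ hζ
  choose C hC hprof using this
  refine ⟨∑ i, ∑ j, C i j, Finset.sum_nonneg fun i _ => Finset.sum_nonneg fun j _ => hC i j, hP, fun x hx => hs x (by simpa using hx), fun i j => (hprof i j).mono ?_⟩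
  calc C i j ≤ ∑ j, C i j := Finset.single_le_sum (fun j _ => hC i j) (Finset.mem_univ j)
    _ ≤ _ := Finset.single_le_sum (f := fun i => ∑ j, C i j) (fun i _ => Finset.sum_nonneg fun j _ => hC i j) (Finset.mem_univ i)

lemma IsProf2.mono {X : Set V} {R C C' : ℝ} {P : V → V → ℝ} (h : IsProf2 B X R C P) (hC : C ≤ C') : IsProf2 B X R C' P :=
  ⟨h.C2, h.supp, fun i j => (h.prof i j).mono hC⟩

lemma IsPtx.data {a : ι → ι → V → ℝ} {P Φ : V → V → ℝ} (hp : IsPtx μ B a P Φ) (r : ℝ) :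
    ∃ R C : ℝ, 0 < R ∧ 0 ≤ C ∧ IsProf (closedBall 0 r) R C P ∧ IsProf (closedBall 0 r) R C Φ ∧ IsProf2 B (closedBall 0 r) R C P := by
  obtain ⟨R, hR, hs⟩ := hp.supp r
  obtain ⟨C1, h1, h1'⟩ := exists_isProf hp.P1 (isCompact_closedBall 0 r) (R := R) fun x hx ζ hζ => (hs x (by simpa using hx) ζ hζ).1
  obtain ⟨C2, h2, h2'⟩ := exists_isProf hp.Φ1 (isCompact_closedBall 0 r) (R := R) fun x hx ζ hζ => (hs x (by simpa using hx) ζ hζ).2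
  obtain ⟨C3, h3, h3'⟩ := exists_isProf2 (B := B) (fun x => (hp.smooth x).two_of_infty) hp.D1 (fun x hx ζ hζ => (hs x hx ζ hζ).1)
  exact ⟨R, C1 + C2 + C3, hR, by positivity, h1'.mono (by linarith), h2'.mono (by linarith), h3'.mono (by linarith)⟩

lemma UU_diff {a : ι → ι → V → ℝ} (ha : IsCoef B a) {P Φ : V → V → ℝ} (hp : IsPtx μ B a P Φ) {u : V → ℝ} (hu : LocallyIntegrable u μ) {s : ℝ} (hs : 0 < s) (x : V) :
    UU μ s Φ u x - UU μ (s / 2) Φ u x = s ^ 2 * (TT μ B a u (kern s P x) + err μ B a s P u x) := by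
  obtain ⟨R, C, hR, hC, hP, hΦ, hP2⟩ := hp.data μ ‖x‖
  have hx : x ∈ closedBall (0 : V) ‖x‖ := by simp
  have hP2' := (hp.smooth x).two_of_infty
  have hk2 : ContDiff ℝ 2 (kern s P x) := kern_contDiff hP2'
  have hkc : HasCompactSupport (kern s P x) := hcs_of_norm fun y hy => kern_supp hP hs hx hy
  have hΦc : Continuous (Φ x) := hp.Φ1.continuous.comp (by fun_prop : Continuous fun ζ => (x, ζ))
  have kc : ∀ s, Continuous (fun y => kern s Φ x y) := fun s => by unfold kern; fun_prop
  have i1 : Integrable (fun y => kern s Φ x y * u y) μ :=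
    hu.integrable_smul_left_of_hasCompactSupport (kc s) (hcs_of_norm fun y hy => kern_supp hΦ hs hx hy)
  have i2 : Integrable (fun y => kern (s/2) Φ x y * u y) μ :=
    hu.integrable_smul_left_of_hasCompactSupport (kc _) (hcs_of_norm fun y hy => kern_supp hΦ (by positivity) hx hy)
  have i3 : Integrable (fun y => u y * Lop B a (kern s P x) y) μ := TT_integrable μ (fun i j => (ha.C1 i j).continuous) hu hk2 hkc
  have i4 : Integrable (fun y => eker B a s P x y * u y) μ :=
    hu.integrable_smul_left_of_hasCompactSupport (eker_cont ha hP2' s) (eker_hcs ha hP2 hs hx)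
  rw [UU, UU, ← integral_sub i1 i2, TT, err, ← integral_add i3 i4, ← integral_const_mul]
  congr 1; funext y
  have e1 : eker B a s P x y + Lop B a (kern s P x) y = s⁻¹ ^ 2 * ∑ i, ∑ j, a i j x * kern s (fun x ζ => D2 (P x) ζ (B i) (B j)) x y := by
    rw [eker_eq B hP2']
    have : Lop B a (kern s P x) y = s⁻¹ ^ 2 * ∑ i, ∑ j, a i j y * kern s (fun x ζ => D2 (P x) ζ (B i) (B j)) x y := by
      simp only [Lop, Finset.mul_sum]
      refine Finset.sum_congr rfl fun i _ => Finset.sum_congr rfl fun j _ => ?_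
      have := D2_kern (s := s) (x := x) hP2' y (B i) (B j)
      change D2 (fun z => kern s P x z) y (B i) (B j) = _ at this
      change a i j y * D2 (fun z => kern s P x z) y (B i) (B j) = _
      rw [this]; ring
    rw [this, ← mul_add, ← Finset.sum_add_distrib]
    simp only [← Finset.sum_add_distrib, ← add_mul, sub_add_cancel]
  have e2 : ∑ i, ∑ j, a i j x * kern s (fun x ζ => D2 (P x) ζ (B i) (B j)) x y = kern s Φ x y - kern (s / 2) Φ x y := by
    have := hp.eqn x (s⁻¹ • (x - y))
    have h2 : (s / 2)⁻¹ = 2 * s⁻¹ := by field_simp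
    simp only [kern, h2, mul_pow, ← smul_smul]
    rw [show ∀ A b c e : ℝ, A * b - c * A * e = A * (b - c * e) from fun A b c e => by ring, ← this]
    simp only [Finset.mul_sum]
    refine Finset.sum_congr rfl fun i _ => Finset.sum_congr rfl fun j _ => by ring
  rw [e2] at e1
  have e3 : kern s Φ x y - kern (s / 2) Φ x y = s ^ 2 * (eker B a s P x y + Lop B a (kern s P x) y) := by
    rw [e1, ← mul_assoc, ← mul_pow, mul_inv_cancel₀ hs.ne', one_pow, one_mul]
  rw [← sub_mul, e3]; ring

lemma lint_split {K : Set V} (hK : MeasurableSet K) {g e f : V → ℝ} (hg : Continuous g) {c1 c2 A E : ℝ} (h1 : 0 ≤ c1) (h2 : 0 ≤ c2) (hA : 0 ≤ A) (hE : 0 ≤ E)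
    (hf : ∀ x ∈ K, |f x| ≤ c1 * g x + c2 * |e x|) (hgA : ∫⁻ x in K, ENNReal.ofReal (g x) ∂μ ≤ ENNReal.ofReal A)
    (heE : ∫⁻ x in K, ‖e x‖ₑ ∂μ ≤ ENNReal.ofReal E) : ∫⁻ x in K, ‖f x‖ₑ ∂μ ≤ ENNReal.ofReal (c1 * A + c2 * E) := by
  calc ∫⁻ x in K, ‖f x‖ₑ ∂μ ≤ ∫⁻ x in K, (ENNReal.ofReal c1 * ENNReal.ofReal (g x) + ENNReal.ofReal c2 * ‖e x‖ₑ) ∂μ := by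
        refine setLIntegral_mono' hK fun x hx => ?_
        rw [← ofReal_norm, ← ofReal_norm, ← ENNReal.ofReal_mul h1, ← ENNReal.ofReal_mul h2]
        exact (ENNReal.ofReal_le_ofReal (hf x hx)).trans ENNReal.ofReal_add_le
    _ = ENNReal.ofReal c1 * ∫⁻ x in K, ENNReal.ofReal (g x) ∂μ + ENNReal.ofReal c2 * ∫⁻ x in K, ‖e x‖ₑ ∂μ := by
        have hm : Measurable fun x => ENNReal.ofReal (g x) := ENNReal.measurable_ofReal.comp hg.measurable
        rw [lintegral_add_left (hm.const_mul _), lintegral_const_mul _ hm, lintegral_const_mul' _ _ ENNReal.ofReal_ne_top]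
    _ ≤ ENNReal.ofReal c1 * ENNReal.ofReal A + ENNReal.ofReal c2 * ENNReal.ofReal E := by gcongr
    _ = _ := by rw [← ENNReal.ofReal_mul h1, ← ENNReal.ofReal_mul h2, ENNReal.ofReal_add (by positivity) (by positivity)]

lemma TT_sub {a : ι → ι → V → ℝ} (ha : ∀ i j, Continuous (a i j)) {u φ ψ : V → ℝ} (hu : LocallyIntegrable u μ) (hφ : ContDiff ℝ 2 φ) (hc : HasCompactSupport φ)
    (hψ : ContDiff ℝ 2 ψ) (hc' : HasCompactSupport ψ) :
    TT μ B a u (fun y => φ y + (-1) * ψ y) = TT μ B a u φ - TT μ B a u ψ := by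
  rw [TT_add μ ha hu hφ hc (ψ := fun y => (-1) * ψ y) (by fun_prop) hc'.mul_left, TT_const_mul μ hψ]; ring

theorem scale_lemma {a : ι → ι → V → ℝ} (ha : IsCoef B a) {P Φ : V → V → ℝ} (hp : IsPtx μ B a P Φ) {u : V → ℝ} (hum : Measurable u) (hu : Integrable u μ) (huc : HasCompactSupport u)
    {Ω : Set V} (hΩ : IsOpen Ω) (hs : IsSub μ B a Ω u) {K : Set V} (hK : IsCompact K) (hKΩ : K ⊆ Ω) :
    ∃ C R s₀ : ℝ, 0 ≤ C ∧ 0 < R ∧ 0 < s₀ ∧ s₀ ≤ 1 ∧ ∀ s θ : ℝ, 0 < s → s ≤ s₀ → 0 ≤ θ → (∀ h : V, ‖h‖ ≤ (R + 1) * s → Nm μ u K h ≤ ENNReal.ofReal θ) →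
      ∫⁻ x in K, ‖UU μ s Φ u x - UU μ (s / 2) Φ u x‖ₑ ∂μ ≤ ENNReal.ofReal (C * s * (s + θ)) ∧
      ∀ h : V, ‖h‖ ≤ s → ∫⁻ x in K, ‖(UU μ s Φ u (x + h) - UU μ (s / 2) Φ u (x + h)) - (UU μ s Φ u x - UU μ (s / 2) Φ u x)‖ₑ ∂μ
        ≤ ENNReal.ofReal (C * ‖h‖ * (s + θ)) := by
  have hac : ∀ i j, Continuous (a i j) := fun i j => (ha.C1 i j).continuous
  have hul := hu.locallyIntegrable
  obtain ⟨r0, hr0⟩ := hK.isBounded.subset_closedBall (0 : V)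
  set r := r0 + 1
  obtain ⟨R, C, hR, hC, hP, hΦ, hP2⟩ := hp.data μ r
  let χ : ContDiffBump (0 : V) := ⟨R + 2, R + 3, by linarith, by linarith⟩
  have hχ1 : ∀ ζ : V, ‖ζ‖ ≤ R + 2 → χ ζ = 1 := fun ζ hζ => χ.one_of_mem_closedBall (by simpa using hζ)
  have hχ0 : ∀ ζ : V, R + 3 < ‖ζ‖ → χ ζ = 0 := fun ζ hζ => χ.zero_of_le_dist (by simpa using hζ.le)
  have hχsm : ContDiff ℝ ∞ (χ : V → ℝ) := χ.contDiff
  have hχc : HasCompactSupport (χ : V → ℝ) := χ.hasCompactSupport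
  obtain ⟨M, s1, hM, hs1, hmass⟩ := mass_bound μ hac hu huc hχsm (fun ζ => χ.nonneg) (R' := R + 3) (by linarith) hχ0 hΩ hs hK hKΩ
  obtain ⟨C', hC', herr⟩ := err_L1 μ ha hR.le hC hP2
  have hKr : K ⊆ closedBall 0 r := hr0.trans (closedBall_subset_closedBall (by simp [r]))
  refine ⟨2 * C * M + C', R, min s1 1, by positivity, hR, by positivity, min_le_right _ _, fun s θ hs0 hss hθ0 hθ => ?_⟩
  have hs_1 : s ≤ 1 := hss.trans (min_le_right _ _)
  obtain ⟨htest, hMb⟩ := hmass s hs0 (hss.trans (min_le_left _ _))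
  have hk1 : ∀ x y : V, ‖x - y‖ ≤ (R + 2) * s → kern s (fun _ => χ) x y = s⁻¹ ^ (Module.finrank ℝ V) := by
    intro x y hxy
    rw [kern, hχ1, mul_one]
    rw [norm_smul, norm_inv, Real.norm_of_nonneg hs0.le, inv_mul_le_iff₀ hs0]; linarith
  have hk0 : ∀ x y, 0 ≤ kern s (fun _ => χ) x y := fun x y => by
    unfold kern; exact mul_nonneg (by positivity) χ.nonneg
  have hΩball : ∀ x ∈ K, ∀ y, ‖x - y‖ ≤ (R + 2) * s → y ∈ Ω := by
    intro x hx y hy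
    refine (htest x hx).2.2 (subset_tsupport _ ?_)
    rw [Function.mem_support, hk1 x y hy]; positivity
  have hPtest : ∀ x ∈ K, ∀ x' ∈ closedBall (0 : V) r, ‖x - x'‖ ≤ s → IsTest Ω (kern s P x') := by
    intro x hx x' hx' hxx
    refine ⟨kern_contDiff (hp.smooth x'), hcs_of_norm fun y hy => kern_supp hP hs0 hx' hy, ?_⟩
    refine (closure_minimal ?_ isClosed_closedBall : _ ⊆ closedBall x' (R * s)).trans ?_
    · intro y hy
      by_contra h
      refine hy (kern_supp hP hs0 hx' ?_)
      rw [mem_closedBall, dist_comm, dist_eq_norm] at h; linarith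
    · intro y hy
      rw [mem_closedBall, dist_comm, dist_eq_norm] at hy
      refine hΩball x hx y ?_
      have := norm_sub_le_norm_sub_add_norm_sub x x' y
      linarith
  obtain ⟨he1, he2⟩ := herr u K s θ hum hul hK.measurableSet hKr hs0 hs_1 hθ0 hθ
  have hMcont := MM_continuous (B := B) μ hac hul hχsm hχc hs0
  constructor
  · refine (lint_split μ hK.measurableSet hMcont (c1 := s ^ 2 * C) (c2 := s ^ 2) (e := err μ B a s P u) (by positivity) (by positivity) hM (by positivity) (fun x hx => ?_) hMb he1).trans ?_
    · rw [UU_diff μ ha hp hul hs0, abs_mul, abs_of_nonneg (by positivity : (0:ℝ) ≤ s ^ 2), mul_assoc, ← mul_add]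
      refine mul_le_mul_of_nonneg_left ((abs_add_le _ _).trans (add_le_add_left ?_ _)) (by positivity)
      refine hs.abs_le μ hac hul (hPtest x hx x (hKr hx) (by simpa using hs0.le)) (htest x hx) C fun y => ?_
      by_cases hy : ‖x - y‖ ≤ R * s
      · rw [hk1 x y (by nlinarith), mul_comm]
        exact kern_bound hP hs0 (hKr hx) y
      · rw [kern_supp hP hs0 (hKr hx) (not_le.1 hy), abs_zero]
        exact mul_nonneg hC (hk0 _ _)
    · refine ENNReal.ofReal_le_ofReal ?_
      have : s ^ 2 * C * M + s ^ 2 * (C' * s⁻¹ * θ) = C * M * s * s + C' * s * θ := by field_simp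
      rw [this]
      have : 0 ≤ C * M * s * s := by positivity
      have : 0 ≤ C * M * s * θ := by positivity
      have : 0 ≤ C' * s * s := by positivity
      nlinarith
  · intro h hh
    have hKh : ∀ x ∈ K, x + h ∈ closedBall (0 : V) r := by
      intro x hx
      have h1 := hr0 hx
      rw [mem_closedBall_zero_iff] at h1 ⊢
      exact (norm_add_le _ _).trans (by simp only [r]; linarith)
    have hn : ∀ x : V, ‖x - (x + h)‖ = ‖h‖ := fun x => by rw [sub_add_cancel_left, norm_neg]
    refine (lint_split μ hK.measurableSet hMcont (c1 := s ^ 2 * (2 * C * s⁻¹ * ‖h‖)) (c2 := s ^ 2) (e := fun x => err μ B a s P u (x + h) - err μ B a s P u x) (by positivity) (by positivity) hM (by positivity) (fun x hx => ?_) hMb (he2 h hh hKh)).trans ?_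
    · have t1 := hPtest x hx x (hKr hx) (by simpa using hs0.le)
      have t2 := hPtest x hx (x + h) (hKh x hx) (by rwa [hn])
      rw [UU_diff μ ha hp hul hs0, UU_diff μ ha hp hul hs0, ← mul_sub, abs_mul, abs_of_nonneg (by positivity : (0:ℝ) ≤ s ^ 2), mul_assoc, ← mul_add, add_sub_add_comm,
        ← TT_sub μ hac hul t2.1.two_of_infty t2.2.1 t1.1.two_of_infty t1.2.1]
      refine mul_le_mul_of_nonneg_left ((abs_add_le _ _).trans (add_le_add_left ?_ _)) (by positivity)
      refine hs.abs_le μ hac hul (t2.add (t1.const_mul (-1))) (htest x hx) _ fun y => ?_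
      rw [show kern s P (x + h) y + -1 * kern s P x y = kern s P (x + h) y - kern s P x y by ring]
      by_cases hy : ‖x - y‖ ≤ (R + 1) * s
      · rw [hk1 x y (by nlinarith), mul_comm]
        have := kern_lip hC hP hs0 hs_1 (hKh x hx) (hKr hx) y
        rwa [norm_sub_rev, hn] at this
      · rw [kern_supp hP hs0 (hKr hx) (by nlinarith), kern_supp hP hs0 (hKh x hx), sub_zero, abs_zero]
        · exact mul_nonneg (by positivity) (hk0 _ _)
        · have := norm_sub_le_norm_sub_add_norm_sub x (x + h) y
          rw [hn] at this; nlinarith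
    · refine ENNReal.ofReal_le_ofReal ?_
      have : s ^ 2 * (2 * C * s⁻¹ * ‖h‖) * M + s ^ 2 * (C' * ‖h‖ * s⁻¹ ^ 2 * θ) = 2 * C * M * ‖h‖ * s + C' * ‖h‖ * θ := by field_simp
      rw [this]
      have : 0 ≤ C * M * ‖h‖ * θ := by positivity
      have : 0 ≤ C' * ‖h‖ * s := by positivity
      nlinarith
end generic
end
end P7

section P8
open MeasureTheory Filter Topology Complex Metric
open scoped ContDiff

set_option linter.unusedSectionVars false

noncomputable section
section generic
variable {V : Type*} [NormedAddCommGroup V] [NormedSpace ℝ V] [FiniteDimensional ℝ V] [MeasurableSpace V] [BorelSpace V] (μ : Measure V) [μ.IsAddHaarMeasure]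
variable {ι : Type*} [Fintype ι] {B : ι → V}

lemma UU_C1 {H : V → V → ℝ} (hH : ContDiff ℝ 1 (Function.uncurry H)) (hsupp : ∀ r : ℝ, ∃ R : ℝ, 0 < R ∧ ∀ x : V, ‖x‖ ≤ r → ∀ ζ : V, R < ‖ζ‖ → H x ζ = 0)
    {u : V → ℝ} (hu : LocallyIntegrable u μ) {s : ℝ} (hs : 0 < s) : ContDiff ℝ 1 (UU μ s H u) := by
  rw [contDiff_iff_contDiffAt]
  intro x0
  obtain ⟨R, hR, hz⟩ := hsupp (‖x0‖ + 1)
  have key := contDiffOn_convolution_right_with_param (𝕜 := ℝ) (μ := μ) (f := u) (n := 1) (ContinuousLinearMap.mul ℝ ℝ)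
    (g := fun p z => s⁻¹ ^ (Module.finrank ℝ V) * H p (s⁻¹ • z)) (s := ball (0 : V) (‖x0‖ + 1)) (k := closedBall (0 : V) (R * s))
    isOpen_ball (isCompact_closedBall _ _) (by
      intro p x hp hx
      rw [mem_ball_zero_iff] at hp
      rw [mem_closedBall_zero_iff, not_le] at hx
      rw [hz p hp.le _ (scale_lt hs hx), mul_zero]) hu (by
      refine ContDiff.contDiffOn ?_
      have : (↿fun (p z : V) => s⁻¹ ^ (Module.finrank ℝ V) * H p (s⁻¹ • z)) = fun q : V × V => s⁻¹ ^ (Module.finrank ℝ V) * Function.uncurry H (q.1, s⁻¹ • q.2) := rfl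
      rw [this]
      exact contDiff_const.mul (hH.comp (by fun_prop)))
  have h2 : UU μ s H u = (fun q : V × V => (convolution u ((fun p z => s⁻¹ ^ (Module.finrank ℝ V) * H p (s⁻¹ • z)) q.1) (ContinuousLinearMap.mul ℝ ℝ) μ) q.2) ∘ fun x => (x, x) := by
    funext x
    simp only [UU, kern, convolution, Function.comp, ContinuousLinearMap.mul_apply']
    congr 1; funext y; ring
  rw [h2]
  have h3 := key.contDiffAt (x := (x0, x0)) ((isOpen_ball.prod isOpen_univ).mem_nhds ⟨by simp, trivial⟩)
  exact ContDiffAt.comp x0 h3 (by fun_prop)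

lemma IsPtx.UU_C1 {a : ι → ι → V → ℝ} {P Φ : V → V → ℝ} (hp : IsPtx μ B a P Φ) {u : V → ℝ} (hu : LocallyIntegrable u μ) {s : ℝ} (hs : 0 < s) : ContDiff ℝ 1 (UU μ s Φ u) :=
  _root_.UU_C1 μ hp.Φ1 (fun r => by
    obtain ⟨R, hR, h⟩ := hp.supp r
    exact ⟨R, hR, fun x hx ζ hζ => (h x hx ζ hζ).2⟩) hu hs

lemma lint_translate {K K' : Set V} (hK : MeasurableSet K) (hK' : MeasurableSet K') {h : V} (hh : ∀ x ∈ K, x + h ∈ K') (F : V → ENNReal) :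
    ∫⁻ x in K, F (x + h) ∂μ ≤ ∫⁻ x in K', F x ∂μ := by
  rw [← lintegral_indicator hK, ← lintegral_indicator hK', ← lintegral_add_right_eq_self (μ := μ) (K'.indicator F) h]
  refine lintegral_mono fun x => ?_
  by_cases hx : x ∈ K
  · rw [Set.indicator_of_mem hx, Set.indicator_of_mem (hh x hx)]
  · rw [Set.indicator_of_notMem hx]; exact zero_le

lemma Nm_le_of_subset {K K' : Set V} (hK : MeasurableSet K) (hK' : MeasurableSet K') (hKK : K ⊆ K') {h : V} (hh : ∀ x ∈ K, x + h ∈ K') {g : V → ℝ} (hg : Measurable g) :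
    Nm μ g K h ≤ 2 * ∫⁻ x in K', ‖g x‖ₑ ∂μ := by
  unfold Nm
  calc ∫⁻ x in K, ‖g (x + h) - g x‖ₑ ∂μ ≤ ∫⁻ x in K, (‖g x‖ₑ + ‖g (x + h)‖ₑ) ∂μ := by
        refine lintegral_mono fun x => ?_
        exact (enorm_sub_le (E := ℝ)).trans (add_comm _ _).le
    _ = ∫⁻ x in K, ‖g x‖ₑ ∂μ + ∫⁻ x in K, ‖g (x + h)‖ₑ ∂μ := lintegral_add_left hg.enorm _
    _ ≤ _ := by
        rw [two_mul]
        exact add_le_add (lintegral_mono_set hKK) (lint_translate μ hK hK' hh (fun x => ‖g x‖ₑ))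

lemma Nm_add_le {K : Set V} {f g w : V → ℝ} (hf : Measurable f) (h : V) (hw : ∀ x, w x = f x + g x) : Nm μ w K h ≤ Nm μ f K h + Nm μ g K h := by
  unfold Nm
  have hm : Measurable fun x => ‖f (x + h) - f x‖ₑ := ((hf.comp (measurable_id.add_const h)).sub hf).enorm
  rw [← lintegral_add_left hm]
  refine lintegral_mono fun x => ?_
  simp only [hw, add_sub_add_comm]
  exact enorm_add_le _ _

lemma sqrt_half_sum {δ : ℝ} (N : ℕ) : ∑ k ∈ Finset.range N, √(δ / 2 ^ k) ≤ 4 * (√δ - √(δ / 2 ^ N)) := by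
  induction N with
  | zero => simp
  | succ N ih =>
    rw [Finset.sum_range_succ]
    have h1 : √(δ / 2 ^ (N + 1)) = √(δ / 2 ^ N) / √2 := by
      rw [pow_succ, ← div_div, Real.sqrt_div' _ (by norm_num : (0:ℝ) ≤ 2)]
    have h2 : √(δ / 2 ^ N) / √2 * 4 ≤ 3 * √(δ / 2 ^ N) := by
      have h3 : (4 : ℝ) / 3 ≤ √2 := by
        apply Real.le_sqrt_of_sq_le; norm_num
      rw [div_mul_eq_mul_div, div_le_iff₀ (by positivity)]
      nlinarith [Real.sqrt_nonneg (δ / 2 ^ N)]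
    rw [h1]; linarith

theorem telescope {u : V → ℝ} (hum : Measurable u) {U : ℕ → V → ℝ} (hU : ∀ k, Measurable (U k)) {K K' : Set V} (hK : MeasurableSet K) (hK' : MeasurableSet K') (hKK : K ⊆ K') {h : V}
    (hh : ∀ x ∈ K, x + h ∈ K') {A δ : ℝ} (hA : 0 ≤ A)
    (hd : ∀ k, Nm μ (fun x => U k x - U (k + 1) x) K h ≤ ENNReal.ofReal (A * √(δ / 2 ^ k)))
    (hlim : ∀ ε > 0, ∃ N, ∫⁻ x in K', ‖U N x - u x‖ₑ ∂μ ≤ ENNReal.ofReal ε) :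
    Nm μ (fun x => u x - U 0 x) K h ≤ ENNReal.ofReal (4 * A * √δ) := by
  have h1 : ∀ N, Nm μ (fun x => u x - U 0 x) K h ≤ Nm μ (fun x => u x - U N x) K h + ∑ k ∈ Finset.range N, ENNReal.ofReal (A * √(δ / 2 ^ k)) := by
    intro N
    induction N with
    | zero => simp
    | succ N ih =>
      refine ih.trans ?_
      rw [Finset.sum_range_succ, add_comm (∑ k ∈ Finset.range N, _) (ENNReal.ofReal _), ← add_assoc]
      gcongr
      have e : Nm μ (fun x => U N x - U (N + 1) x) K h = Nm μ (fun x => U (N + 1) x - U N x) K h := by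
        unfold Nm
        congr 1; funext x
        rw [← enorm_neg]; congr 1; ring
      refine (Nm_add_le μ (f := fun x => u x - U (N + 1) x) (g := fun x => U (N + 1) x - U N x) (hum.sub (hU _)) h (fun x => by ring)).trans ?_
      rw [← e]
      gcongr
      exact hd N
  have h2 : ∀ N, ∑ k ∈ Finset.range N, ENNReal.ofReal (A * √(δ / 2 ^ k)) ≤ ENNReal.ofReal (4 * A * √δ) := by
    intro N
    rw [← ENNReal.ofReal_sum_of_nonneg (fun k _ => by positivity), ← Finset.mul_sum]
    refine ENNReal.ofReal_le_ofReal ?_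
    have := sqrt_half_sum (δ := δ) N
    have h3 := Real.sqrt_nonneg (δ / 2 ^ N)
    nlinarith [mul_le_mul_of_nonneg_left this hA, mul_nonneg hA h3]
  refine ENNReal.le_of_forall_pos_le_add fun ε hε _ => ?_
  obtain ⟨N, hN⟩ := hlim (ε / 2) (by positivity)
  have h3 : Nm μ (fun x => u x - U N x) K h ≤ ε := by
    refine (Nm_le_of_subset μ hK hK' hKK hh (g := fun x => u x - U N x) (hum.sub (hU N))).trans ?_
    have e : ∫⁻ x in K', ‖u x - U N x‖ₑ ∂μ = ∫⁻ x in K', ‖U N x - u x‖ₑ ∂μ := by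
      congr 1; funext x; rw [← enorm_neg, neg_sub]
    rw [e]
    refine (mul_le_mul_right hN 2).trans ?_
    rw [show (2 : ENNReal) = ENNReal.ofReal 2 by simp, ← ENNReal.ofReal_mul (by norm_num), mul_div_cancel₀ _ (by norm_num), ENNReal.ofReal_coe_nnreal]
  calc _ ≤ _ := h1 N
    _ ≤ ε + ENNReal.ofReal (4 * A * √δ) := add_le_add h3 (h2 N)
    _ = _ := add_comm _ _

lemma UU_tendsto {a : ι → ι → V → ℝ} {P Φ : V → V → ℝ} (hp : IsPtx μ B a P Φ) {u : V → ℝ} (hum : Measurable u) (hu : Integrable u μ) {K : Set V} (hK : IsCompact K)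
    {ε : ℝ} (hε : 0 < ε) : ∃ s₁ > 0, ∀ s, 0 < s → s ≤ s₁ → ∫⁻ x in K, ‖UU μ s Φ u x - u x‖ₑ ∂μ ≤ ENNReal.ofReal ε := by
  obtain ⟨r, hr⟩ := hK.isBounded.subset_closedBall (0 : V)
  obtain ⟨R, C, hR, hC, hP, hΦ, hP2⟩ := hp.data μ r
  obtain ⟨C', hC', hUU⟩ := UU_L1 μ hR.le hC hΦ (fun x => hp.Φ1.continuous.comp (by fun_prop : Continuous fun ζ => (x, ζ))) hp.int
  obtain ⟨δ, hδ, hN⟩ := Nm_tendsto μ hu hum (ε := ε / (C' + 1)) (by positivity)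
  refine ⟨min 1 (δ / (R + 1)), by positivity, fun s hs hss => ?_⟩
  refine (hUU u K s (ε / (C' + 1)) hum hu.locallyIntegrable hK.measurableSet hr hs (hss.trans (min_le_left _ _)) (by positivity) fun h hh => ?_).1.trans ?_
  · refine (Nm_mono μ (Set.subset_univ _) h).trans (hN h (hh.trans ?_))
    have := hss.trans (min_le_right _ _)
    rw [le_div_iff₀ (by positivity)] at this; linarith
  · refine ENNReal.ofReal_le_ofReal ?_
    rw [mul_div_assoc', div_le_iff₀ (by positivity)]; nlinarith

theorem pass {a : ι → ι → V → ℝ} (ha : IsCoef B a) {P Φ : V → V → ℝ} (hp : IsPtx μ B a P Φ) {u : V → ℝ} (hum : Measurable u) (hu : Integrable u μ) (huc : HasCompactSupport u)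
    {Ω : Set V} (hΩ : IsOpen Ω) (hs : IsSub μ B a Ω u) {K K' : Set V} (hK : IsCompact K) (hK' : IsCompact K') (hKΩ : K' ⊆ Ω) {δ₁ : ℝ} (hδ₁ : 0 ≤ δ₁)
    (hKK : ∀ x ∈ K, ∀ h : V, ‖h‖ ≤ δ₁ → x + h ∈ K') :
    ∃ C R s₀ : ℝ, 0 ≤ C ∧ 0 < R ∧ 0 < s₀ ∧ s₀ ≤ 1 ∧ ∀ (θ : ℝ → ℝ) (δ A : ℝ) (h : V), 0 < δ → δ ≤ s₀ → ‖h‖ ≤ δ₁ → 0 ≤ A →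
      (∀ s, 0 < s → s ≤ δ → 0 ≤ θ s ∧ ∀ h' : V, ‖h'‖ ≤ (R + 1) * s → Nm μ u K' h' ≤ ENNReal.ofReal (θ s)) →
      (∀ s, 0 < s → s ≤ δ → C * min s ‖h‖ * (s + θ s) ≤ A * √s) →
      Nm μ (fun x => u x - UU μ δ Φ u x) K h ≤ ENNReal.ofReal (4 * A * √δ) := by
  obtain ⟨C, R, s₀, hC, hR, hs₀, hs₀1, hsc⟩ := scale_lemma μ ha hp hum hu huc hΩ hs hK' hKΩ
  have hsub : K ⊆ K' := fun x hx => by simpa using hKK x hx 0 (by simpa using hδ₁)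
  refine ⟨2 * C, R, s₀, by positivity, hR, hs₀, hs₀1, fun θ δ A h hδ hδs hh hA hθ hAs => ?_⟩
  have hUm : ∀ s, 0 < s → Measurable (UU μ s Φ u) := fun s hs => (hp.UU_C1 μ hu.locallyIntegrable hs).continuous.measurable
  have hpos : ∀ k : ℕ, 0 < δ / 2 ^ k := fun k => by positivity
  have hle : ∀ k : ℕ, δ / 2 ^ k ≤ δ := fun k => div_le_self hδ.le (one_le_pow₀ (by norm_num))
  have := telescope μ hum (U := fun k => UU μ (δ / 2 ^ k) Φ u) (fun k => hUm _ (hpos k)) hK.measurableSet hK'.measurableSet hsub (h := h) (fun x hx => hKK x hx h hh) (A := A) (δ := δ) hA ?_ ?_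
  · simpa using this
  · intro k
    set s := δ / 2 ^ k with hsdef
    have hs2 : δ / 2 ^ (k + 1) = s / 2 := by rw [hsdef, pow_succ, div_div]
    rw [hs2]
    obtain ⟨hA1, hB1⟩ := hsc s (θ s) (hpos k) ((hle k).trans hδs) (hθ s (hpos k) (hle k)).1 (hθ s (hpos k) (hle k)).2
    have hθ0 := (hθ s (hpos k) (hle k)).1
    have hs0 : 0 < s := hpos k
    refine le_trans ?_ (ENNReal.ofReal_le_ofReal (hAs s (hpos k) (hle k)))
    by_cases hhs : ‖h‖ ≤ s
    · rw [min_eq_right hhs]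
      refine (Nm_mono μ hsub h).trans ((hB1 h hhs).trans (ENNReal.ofReal_le_ofReal ?_))
      gcongr; linarith
    · rw [min_eq_left (not_le.1 hhs).le]
      refine (Nm_le_of_subset μ hK.measurableSet hK'.measurableSet hsub (fun x hx => hKK x hx h hh) ((hUm s hs0).sub (hUm (s/2) (by positivity)))).trans ?_
      refine (mul_le_mul_right hA1 2).trans ?_
      rw [show (2 : ENNReal) = ENNReal.ofReal 2 by simp, ← ENNReal.ofReal_mul (by norm_num)]
      exact ENNReal.ofReal_le_ofReal (le_of_eq (by ring))
  · intro ε hε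
    obtain ⟨s₁, hs₁, hs₁'⟩ := UU_tendsto μ hp hum hu hK' hε
    obtain ⟨N, hN⟩ := exists_pow_lt_of_lt_one (show 0 < s₁ / δ by positivity) (by norm_num : (1/2 : ℝ) < 1)
    refine ⟨N, hs₁' _ (hpos N) ?_⟩
    rw [lt_div_iff₀ hδ, div_pow, one_pow] at hN
    rw [div_eq_inv_mul, ← one_div]; exact hN.le
end generic
end
end P8

section P9
open MeasureTheory Filter Topology Complex Metric
open scoped ContDiff

set_option linter.unusedSectionVars false

noncomputable section
section generic
variable {V : Type*} [NormedAddCommGroup V] [NormedSpace ℝ V] [FiniteDimensional ℝ V] [MeasurableSpace V] [BorelSpace V] (μ : Measure V) [μ.IsAddHaarMeasure]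
variable {ι : Type*} [Fintype ι] {B : ι → V}

lemma cthick_add {K : Set V} {δ : ℝ} {x h : V} (hx : x ∈ K) (hh : ‖h‖ ≤ δ) : x + h ∈ cthickening δ K :=
  closedBall_subset_cthickening hx δ (by simpa [mem_closedBall, dist_eq_norm] using hh)

lemma min_le_sqrt {s t : ℝ} (hs : 0 ≤ s) (ht : 0 ≤ t) : min s t ≤ √s * √t := by
  rw [← Real.sqrt_mul hs]
  apply Real.le_sqrt_of_sq_le
  rw [sq]
  exact mul_le_mul (min_le_left _ _) (min_le_right _ _) (le_min hs ht) hs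

lemma le_sqrt_self {s : ℝ} (hs : 0 ≤ s) (hs1 : s ≤ 1) : s ≤ √s := by
  apply Real.le_sqrt_of_sq_le; nlinarith

section
variable {a : ι → ι → V → ℝ} (ha : IsCoef B a) {P Φ : V → V → ℝ} (hp : IsPtx μ B a P Φ) {u : V → ℝ} (hum : Measurable u) (hu : Integrable u μ) (huc : HasCompactSupport u)
    {Ω : Set V} (hΩ : IsOpen Ω) (hs : IsSub μ B a Ω u) {K : Set V} (hK : IsCompact K) (hKΩ : K ⊆ Ω)
include ha hp hum hu huc hΩ hs hK hKΩ

theorem pass_one : ∃ C δ : ℝ, 0 ≤ C ∧ 0 < δ ∧ ∀ h : V, ‖h‖ ≤ δ → Nm μ u K h ≤ ENNReal.ofReal (C * √‖h‖) := by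
  obtain ⟨δ₁, hδ₁, hδΩ⟩ := hK.exists_cthickening_subset_open hΩ hKΩ
  obtain ⟨C, R, s₀, hC, hR, hs₀, hs₀1, H⟩ := pass μ ha hp hum hu huc hΩ hs hK hK.cthickening hδΩ hδ₁.le (fun x hx h hh => cthick_add hx hh)
  obtain ⟨r0, hr0⟩ := hK.isBounded.subset_closedBall (0 : V)
  obtain ⟨R', C1, hR', hC1, hP, hΦ, hP2⟩ := hp.data μ (r0 + 1)
  obtain ⟨C', hC', hUU⟩ := UU_L1 μ hR'.le hC1 hΦ (fun x => hp.Φ1.continuous.comp (by fun_prop : Continuous fun ζ => (x, ζ))) hp.int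
  set Θ := (2 * ∫⁻ x, ‖u x‖ₑ ∂μ).toReal
  have hΘ0 : 0 ≤ Θ := ENNReal.toReal_nonneg
  have hfin : 2 * ∫⁻ x, ‖u x‖ₑ ∂μ ≠ ⊤ := ENNReal.mul_ne_top (by simp) hu.2.ne
  have hΘ : ∀ (S : Set V) h, Nm μ u S h ≤ ENNReal.ofReal Θ := by
    intro S h
    rw [ENNReal.ofReal_toReal hfin]
    exact Nm_le_two μ hum S h
  refine ⟨4 * (C * (1 + Θ)) + C' * s₀⁻¹ * Θ, min δ₁ s₀, by positivity, by positivity, fun h hh => ?_⟩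
  have hh1 : ‖h‖ ≤ δ₁ := hh.trans (min_le_left _ _)
  have hh2 : ‖h‖ ≤ s₀ := hh.trans (min_le_right _ _)
  have n1 := H (fun _ => Θ) s₀ (C * √‖h‖ * (1 + Θ)) h hs₀ le_rfl hh1 (by positivity) (fun s _ _ => ⟨hΘ0, fun h' _ => hΘ _ _⟩) (fun s hs0 hss => by
    have h1 := min_le_sqrt hs0.le (norm_nonneg h)
    calc C * min s ‖h‖ * (s + Θ) ≤ C * (√s * √‖h‖) * (1 + Θ) := by gcongr; exact hss.trans hs₀1
      _ = _ := by ring)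
  have n2 := (hUU u K s₀ Θ hum hu.locallyIntegrable hK.measurableSet (hr0.trans (closedBall_subset_closedBall (by linarith))) hs₀ hs₀1 hΘ0 (fun h' _ => hΘ _ _)).2 h hh2 (fun x hx => by
    have h1 := hr0 hx
    rw [mem_closedBall_zero_iff] at h1 ⊢
    exact (norm_add_le _ _).trans (by linarith))
  have hUm : Measurable (UU μ s₀ Φ u) := (hp.UU_C1 μ hu.locallyIntegrable hs₀).continuous.measurable
  refine (Nm_add_le μ (f := fun x => u x - UU μ s₀ Φ u x) (g := UU μ s₀ Φ u) (hum.sub hUm) h (fun x => by ring)).trans ?_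
  refine (add_le_add n1 n2).trans ?_
  rw [← ENNReal.ofReal_add (by positivity) (by positivity)]
  refine ENNReal.ofReal_le_ofReal ?_
  rw [add_mul]
  have hsq : √s₀ ≤ 1 := Real.sqrt_le_one.2 hs₀1
  have hhq := le_sqrt_self (norm_nonneg h) (hh2.trans hs₀1)
  refine add_le_add ?_ ?_
  · calc 4 * (C * √‖h‖ * (1 + Θ)) * √s₀ ≤ 4 * (C * √‖h‖ * (1 + Θ)) * 1 := by gcongr
      _ = _ := by ring
  · calc C' * ‖h‖ * s₀⁻¹ * Θ ≤ C' * √‖h‖ * s₀⁻¹ * Θ := by gcongr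
      _ = _ := by ring

theorem pass_two : ∃ C δ₀ : ℝ, 0 ≤ C ∧ 0 < δ₀ ∧ ∀ (δ : ℝ) (h : V), 0 < δ → δ ≤ δ₀ → ‖h‖ ≤ δ₀ →
    Nm μ (fun x => u x - UU μ δ Φ u x) K h ≤ ENNReal.ofReal (C * √δ * ‖h‖) := by
  obtain ⟨δ₁, hδ₁, hδΩ⟩ := hK.exists_cthickening_subset_open hΩ hKΩ
  obtain ⟨C, R, s₀, hC, hR, hs₀, hs₀1, H⟩ := pass μ ha hp hum hu huc hΩ hs hK hK.cthickening hδΩ hδ₁.le (fun x hx h hh => cthick_add hx hh)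
  obtain ⟨C3, δ3, hC3, hδ3, h3⟩ := pass_one μ ha hp hum hu huc hΩ hs (hK.cthickening (r := δ₁)) hδΩ
  refine ⟨4 * (C * (1 + C3 * √(R + 1))), min δ₁ (min s₀ (δ3 / (R + 1))), by positivity, by positivity, fun δ h hδ hδδ hh => ?_⟩
  simp only [le_min_iff] at hδδ hh
  have := H (fun s => C3 * √((R + 1) * s)) δ (C * ‖h‖ * (1 + C3 * √(R + 1))) h hδ hδδ.2.1 hh.1 (by positivity) (fun s hs0 hss => ⟨by positivity, fun h' hh' => ?_⟩) (fun s hs0 hss => ?_)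
  · refine this.trans (ENNReal.ofReal_le_ofReal (le_of_eq (by ring)))
  · refine (h3 h' (hh'.trans ?_)).trans (ENNReal.ofReal_le_ofReal ?_)
    · have := hss.trans hδδ.2.2
      rw [le_div_iff₀ (by positivity)] at this; linarith
    · gcongr
  · rw [Real.sqrt_mul (by positivity)]
    have h1 : s ≤ √s := le_sqrt_self hs0.le (hss.trans (hδδ.2.1.trans hs₀1))
    calc C * min s ‖h‖ * (s + C3 * (√(R + 1) * √s)) ≤ C * ‖h‖ * (√s + C3 * (√(R + 1) * √s)) := by
          gcongr; exact min_le_right _ _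
      _ = _ := by ring
end

lemma eker_linear {a : ι → ι → V → ℝ} (ha : IsCoef B a) {X : Set V} {R C : ℝ} {P : V → V → ℝ} (hP : IsProf2 B X R C P) {s : ℝ} (hs : 0 < s) {x : V} (hx : x ∈ X) (ℓ : V →L[ℝ] ℝ) :
    ∫ y, eker B a s P x y * ℓ y ∂μ = 0 := by
  have h := ha.frozen x
  have hkc : HasCompactSupport (fun z => kern s P x z) := hcs_of_norm (x := x) (r := R * s) fun y hy => by
    rw [kern, hP.supp x hx _ (scale_lt hs hy), mul_zero]
  have := Lop_selfadjoint μ B (fun i j z => a i j x - a i j z) h.1 (fun i j z => by rw [ha.symm i j x, ha.symm i j z]) h.2 (f := fun y => ℓ y) ℓ.contDiff (φ := fun z => kern s P x z)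
    (kern_contDiff (hP.C2 x)) hkc
  calc ∫ y, eker B a s P x y * ℓ y ∂μ = ∫ y, ℓ y * Lop B (fun i j z => a i j x - a i j z) (fun z => kern s P x z) y ∂μ := by
        congr 1; funext y; rw [eker, mul_comm]
    _ = 0 := by
        rw [this]
        refine integral_eq_zero_of_ae (Eventually.of_forall fun y => ?_)
        have hD : ∀ v w, D2 (fun y => ℓ y) y v w = 0 := by
          intro v w
          unfold D2
          have : fderiv ℝ (fun y => ℓ y) = fun _ => ℓ := by funext z; exact ℓ.fderiv
          rw [this]; simp
        simp [Lop, hD]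

theorem err_C1 {a : ι → ι → V → ℝ} (ha : IsCoef B a) {r R C : ℝ} (hR : 0 ≤ R) (hC : 0 ≤ C) {P : V → V → ℝ} (hP : IsProf2 B (closedBall 0 r) R C P) 
    {g : V → ℝ} (hg : ContDiff ℝ 1 g) {ε : ℝ} (hε : 0 < ε) :
    ∃ s₁ > 0, ∀ s, 0 < s → s ≤ s₁ → ∀ x ∈ closedBall (0 : V) r, |err μ B a s P g x| ≤ ε := by
  set d := Module.finrank ℝ V
  set vB := μ.real (closedBall (0 : V) 1)
  have hvB : 0 ≤ vB := measureReal_nonneg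
  obtain ⟨C', hC', hb⟩ := eker_bounds ha hR hC hP
  set ε₁ := ε / (C' * R * R ^ d * vB + 1) with hε₁
  have hε₁0 : 0 < ε₁ := by positivity
  have huc := (isCompact_closedBall (0 : V) (r + 1)).uniformContinuousOn_of_continuous (hg.continuous_fderiv one_ne_zero).continuousOn
  rw [Metric.uniformContinuousOn_iff] at huc
  obtain ⟨η, hη, huc⟩ := huc ε₁ hε₁0
  refine ⟨min 1 (min 1 η / (2 * (R + 1))), by positivity, fun s hs0 hss x hx => ?_⟩
  have hs1 := hss.trans (min_le_left _ _)
  have hs2 := hss.trans (min_le_right _ _)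
  rw [le_div_iff₀ (by positivity)] at hs2
  have hm0 : 0 < min 1 η := by positivity
  have hRs : R * s < min 1 η := by nlinarith
  obtain ⟨b1, b2, -⟩ := hb s hs0 hs1 x hx
  set ℓ := fderiv ℝ g x
  have htay : ∀ y, ‖x - y‖ ≤ R * s → |g y - g x - ℓ (y - x)| ≤ ε₁ * (R * s) := by
    intro y hy
    have := Convex.norm_image_sub_le_of_norm_fderiv_le' (𝕜 := ℝ) (f := g) (C := ε₁) (s := ball x (min 1 η)) (x := x) (y := y) (φ := ℓ)
      (fun z _ => hg.differentiable one_ne_zero z) (fun z hz => ?_) (convex_ball _ _) (mem_ball_self hm0) (by rw [mem_ball, dist_comm, dist_eq_norm]; linarith)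
    · refine this.trans ?_
      rw [norm_sub_rev] at hy
      gcongr
    · rw [← dist_eq_norm]
      rw [mem_ball, lt_min_iff] at hz
      rw [mem_closedBall_zero_iff] at hx
      refine (huc z ?_ x ?_ hz.2).le
      · rw [mem_closedBall_zero_iff]
        have := norm_sub_norm_le z x
        rw [dist_eq_norm] at hz; linarith [hz.1]
      · rw [mem_closedBall_zero_iff]; linarith
  have hcont := eker_cont ha (hP.C2 x) s
  have hcs := eker_hcs ha hP hs0 hx
  have i1 : ∀ f : V → ℝ, Continuous f → Integrable (fun y => eker B a s P x y * f y) μ := fun f hf =>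
    (hcont.mul hf).integrable_of_hasCompactSupport hcs.mul_right
  have e : err μ B a s P g x = ∫ y, eker B a s P x y * (g y - g x - ℓ (y - x)) ∂μ := by
    have e1 : ∀ y, eker B a s P x y * (g y - g x - ℓ (y - x)) = eker B a s P x y * g y - (eker B a s P x y * (g x - ℓ x) + eker B a s P x y * ℓ y) := by
      intro y; rw [map_sub]; ring
    simp only [e1]
    have j1 := i1 (fun _ => g x - ℓ x) continuous_const
    have j2 := i1 ℓ ℓ.continuous
    have j3 : Integrable (fun y => eker B a s P x y * (g x - ℓ x) + eker B a s P x y * ℓ y) μ := j1.add j2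
    rw [integral_sub (i1 g hg.continuous) j3, integral_add j1 j2, integral_mul_const, eker_mean μ ha hP hs0 hx,
      eker_linear μ ha hP hs0 hx, err]; simp
  rw [e, ← setIntegral_eq_integral_of_forall_compl_eq_zero (s := closedBall x (R * s)) (fun y hy => by
    rw [b2 y ?_, zero_mul]
    rw [mem_closedBall, dist_comm, dist_eq_norm] at hy; linarith)]
  rw [← Real.norm_eq_abs]
  refine (norm_setIntegral_le_of_norm_le_const (C := C' * s⁻¹ * s⁻¹ ^ d * (ε₁ * (R * s))) (isCompact_closedBall _ _).measure_lt_top fun y hy => ?_).trans ?_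
  · rw [norm_mul, Real.norm_eq_abs, Real.norm_eq_abs]
    refine mul_le_mul (b1 y) (htay y ?_) (abs_nonneg _) (by positivity)
    rwa [mem_closedBall, dist_comm, dist_eq_norm] at hy
  · have hvol : μ.real (closedBall x (R * s)) = (R * s) ^ d * vB := by
      rw [measureReal_def, Measure.addHaar_closedBall' _ _ (by positivity), ENNReal.toReal_mul, ENNReal.toReal_ofReal (by positivity)]
      rfl
    rw [hvol]
    have : C' * s⁻¹ * s⁻¹ ^ d * (ε₁ * (R * s)) * ((R * s) ^ d * vB) = ε₁ * (C' * R * R ^ d * vB) := by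
      rw [mul_pow, inv_pow]; field_simp
    rw [this, hε₁, div_mul_eq_mul_div, div_le_iff₀ (by positivity)]
    nlinarith

theorem KP {a : ι → ι → V → ℝ} (ha : IsCoef B a) {P Φ : V → V → ℝ} (hp : IsPtx μ B a P Φ) {u : V → ℝ} (hum : Measurable u) (hu : Integrable u μ) (huc : HasCompactSupport u)
    {Ω : Set V} (hΩ : IsOpen Ω) (hs : IsSub μ B a Ω u) {K : Set V} (hK : IsCompact K) (hKΩ : K ⊆ Ω)
    {J : V → ℝ} (hJ : ContDiff ℝ ∞ J) {R : ℝ} (hR : 0 ≤ R) (hJs : ∀ ζ, R < ‖ζ‖ → J ζ = 0) {ε : ℝ} (hε : 0 < ε) :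
    ∃ s₁ > 0, ∀ s, 0 < s → s ≤ s₁ → ∫⁻ x in K, ‖err μ B a s (fun _ => J) u x‖ₑ ∂μ ≤ ENNReal.ofReal ε := by
  obtain ⟨r, hr⟩ := hK.isBounded.subset_closedBall (0 : V)
  obtain ⟨C1, hC1, hP⟩ := exists_isProf2 (B := B) (P := fun _ : V => J) (r := r) (R := R) (fun _ => hJ.two_of_infty) (fun i j => by
    have h1 : ContDiff ℝ ∞ (fun y => fderiv ℝ J y (B j)) := contDiff_fderiv_apply' hJ (by simp) (B j)
    have h2 : ContDiff ℝ ∞ (fun y => fderiv ℝ (fun y => fderiv ℝ J y (B j)) y (B i)) := contDiff_fderiv_apply' h1 (by simp) (B i)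
    simp only [fderiv_fderiv_apply hJ.two_of_infty] at h2
    exact (h2.of_le (by norm_cast)).comp contDiff_snd) (fun _ _ => hJs)
  obtain ⟨C', hC', herr⟩ := err_L1 μ ha hR hC1 hP
  obtain ⟨C, δ₀, hC, hδ₀, H⟩ := pass_two μ ha hp hum hu huc hΩ hs hK hKΩ
  obtain ⟨t, ht, hts⟩ : ∃ t : ℝ, 0 < t ∧ C' * (C * t * (R + 1)) ≤ ε / 2 :=
    ⟨ε / 2 / (C' * (C * (R + 1)) + 1), by positivity, by
      rw [show C' * (C * (ε / 2 / (C' * (C * (R + 1)) + 1)) * (R + 1)) = (ε / 2) * (C' * (C * (R + 1))) / (C' * (C * (R + 1)) + 1) by ring, div_le_iff₀ (by positivity)]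
      nlinarith⟩
  set δ := min δ₀ (t ^ 2)
  have hδ : 0 < δ := by positivity
  have hδt : √δ ≤ t := by
    rw [← Real.sqrt_sq ht.le]; exact Real.sqrt_le_sqrt (min_le_right _ _)
  have hgC1 := hp.UU_C1 μ hu.locallyIntegrable hδ
  set g := UU μ δ Φ u
  obtain ⟨s₂, hs₂, hg2⟩ := err_C1 μ ha hR hC1 hP hgC1 (ε := ε / 2 / (μ.real K + 1)) (by positivity)
  refine ⟨min s₂ (min 1 (δ₀ / (R + 1))), by positivity, fun s hs0 hss => ?_⟩
  simp only [le_min_iff] at hss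
  have h1 := (herr (fun x => u x - g x) K s (C * √δ * ((R + 1) * s)) (hum.sub hgC1.continuous.measurable) (hu.locallyIntegrable.sub hgC1.continuous.locallyIntegrable) hK.measurableSet hr hs0 hss.2.1 (by positivity) (fun h hh => by
    refine (H δ h hδ (min_le_left _ _) (hh.trans ?_)).trans (ENNReal.ofReal_le_ofReal (by gcongr))
    have := hss.2.2
    rw [le_div_iff₀ (by positivity)] at this; linarith)).1
  have hE : C' * s⁻¹ * (C * √δ * ((R + 1) * s)) ≤ ε / 2 := by
    have : C' * s⁻¹ * (C * √δ * ((R + 1) * s)) = C' * (C * √δ * (R + 1)) := by field_simp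
    rw [this]
    refine le_trans ?_ hts
    gcongr
  have h2 := h1.trans (ENNReal.ofReal_le_ofReal hE)
  refine (lint_split μ hK.measurableSet (g := fun _ => ε / 2 / (μ.real K + 1)) (c1 := 1) (c2 := 1) (A := ε / 2) (E := ε / 2) continuous_const zero_le_one zero_le_one (by positivity) (by positivity) (fun x hx => ?_) ?_ h2).trans
    (ENNReal.ofReal_le_ofReal (by linarith))
  · have hx' := hr hx
    have ec := eker_cont ha (P := fun _ => J) (x := x) (hP.C2 x) s
    have es := eker_hcs ha hP hs0 hx'
    have i1 : Integrable (fun y => eker B a s (fun _ => J) x y * u y) μ := hu.locallyIntegrable.integrable_smul_left_of_hasCompactSupport ec es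
    have i2 : Integrable (fun y => eker B a s (fun _ => J) x y * g y) μ := hgC1.continuous.locallyIntegrable.integrable_smul_left_of_hasCompactSupport ec es
    have e : err μ B a s (fun _ => J) u x = err μ B a s (fun _ => J) g x + err μ B a s (fun _ => J) (fun x => u x - g x) x := by
      simp only [err, mul_sub]
      rw [integral_sub i1 i2]; ring
    rw [e, one_mul, one_mul]
    exact (abs_add_le _ _).trans (add_le_add_left (hg2 s hs0 hss.1 x hx') _)
  · rw [lintegral_const, Measure.restrict_apply_univ, ← ENNReal.ofReal_toReal hK.measure_lt_top.ne, ← ENNReal.ofReal_mul (by positivity)]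
    refine ENNReal.ofReal_le_ofReal ?_
    change ε / 2 / (μ.real K + 1) * μ.real K ≤ ε / 2
    have : 0 ≤ μ.real K := measureReal_nonneg
    rw [div_mul_eq_mul_div, div_le_iff₀ (by positivity)]
    nlinarith
end generic
end
end P9

section P10
open MeasureTheory Filter Topology Complex Metric
open scoped ContDiff

set_option linter.unusedSectionVars false

noncomputable section
section generic
variable {V : Type*} [NormedAddCommGroup V] [NormedSpace ℝ V] [FiniteDimensional ℝ V] [MeasurableSpace V] [BorelSpace V] (μ : Measure V) [μ.IsAddHaarMeasure]
variable {ι : Type*} [Fintype ι] {B : ι → V}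

lemma fderiv_comp_real {h : ℝ → ℝ} {w : V → ℝ} (hh : ContDiff ℝ 1 h) (hw : ContDiff ℝ 1 w) (y v : V) :
    fderiv ℝ (fun x => h (w x)) y v = deriv h (w y) * fderiv ℝ w y v := by
  have h1 : HasDerivAt h (deriv h (w y)) (w y) := (hh.differentiable one_ne_zero _).hasDerivAt
  have h2 : HasFDerivAt w (fderiv ℝ w y) y := (hw.differentiable one_ne_zero y).hasFDerivAt
  have h3 := h1.comp_hasFDerivAt y h2
  have h4 : fderiv ℝ (fun x => h (w x)) y = deriv h (w y) • fderiv ℝ w y := h3.fderiv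
  rw [h4]; rfl

lemma D2_comp_real {h : ℝ → ℝ} {w : V → ℝ} (hh : ContDiff ℝ 2 h) (hw : ContDiff ℝ 2 w) (x v v' : V) :
    D2 (fun x => h (w x)) x v v' = deriv (deriv h) (w x) * fderiv ℝ w x v * fderiv ℝ w x v' + deriv h (w x) * D2 w x v v' := by
  have hh1 : ContDiff ℝ 1 (deriv h) := hh.deriv' 
  rw [← fderiv_fderiv_apply (f := fun x => h (w x)) (hh.comp hw) x v v']
  have e : (fun y => fderiv ℝ (fun x => h (w x)) y v') = fun y => deriv h (w y) * fderiv ℝ w y v' := by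
    funext y
    exact fderiv_comp_real (hh.of_le one_le_two) (hw.of_le one_le_two) y v'
  rw [e]
  have d1 : DifferentiableAt ℝ (fun y => deriv h (w y)) x := (hh1.comp (hw.of_le one_le_two)).differentiable one_ne_zero x
  have d2 : DifferentiableAt ℝ (fun y => fderiv ℝ w y v') x := (contDiff_fderiv_apply' hw (m := 1) (by norm_num) v').differentiable one_ne_zero x
  rw [fderiv_fun_mul d1 d2]
  simp only [ContinuousLinearMap.add_apply, ContinuousLinearMap.smul_apply, smul_eq_mul]
  rw [fderiv_fderiv_apply hw, fderiv_comp_real hh1 (hw.of_le one_le_two)]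
  ring

lemma sqrt_reg {η : ℝ} (hη : 0 < η) : ContDiff ℝ 2 (fun t : ℝ => √(t ^ 2 + η ^ 2)) ∧ (∀ t, |deriv (fun t : ℝ => √(t ^ 2 + η ^ 2)) t| ≤ 1) ∧
    ∀ t, 0 ≤ deriv (deriv (fun t : ℝ => √(t ^ 2 + η ^ 2))) t := by
  have hpos : ∀ t : ℝ, 0 < t ^ 2 + η ^ 2 := fun t => by positivity
  have h1 : ∀ t : ℝ, HasDerivAt (fun t : ℝ => √(t ^ 2 + η ^ 2)) (t / √(t ^ 2 + η ^ 2)) t := by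
    intro t
    have := ((hasDerivAt_pow 2 t).add_const (η ^ 2)).sqrt (hpos t).ne'
    convert this using 1
    field_simp; ring
  have h1' : deriv (fun t : ℝ => √(t ^ 2 + η ^ 2)) = fun t => t / √(t ^ 2 + η ^ 2) := by
    funext t; exact (h1 t).deriv
  have hsq : ∀ t : ℝ, 0 < √(t ^ 2 + η ^ 2) := fun t => Real.sqrt_pos.2 (hpos t)
  refine ⟨?_, fun t => ?_, fun t => ?_⟩
  · exact ContDiff.sqrt (by fun_prop) (fun t => (hpos t).ne')
  · rw [h1', abs_div, abs_of_pos (hsq t), div_le_one (hsq t)]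
    apply Real.le_sqrt_of_sq_le
    rw [sq_abs]; nlinarith
  · have hd : HasDerivAt (fun t => t / √(t^2+η^2)) _ t := (hasDerivAt_id t).div (h1 t) (hsq t).ne'
    rw [h1', hd.deriv]
    have := Real.sq_sqrt (hpos t).le
    have h3 := hsq t
    apply div_nonneg _ (by positivity)
    simp only [id]
    rw [one_mul, mul_div_assoc', sub_nonneg, div_le_iff₀ h3]
    nlinarith [sq_nonneg η]

lemma IsCoef.nonneg {a : ι → ι → V → ℝ} (ha : IsCoef B a) (x : V) (ξ : ι → ℝ) : 0 ≤ ∑ i, ∑ j, a i j x * ξ i * ξ j := by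
  by_cases h : ξ = 0
  · simp [h]
  · exact (ha.pos x ξ h).le

lemma Lop_kato {a : ι → ι → V → ℝ} (ha : IsCoef B a) {f g : V → ℝ} (hf : ContDiff ℝ 2 f) (hg : ContDiff ℝ 2 g) {η : ℝ} (hη : 0 < η) :
    ContDiff ℝ 2 (fun y => f y + g y + √((f y - g y) ^ 2 + η ^ 2)) ∧ ∀ x e1 e2, 0 ≤ e1 → 0 ≤ e2 → -e1 ≤ Lop B a f x → -e2 ≤ Lop B a g x →
      -(2 * e1 + 2 * e2) ≤ Lop B a (fun y => f y + g y + √((f y - g y) ^ 2 + η ^ 2)) x := by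
  obtain ⟨h0, h1, h2⟩ := sqrt_reg hη
  set h : ℝ → ℝ := fun t : ℝ => √(t ^ 2 + η ^ 2) with hh
  have hw : ContDiff ℝ 2 (fun y => f y + (-1) * g y) := by fun_prop
  have hw2 : ContDiff ℝ 2 (fun y => h (f y + (-1) * g y)) := h0.comp hw
  have e : (fun y => f y + g y + √((f y - g y) ^ 2 + η ^ 2)) = fun y => (f y + g y) + h (f y + (-1) * g y) := by
    funext y; simp only [hh]; congr 4; ring
  have hm : ContDiff ℝ 2 (fun y => -1 * g y) := by fun_prop
  rw [e]
  refine ⟨(hf.add hg).add hw2, fun x e1 e2 he1 he2 hL1 hL2 => ?_⟩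
  rw [Lop_add B (hf.add hg) hw2, Lop_add B hf hg]
  have hLw : Lop B a (fun y => f y + (-1) * g y) x = Lop B a f x - Lop B a g x := by
    rw [Lop_add B hf hm, Lop_const_mul B hg]; ring
  set w := fun y => f y + (-1) * g y
  have hLh : deriv h (w x) * Lop B a w x ≤ Lop B a (fun y => h (w y)) x := by
    have hn := mul_nonneg (h2 (w x)) (ha.nonneg x (fun i => fderiv ℝ w x (B i)))
    have : Lop B a (fun y => h (w y)) x = deriv h (w x) * Lop B a w x + deriv (deriv h) (w x) * ∑ i, ∑ j, a i j x * fderiv ℝ w x (B i) * fderiv ℝ w x (B j) := by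
      simp only [Lop, D2_comp_real h0 hw, Finset.mul_sum, ← Finset.sum_add_distrib]
      refine Finset.sum_congr rfl fun i _ => Finset.sum_congr rfl fun j _ => by ring
    linarith
  rw [hLw] at hLh
  have hd := abs_le.1 (h1 (w x))
  nlinarith [mul_le_mul_of_nonneg_left hL1 (by linarith [hd.1] : 0 ≤ 1 + deriv h (w x)), mul_le_mul_of_nonneg_left hL2 (by linarith [hd.2] : 0 ≤ 1 - deriv h (w x))]

lemma UU_tendsto_J {J : V → ℝ} (hJ : ContDiff ℝ ∞ J) {R : ℝ} (hR : 0 ≤ R) (hJs : ∀ ζ, R < ‖ζ‖ → J ζ = 0) (hJi : ∫ ζ, J ζ ∂μ = 1) {u : V → ℝ} (hum : Measurable u) (hu : Integrable u μ) {K : Set V} (hK : IsCompact K)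
    {ε : ℝ} (hε : 0 < ε) : ∃ s₁ > 0, ∀ s, 0 < s → s ≤ s₁ → ∫⁻ x in K, ‖UU μ s (fun _ => J) u x - u x‖ₑ ∂μ ≤ ENNReal.ofReal ε := by
  obtain ⟨r, hr⟩ := hK.isBounded.subset_closedBall (0 : V)
  obtain ⟨C, hC, hΦ⟩ := exists_isProf (H := fun _ : V => J) ((hJ.of_le (by norm_cast)).comp contDiff_snd) (isCompact_closedBall 0 r) (R := R) fun x hx ζ hζ => hJs ζ hζ
  obtain ⟨C', hC', hUU⟩ := UU_L1 μ hR hC hΦ (fun x => hJ.continuous) (fun _ => hJi)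
  obtain ⟨δ, hδ, hN⟩ := Nm_tendsto μ hu hum (ε := ε / (C' + 1)) (by positivity)
  refine ⟨min 1 (δ / (R + 1)), by positivity, fun s hs hss => ?_⟩
  refine (hUU u K s (ε / (C' + 1)) hum hu.locallyIntegrable hK.measurableSet hr hs (hss.trans (min_le_left _ _)) (by positivity) fun h hh => ?_).1.trans ?_
  · refine (Nm_mono μ (Set.subset_univ _) h).trans (hN h (hh.trans ?_))
    have := hss.trans (min_le_right _ _)
    rw [le_div_iff₀ (by positivity)] at this; linarith
  · refine ENNReal.ofReal_le_ofReal ?_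
    rw [mul_div_assoc', div_le_iff₀ (by positivity)]; nlinarith

/-- smoothness and the fundamental identity for mollification -/
lemma UU_J {a : ι → ι → V → ℝ} (ha : IsCoef B a) {J : V → ℝ} (hJ : ContDiff ℝ ∞ J) (hJc : HasCompactSupport J) {u : V → ℝ} (hu : LocallyIntegrable u μ) {s : ℝ} (hs : 0 < s) :
    ContDiff ℝ 2 (UU μ s (fun _ => J) u) ∧ ∀ x, Lop B a (UU μ s (fun _ => J) u) x = MM μ B a u J s x + err μ B a s (fun _ => J) u x := by
  set Js : V → ℝ := fun z => s⁻¹ ^ (Module.finrank ℝ V) * J (s⁻¹ • z) with hJsd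
  have hJsm : ContDiff ℝ ∞ Js := by fun_prop
  have hJs2 := hJsm.two_of_infty
  have hJsc : HasCompactSupport Js := HasCompactSupport.mul_left (hJc.comp_homeomorph (Homeomorph.smulOfNeZero s⁻¹ (by positivity)))
  have e : UU μ s (fun _ => J) u = cv μ u Js := by
    funext x; simp only [UU, cv, kern, Js]; congr 1; funext y; ring
  have hac : ∀ i j, Continuous (a i j) := fun i j => (ha.C1 i j).continuous
  refine ⟨?_, fun x => ?_⟩
  · rw [e]; exact (cv_contDiff μ hu (n := ⊤) hJsm hJsc).two_of_infty
  · rw [e]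
    have hk : kern s (fun _ => J) x = fun y => Js ((1 : ℝ) • (x - y)) := by
      funext y; simp [kern, Js]
    have hi : ∀ i j, Integrable (fun y => u y * D2 Js (x - y) (B i) (B j)) μ := fun i j => integrable_mul_sub μ hu (continuous_D2 hJs2 _ _) (hcs_D2 hJsc _ _) x
    have hi2 : ∀ i j, Integrable (fun y => a i j x * (u y * D2 Js (x - y) (B i) (B j))) μ := fun i j => (hi i j).const_mul _
    have hkc : HasCompactSupport (kern s (fun _ => J) x) := by
      have := hJsc.comp_homeomorph (Homeomorph.subLeft x)
      rw [hk]; simpa [Function.comp_def] using this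
    have i3 : Integrable (fun y => u y * Lop B a (kern s (fun _ => J) x) y) μ := TT_integrable μ hac hu (kern_contDiff (P := fun _ => J) hJ.two_of_infty) hkc
    have hL : ∀ (b : ι → ι → V → ℝ) y, Lop B b (kern s (fun _ => J) x) y = ∑ i, ∑ j, b i j y * D2 Js (x - y) (B i) (B j) := by
      intro b y
      rw [hk]; simp only [Lop, D2_comp_scale hJs2]; simp
    have he : ∀ y, eker B a s (fun _ => J) x y = ∑ i, ∑ j, (a i j x - a i j y) * D2 Js (x - y) (B i) (B j) := by
      intro y
      exact hL (fun i j z => a i j x - a i j z) y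
    have hec : HasCompactSupport (eker B a s (fun _ => J) x) := hcs_Lop B hkc
    have i4 : Integrable (fun y => eker B a s (fun _ => J) x y * u y) μ :=
      hu.integrable_smul_left_of_hasCompactSupport (eker_cont ha (P := fun _ => J) (x := x) hJ.two_of_infty s) hec
    rw [MM, TT, err, ← integral_add i3 i4]
    simp only [Lop, cv_D2 μ hu hJs2 hJsc, ← integral_const_mul]
    rw [Finset.sum_congr rfl fun i _ => (integral_finsetSum _ fun j _ => hi2 i j).symm,
      ← integral_finsetSum _ (fun i _ => integrable_finsetSum _ fun j _ => hi2 i j)]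
    congr 1; funext y
    change _ = u y * Lop B a (kern s (fun _ => J) x) y + _
    rw [hL, he, mul_comm _ (u y), ← mul_add, ← Finset.sum_add_distrib, Finset.mul_sum]
    refine Finset.sum_congr rfl fun i _ => ?_
    rw [← Finset.sum_add_distrib, Finset.mul_sum]
    refine Finset.sum_congr rfl fun j _ => by ring
end generic
end
end P10

section P11
open MeasureTheory Filter Topology Complex Metric
open scoped ContDiff

set_option linter.unusedSectionVars false

noncomputable section
section generic
variable {V : Type*} [NormedAddCommGroup V] [NormedSpace ℝ V] [FiniteDimensional ℝ V] [MeasurableSpace V] [BorelSpace V] (μ : Measure V) [μ.IsAddHaarMeasure]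
variable {ι : Type*} [Fintype ι] {B : ι → V}


lemma lint_to_int {K : Set V} {g : V → ℝ} (hg : AEStronglyMeasurable g μ) {δ : ℝ} (hδ : 0 ≤ δ) (h : ∫⁻ x in K, ‖g x‖ₑ ∂μ ≤ ENNReal.ofReal δ) :
    IntegrableOn (fun x => |g x|) K μ ∧ ∫ x in K, |g x| ∂μ ≤ δ := by
  have hi : IntegrableOn g K μ := ⟨hg.restrict, lt_of_le_of_lt h ENNReal.ofReal_lt_top⟩
  refine ⟨hi.abs, ?_⟩
  have h1 := integral_norm_eq_lintegral_enorm (μ := μ.restrict K) hg.restrict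
  simp only [Real.norm_eq_abs] at h1
  rw [h1]
  exact ENNReal.toReal_le_of_le_ofReal hδ h

lemma max_reg (p q u v η : ℝ) (hη : 0 ≤ η) : |(p + q + √((p - q) ^ 2 + η ^ 2)) - 2 * max u v| ≤ 2 * |p - u| + 2 * |q - v| + η := by
  have h1 : |p - q| ≤ √((p - q) ^ 2 + η ^ 2) := by
    apply Real.le_sqrt_of_sq_le; rw [sq_abs]; nlinarith
  have h2 : √((p - q) ^ 2 + η ^ 2) ≤ |p - q| + η := by
    apply Real.sqrt_le_iff.2 ⟨by positivity, ?_⟩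
    nlinarith [sq_abs (p - q), abs_nonneg (p - q)]
  have h3 : 2 * max u v = u + v + |u - v| := by
    rcases le_total u v with h | h
    · rw [max_eq_right h, abs_of_nonpos (by linarith)]; ring
    · rw [max_eq_left h, abs_of_nonneg (by linarith)]; ring
  have h4 : |(|p - q| - |u - v|)| ≤ |p - u| + |q - v| := by
    refine (abs_abs_sub_abs_le _ _).trans ?_
    have : (p - q) - (u - v) = (p - u) - (q - v) := by ring
    rw [this]; exact abs_sub _ _
  rw [h3, abs_le]
  have := abs_le.1 h4
  have a1 := abs_le.1 (le_refl |p - u|)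
  have a2 := abs_le.1 (le_refl |q - v|)
  constructor <;> linarith

lemma exists_J : ∃ J : V → ℝ, ContDiff ℝ ∞ J ∧ HasCompactSupport J ∧ (∀ ζ, 0 ≤ J ζ) ∧ (∀ ζ, 1 < ‖ζ‖ → J ζ = 0) ∧ ∫ ζ, J ζ ∂μ = 1 := by
  let f : ContDiffBump (0 : V) := ⟨1/2, 1, by norm_num, by norm_num⟩
  refine ⟨f.normed μ, f.contDiff_normed, f.hasCompactSupport_normed, fun ζ => f.nonneg_normed ζ, fun ζ hζ => ?_, f.integral_normed⟩
  have : ζ ∉ Function.support (f.normed μ) := by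
    rw [f.support_normed_eq]; simp [f, hζ.le]
  simpa using this

theorem max_core {a : ι → ι → V → ℝ} (ha : IsCoef B a) {P Φ : V → V → ℝ} (hp : IsPtx μ B a P Φ) {u v : V → ℝ} (hum : Measurable u) (hu : Integrable u μ) (huc : HasCompactSupport u)
    (hvm : Measurable v) (hv : Integrable v μ) (hvc : HasCompactSupport v)
    {Ω : Set V} (hΩ : IsOpen Ω) (hsu : IsSub μ B a Ω u) (hsv : IsSub μ B a Ω v) : IsSub μ B a Ω (fun x => max (u x) (v x)) := by
  intro φ hφ hφ0
  obtain ⟨hφs, hφc, hφΩ⟩ := hφ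
  have hac : ∀ i j, Continuous (a i j) := fun i j => (ha.C1 i j).continuous
  obtain ⟨J, hJ, hJc, hJ0, hJs, hJi⟩ := exists_J μ
  set K := tsupport φ
  have hK : IsCompact K := hφc
  obtain ⟨W, hW⟩ := hφc.exists_bound_of_continuous hφs.continuous
  have hLc := continuous_Lop B hac hφs.two_of_infty
  obtain ⟨M, hM⟩ := (hcs_Lop B (a := a) hφc).exists_bound_of_continuous hLc
  have hW0 : 0 ≤ W := (norm_nonneg _).trans (hW 0)
  have hM0 : 0 ≤ M := (norm_nonneg _).trans (hM 0)
  have hvK : μ K < ⊤ := hK.measure_lt_top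
  set c := 4 * W + 4 * M + M * μ.real K with hc
  have hc0 : 0 ≤ c := by positivity
  have key : ∀ δ > 0, -(c * δ) ≤ 2 * TT μ B a (fun x => max (u x) (v x)) φ := by
    intro δ hδ
    obtain ⟨s1, hs1, h1⟩ := KP μ ha hp hum hu huc hΩ hsu hK hφΩ hJ zero_le_one hJs hδ
    obtain ⟨s2, hs2, h2⟩ := KP μ ha hp hvm hv hvc hΩ hsv hK hφΩ hJ zero_le_one hJs hδ
    obtain ⟨s3, hs3, h3⟩ := UU_tendsto_J μ hJ zero_le_one hJs hJi hum hu hK hδ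
    obtain ⟨s4, hs4, h4⟩ := UU_tendsto_J μ hJ zero_le_one hJs hJi hvm hv hK hδ
    obtain ⟨s5, hs5, h5⟩ := hK.exists_cthickening_subset_open hΩ hφΩ
    obtain ⟨s, hs, hss⟩ : ∃ s > 0, s ≤ s1 ∧ s ≤ s2 ∧ s ≤ s3 ∧ s ≤ s4 ∧ s ≤ s5 :=
      ⟨min s1 (min s2 (min s3 (min s4 s5))), by positivity, by simp⟩
    obtain ⟨q1, q2, q3, q4, q5⟩ := hss
    specialize h1 s hs q1; specialize h2 s hs q2; specialize h3 s hs q3; specialize h4 s hs q4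
    obtain ⟨U2, UL⟩ := UU_J μ ha hJ hJc hu.locallyIntegrable hs
    obtain ⟨V2, VL⟩ := UU_J μ ha hJ hJc hv.locallyIntegrable hs
    have hec : ∀ w : V → ℝ, Integrable w μ → ContDiff ℝ 2 (UU μ s (fun _ => J) w) → (∀ x, Lop B a (UU μ s (fun _ => J) w) x = MM μ B a w J s x + err μ B a s (fun _ => J) w x) →
        Continuous (err μ B a s (fun _ => J) w) := by
      intro w hw hw2 hwL
      have : err μ B a s (fun _ => J) w = fun x => Lop B a (UU μ s (fun _ => J) w) x - MM μ B a w J s x := by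
        funext x; rw [hwL]; ring
      rw [this]
      exact (continuous_Lop B hac hw2).sub (MM_continuous μ hac hw.locallyIntegrable hJ hJc hs)
    have eu := hec u hu U2 UL
    have ev := hec v hv V2 VL
    have hMM : ∀ w : V → ℝ, IsSub μ B a Ω w → ∀ x ∈ K, 0 ≤ MM μ B a w J s x := by
      intro w hw x hx
      refine hw _ (kern_test (R' := 1) hJ hJs hs ?_) fun y => ?_
      · refine (closedBall_subset_cthickening hx _).trans ((cthickening_mono ?_ _).trans h5)
        linarith
      · unfold kern; exact mul_nonneg (by positivity) (hJ0 _)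
    set U := UU μ s (fun _ => J) u
    set Vv := UU μ s (fun _ => J) v
    set e1 := err μ B a s (fun _ => J) u
    set e2 := err μ B a s (fun _ => J) v
    obtain ⟨F2, FL⟩ := Lop_kato ha U2 V2 hδ
    set F := fun y => U y + Vv y + √((U y - Vv y) ^ 2 + δ ^ 2) with hF
    have i1 := lint_to_int μ eu.aestronglyMeasurable hδ.le h1
    have i2 := lint_to_int μ ev.aestronglyMeasurable hδ.le h2
    have i3 := lint_to_int μ (U2.continuous.aestronglyMeasurable.sub hum.aestronglyMeasurable) hδ.le h3
    have i4 := lint_to_int μ (V2.continuous.aestronglyMeasurable.sub hvm.aestronglyMeasurable) hδ.le h4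
    simp only [Pi.sub_apply] at i3 i4
    have hsa := Lop_selfadjoint μ B a ha.C1 ha.symm ha.div F2 hφs.two_of_infty hφc
    -- lower bound
    have lower : -(4 * W * δ) ≤ ∫ x, φ x * Lop B a F x ∂μ := by
      have hz : ∀ x, x ∉ K → φ x * Lop B a F x = 0 := fun x hx => by rw [image_eq_zero_of_notMem_tsupport hx, zero_mul]
      rw [← setIntegral_eq_integral_of_forall_compl_eq_zero hz]
      have hIntg : IntegrableOn (fun x => φ x * Lop B a F x) K μ := (hφs.continuous.mul (continuous_Lop B hac F2)).continuousOn.integrableOn_compact hK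
      have hl : IntegrableOn (fun x => -(2 * W) * |e1 x| + -(2 * W) * |e2 x|) K μ := (i1.1.const_mul _).add (i2.1.const_mul _)
      have := setIntegral_mono_on hl hIntg hK.measurableSet fun x hx => by
        have hk := FL x |e1 x| |e2 x| (abs_nonneg _) (abs_nonneg _) (by
          rw [UL]; have := hMM u hsu x hx; have := neg_abs_le (e1 x); linarith) (by
          rw [VL]; have := hMM v hsv x hx; have := neg_abs_le (e2 x); linarith)
        have hw := (le_abs_self _).trans (hW x)
        have h0 := hφ0 x
        have : φ x * (-(2 * |e1 x| + 2 * |e2 x|)) ≤ φ x * Lop B a F x := mul_le_mul_of_nonneg_left hk h0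
        have h00 : (0 : ℝ) ≤ 2 * |e1 x| + 2 * |e2 x| := by positivity
        nlinarith
      rw [integral_add (i1.1.const_mul _) (i2.1.const_mul _), integral_const_mul, integral_const_mul] at this
      nlinarith [i1.2, i2.2]
    have hmax : Integrable (fun x => max (u x) (v x)) μ := hu.sup hv
    have t1 : Integrable (fun x => F x * Lop B a φ x) μ := TT_integrable μ hac F2.continuous.locallyIntegrable hφs.two_of_infty hφc
    have t2 : Integrable (fun x => max (u x) (v x) * Lop B a φ x) μ := TT_integrable μ hac hmax.locallyIntegrable hφs.two_of_infty hφc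
    have upper : (∫ x, F x * Lop B a φ x ∂μ) - 2 * ∫ x, max (u x) (v x) * Lop B a φ x ∂μ ≤ M * (4 * δ + δ * μ.real K) := by
      rw [← integral_const_mul, ← integral_sub t1 (t2.const_mul 2)]
      have hz : ∀ x, x ∉ K → F x * Lop B a φ x - 2 * (max (u x) (v x) * Lop B a φ x) = 0 := fun x hx => by rw [Lop_eq_zero B hx]; ring
      rw [← setIntegral_eq_integral_of_forall_compl_eq_zero hz]
      have hcst : IntegrableOn (fun _ : V => δ) K μ := integrableOn_const hvK.ne
      have hr : IntegrableOn (fun x => M * (2 * |U x - u x| + 2 * |Vv x - v x| + δ)) K μ :=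
        (((i3.1.const_mul _).add (i4.1.const_mul _)).add hcst).const_mul _
      have := setIntegral_mono_on (t1.sub (t2.const_mul 2)).integrableOn hr hK.measurableSet fun x hx => by
        have hk := max_reg (U x) (Vv x) (u x) (v x) δ hδ.le
        have e : F x * Lop B a φ x - 2 * (max (u x) (v x) * Lop B a φ x) = (F x - 2 * max (u x) (v x)) * Lop B a φ x := by ring
        change F x * Lop B a φ x - 2 * (max (u x) (v x) * Lop B a φ x) ≤ _
        rw [e]
        refine (le_abs_self _).trans ?_
        rw [abs_mul, mul_comm]
        exact mul_le_mul (hM x) hk (abs_nonneg _) hM0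
      refine this.trans ?_
      rw [integral_const_mul]
      refine mul_le_mul_of_nonneg_left ?_ hM0
      have h34 : IntegrableOn (fun x => 2 * |U x - u x| + 2 * |Vv x - v x|) K μ := (i3.1.const_mul _).add (i4.1.const_mul _)
      rw [integral_add h34 hcst, integral_add (i3.1.const_mul _) (i4.1.const_mul _), integral_const_mul, integral_const_mul, setIntegral_const, smul_eq_mul]
      linarith [i3.2, i4.2]
    unfold TT
    rw [hsa] at upper
    have : c * δ = 4 * W * δ + M * (4 * δ + δ * μ.real K) := by rw [hc]; ring
    linarith
  by_contra hneg
  push Not at hneg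
  set t := TT μ B a (fun x => max (u x) (v x)) φ
  have := key (-t / (c + 1)) (div_pos (by linarith) (by linarith))
  have h2 : c * (-t / (c + 1)) ≤ -t := by
    rw [mul_div_assoc', div_le_iff₀ (by linarith)]; nlinarith
  linarith

lemma exists_localize {u : V → ℝ} {Ω K : Set V} (hu : LocallyIntegrableOn u Ω μ) (hK : IsCompact K) (hKΩ : K ⊆ Ω) :
    ∃ u' : V → ℝ, Measurable u' ∧ Integrable u' μ ∧ HasCompactSupport u' ∧ ∀ᵐ x ∂μ, x ∈ K → u' x = u x := by
  have hi : IntegrableOn u K μ := hu.integrableOn_compact_subset hKΩ hK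
  have hm := hi.1
  refine ⟨K.indicator (hm.mk u), hm.stronglyMeasurable_mk.measurable.indicator hK.measurableSet, ?_, ?_, ?_⟩
  · rw [integrable_indicator_iff hK.measurableSet]
    exact hi.congr hm.ae_eq_mk
  · exact HasCompactSupport.intro hK fun x hx => Set.indicator_of_notMem hx _
  · have := (ae_restrict_iff' hK.measurableSet).1 hm.ae_eq_mk
    filter_upwards [this] with x hx hxK
    rw [Set.indicator_of_mem hxK, hx hxK]

lemma TT_congr {a : ι → ι → V → ℝ} {u u' φ : V → ℝ} {K : Set V} (h : ∀ᵐ x ∂μ, x ∈ K → u' x = u x) (hφ : tsupport φ ⊆ K) :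
    TT μ B a u' φ = TT μ B a u φ := by
  unfold TT
  apply integral_congr_ae
  filter_upwards [h] with x hx
  by_cases hxK : x ∈ K
  · rw [hx hxK]
  · rw [Lop_eq_zero B (fun h => hxK (hφ h))]; simp

theorem max_loc {a : ι → ι → V → ℝ} (ha : IsCoef B a) {P Φ : V → V → ℝ} (hp : IsPtx μ B a P Φ) {u v : V → ℝ} 
    {Ω : Set V} (hΩ : IsOpen Ω) (hu : LocallyIntegrableOn u Ω μ) (hv : LocallyIntegrableOn v Ω μ) (hsu : IsSub μ B a Ω u) (hsv : IsSub μ B a Ω v) : IsSub μ B a Ω (fun x => max (u x) (v x)) := by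
  intro φ hφ hφ0
  obtain ⟨δ, hδ, hδΩ⟩ := IsCompact.exists_cthickening_subset_open hφ.2.1 hΩ hφ.2.2
  have hK : IsCompact (cthickening δ (tsupport φ)) := IsCompact.cthickening hφ.2.1
  obtain ⟨u', hum', hu', huc', hue⟩ := exists_localize μ hu hK hδΩ
  obtain ⟨v', hvm', hv', hvc', hve⟩ := exists_localize μ hv hK hδΩ
  have hsub : thickening δ (tsupport φ) ⊆ cthickening δ (tsupport φ) := thickening_subset_cthickening _ _
  have hmm := max_core μ ha hp hum' hu' huc' hvm' hv' hvc' isOpen_thickening (Ω := thickening δ (tsupport φ))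
    (fun ψ hψ hψ0 => by
      rw [TT_congr μ hue (hψ.2.2.trans hsub)]
      exact hsu ψ ⟨hψ.1, hψ.2.1, hψ.2.2.trans (hsub.trans hδΩ)⟩ hψ0)
    (fun ψ hψ hψ0 => by
      rw [TT_congr μ hve (hψ.2.2.trans hsub)]
      exact hsv ψ ⟨hψ.1, hψ.2.1, hψ.2.2.trans (hsub.trans hδΩ)⟩ hψ0)
    φ ⟨hφ.1, hφ.2.1, self_subset_thickening hδ _⟩ hφ0
  rwa [TT_congr μ (u := fun x => max (u x) (v x)) (K := cthickening δ (tsupport φ)) ?_ (self_subset_cthickening _)] at hmm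
  filter_upwards [hue, hve] with x h1 h2 hx
  rw [h1 hx, h2 hx]

end generic
end
end P11

section P12
open MeasureTheory Filter Topology Complex Metric
open scoped ContDiff

set_option linter.unusedSectionVars false

noncomputable section
section generic
variable {V : Type*} [NormedAddCommGroup V] [NormedSpace ℝ V] [FiniteDimensional ℝ V] [MeasurableSpace V] [BorelSpace V] (μ : Measure V) [μ.IsAddHaarMeasure]
variable {ι : Type*} [Fintype ι] {B : ι → V}


lemma exists_inv [DecidableEq ι] {a : ι → ι → V → ℝ} (ha : IsCoef B a) : ∃ g : ι → ι → V → ℝ, (∀ i j, ContDiff ℝ 1 (g i j)) ∧ (∀ i j x, g i j x = g j i x) ∧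
    (∀ i j x, ∑ k, a i k x * g k j x = if i = j then 1 else 0) ∧ ∀ (x : V) (ξ : ι → ℝ), ξ ≠ 0 → 0 < ∑ i, ∑ j, g i j x * ξ i * ξ j := by
  have hsum : ∀ (M : Matrix ι ι ℝ) (ξ : ι → ℝ), ξ ⬝ᵥ M.mulVec ξ = ∑ i, ∑ j, M i j * ξ i * ξ j := by
    intro M ξ
    simp only [dotProduct, Matrix.mulVec, Finset.mul_sum]
    exact Finset.sum_congr rfl fun i _ => Finset.sum_congr rfl fun j _ => by ring
  have hA : ∀ x, (Matrix.of fun i j => a i j x).PosDef := by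
    intro x
    rw [Matrix.posDef_iff_dotProduct_mulVec]
    refine ⟨?_, fun ξ hξ => ?_⟩
    · ext i j; simp [ha.symm j i x]
    · simp only [star_trivial]
      rw [hsum]; exact ha.pos x ξ hξ
  have hdet : ∀ M : V → Matrix ι ι ℝ, (∀ i j, ContDiff ℝ 1 fun x => M x i j) → ContDiff ℝ 1 fun x => (M x).det := by
    intro M hM
    simp only [Matrix.det_apply]
    refine ContDiff.sum fun σ _ => ContDiff.const_smul _ (contDiff_prod fun i _ => hM _ _)
  refine ⟨fun i j x => (Matrix.of fun i j => a i j x)⁻¹ i j, fun i j => ?_, fun i j x => ?_, fun i j x => ?_, fun x ξ hξ => ?_⟩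
  · have h1 := hdet (fun x => Matrix.of fun i j => a i j x) (fun i j => by simpa using ha.C1 i j)
    simp only [Matrix.inv_def, Ring.inverse_eq_inv', Matrix.smul_apply, smul_eq_mul, Matrix.adjugate_apply]
    refine (h1.inv fun x => (hA x).det_pos.ne').mul (hdet _ fun k l => ?_)
    simp only [Matrix.updateRow_apply]
    split_ifs
    · exact contDiff_const
    · simpa using ha.C1 k l
  · have := (hA x).inv.isHermitian
    have h2 := congrFun (congrFun this i) j
    simpa using h2.symm
  · have := Matrix.mul_nonsing_inv (Matrix.of fun i j => a i j x) (hA x).det_pos.ne'.isUnit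
    have h2 := congrFun (congrFun this i) j
    simpa [Matrix.mul_apply, Matrix.one_apply] using h2
  · have := (hA x).inv.dotProduct_mulVec_pos hξ
    simp only [star_trivial] at this
    rwa [hsum] at this

/-- C¹ dependence of an integral on a parameter, with locally uniform compact supports -/
lemma contDiff_param_integral {f : V → V → ℝ} (hf : ContDiff ℝ 1 (Function.uncurry f)) (hs : ∀ r, ∃ R : ℝ, ∀ x, ‖x‖ ≤ r → ∀ ζ, R < ‖ζ‖ → f x ζ = 0) :
    ContDiff ℝ 1 (fun x => ∫ ζ, f x ζ ∂μ) := by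
  rw [contDiff_iff_contDiffAt]
  intro x₀
  obtain ⟨R, hR⟩ := hs (‖x₀‖ + 1)
  have h1 := contDiffOn_convolution_right_with_param (n := (1 : ℕ)) (μ := μ) (f := fun _ : V => (1 : ℝ)) (ContinuousLinearMap.mul ℝ ℝ) (g := f) (s := ball (0 : V) (‖x₀‖ + 1)) (k := closedBall 0 R) isOpen_ball
    (isCompact_closedBall 0 R) (fun p x hp hx => hR p (by simpa using (mem_ball_zero_iff.1 hp).le) x (by simpa using hx)) (locallyIntegrable_const 1) (by exact_mod_cast hf.contDiffOn)
  have h2 : ContDiffAt ℝ 1 (fun q : V × V => (convolution (fun _ : V => (1 : ℝ)) (f q.1) (ContinuousLinearMap.mul ℝ ℝ) μ) q.2) (x₀, 0) := by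
    refine ContDiffOn.contDiffAt (by exact_mod_cast h1) ?_
    exact (isOpen_ball.prod isOpen_univ).mem_nhds ⟨by simp, trivial⟩
  have h3 := h2.comp x₀ (f := fun x : V => (x, (0 : V))) (by fun_prop)
  convert h3 using 1
  funext x
  simp only [Function.comp, convolution, ContinuousLinearMap.mul_apply', one_mul]
  exact (integral_sub_left_eq_self (f x) μ 0).symm

lemma sum_alg (a g : ι → ι → ℝ) (z : ι → ℝ) (w c d : ℝ) : ∑ i, ∑ j, a i j * (w * (c * (2 * z i) * (2 * z j) + d * (2 * g i j))) =
    w * (4 * c * ∑ i, ∑ j, a i j * (z i * z j) + 2 * d * ∑ i, ∑ j, a i j * g i j) := by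
  rw [Finset.mul_sum, Finset.mul_sum, ← Finset.sum_add_distrib, Finset.mul_sum]
  refine Finset.sum_congr rfl fun i _ => ?_
  rw [Finset.mul_sum, Finset.mul_sum, ← Finset.sum_add_distrib, Finset.mul_sum]
  exact Finset.sum_congr rfl fun j _ => by ring

section q
variable (b : Module.Basis ι ℝ V)

def cc (i : ι) : V →L[ℝ] ℝ := LinearMap.toContinuousLinearMap (b.coord i)

lemma cc_basis [DecidableEq ι] (i j : ι) : cc b i (b j) = if i = j then 1 else 0 := by
  simp [cc, Finsupp.single_apply, eq_comm]

def qq (g : ι → ι → V → ℝ) (x ζ : V) : ℝ := ∑ i, ∑ j, g i j x * cc b i ζ * cc b j ζ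

lemma qq_fderiv {g : ι → ι → V → ℝ} (hsym : ∀ i j x, g i j x = g j i x) (x ζ : V) (k : ι) : fderiv ℝ (qq b g x) ζ (b k) = 2 * ∑ j, g k j x * cc b j ζ := by
  classical
  have h : HasFDerivAt (qq b g x) (∑ i, ∑ j, ((g i j x * cc b i ζ) • cc b j + cc b j ζ • (g i j x • cc b i))) ζ := by
    unfold qq
    refine HasFDerivAt.fun_sum fun i _ => HasFDerivAt.fun_sum fun j _ => ?_
    exact ((cc b i).hasFDerivAt.const_mul (g i j x)).mul (cc b j).hasFDerivAt
  rw [h.fderiv]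
  simp only [ContinuousLinearMap.sum_apply, ContinuousLinearMap.add_apply, ContinuousLinearMap.smul_apply, smul_eq_mul, cc_basis, mul_ite, mul_one, mul_zero, Finset.sum_add_distrib, Finset.sum_ite_eq', Finset.mem_univ, if_true]
  rw [Finset.sum_comm (s := Finset.univ) (t := Finset.univ)]
  simp only [Finset.sum_ite_eq', Finset.mem_univ, if_true]
  rw [two_mul]
  congr 1
  · exact Finset.sum_congr rfl fun i _ => by rw [hsym]
  · exact Finset.sum_congr rfl fun i _ => by ring

lemma qq_smooth {g : ι → ι → V → ℝ} (x : V) : ContDiff ℝ ∞ (qq b g x) := by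
  unfold qq
  refine ContDiff.sum fun i _ => ContDiff.sum fun j _ => ?_
  exact (contDiff_const.mul (cc b i).contDiff).mul (cc b j).contDiff

lemma qq_C1 {g : ι → ι → V → ℝ} (hg : ∀ i j, ContDiff ℝ 1 (g i j)) : ContDiff ℝ 1 (Function.uncurry (qq b g)) := by
  have : Function.uncurry (qq b g) = fun p : V × V => ∑ i, ∑ j, g i j p.1 * cc b i p.2 * cc b j p.2 := by
    funext p; rfl
  rw [this]
  refine ContDiff.sum fun i _ => ContDiff.sum fun j _ => ?_
  exact (((hg i j).comp contDiff_fst).mul ((cc b i).contDiff.comp contDiff_snd)).mul ((cc b j).contDiff.comp contDiff_snd)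

lemma qq_D2 {g : ι → ι → V → ℝ} (hsym : ∀ i j x, g i j x = g j i x) (x ζ : V) (k l : ι) : D2 (qq b g x) ζ (b k) (b l) = 2 * g k l x := by
  classical
  rw [← fderiv_fderiv_apply (qq_smooth b x).two_of_infty]
  simp only [qq_fderiv b hsym]
  have h : HasFDerivAt (fun ζ => 2 * ∑ j, g l j x * cc b j ζ) ((2 : ℝ) • ∑ j, g l j x • cc b j) ζ :=
    (HasFDerivAt.fun_sum fun j _ => (cc b j).hasFDerivAt.const_mul (g l j x)).const_mul 2
  rw [h.fderiv]
  simp [cc_basis, ContinuousLinearMap.sum_apply, hsym l k]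

lemma qq_smul {g : ι → ι → V → ℝ} (x ζ : V) (c : ℝ) : qq b g x (c • ζ) = c ^ 2 * qq b g x ζ := by
  simp only [qq, map_smul, smul_eq_mul, Finset.mul_sum]
  exact Finset.sum_congr rfl fun i _ => Finset.sum_congr rfl fun j _ => by ring

lemma qq_pos {g : ι → ι → V → ℝ} (hpos : ∀ (x : V) (ξ : ι → ℝ), ξ ≠ 0 → 0 < ∑ i, ∑ j, g i j x * ξ i * ξ j) (x ζ : V) (h : ζ ≠ 0) : 0 < qq b g x ζ := by
  refine hpos x (fun i => cc b i ζ) fun h0 => h ?_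
  apply b.repr.injective
  ext i
  simpa [cc] using congrFun h0 i

lemma qq_nonneg {g : ι → ι → V → ℝ} (hpos : ∀ (x : V) (ξ : ι → ℝ), ξ ≠ 0 → 0 < ∑ i, ∑ j, g i j x * ξ i * ξ j) (x ζ : V) : 0 ≤ qq b g x ζ := by
  by_cases h : ζ = 0
  · simp [h, qq]
  · exact (qq_pos b hpos x ζ h).le

lemma qq_far {g : ι → ι → V → ℝ} (hg : ∀ i j, ContDiff ℝ 1 (g i j)) (hpos : ∀ (x : V) (ξ : ι → ℝ), ξ ≠ 0 → 0 < ∑ i, ∑ j, g i j x * ξ i * ξ j) (r : ℝ) :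
    ∃ R, 0 < R ∧ ∀ x : V, ‖x‖ ≤ r → ∀ ζ : V, R < ‖ζ‖ → 1 ≤ qq b g x ζ := by
  have hc : IsCompact (closedBall (0 : V) r ×ˢ sphere (0 : V) 1) := (isCompact_closedBall _ _).prod (isCompact_sphere _ _)
  obtain ⟨l, hl, hl2⟩ := hc.exists_forall_le' (qq_C1 b hg).continuous.continuousOn (a := 0) (by
    rintro ⟨x, ζ⟩ ⟨hx, hζ⟩
    exact qq_pos b hpos x ζ (by rintro rfl; simp at hζ))
  refine ⟨1 + 1 / l, by positivity, fun x hx ζ hζ => ?_⟩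
  have hl1 : 1 / l * l = 1 := by field_simp
  have hpl : 0 < 1 / l := by positivity
  have hn : 0 < ‖ζ‖ := by linarith
  have h1 := hl2 (x, ‖ζ‖⁻¹ • ζ) ⟨by simpa using hx, by simp [norm_smul, hn.ne']⟩
  simp only [Function.uncurry] at h1
  rw [qq_smul, inv_pow, inv_mul_eq_div, le_div_iff₀ (by positivity)] at h1
  refine le_trans ?_ h1
  nlinarith [mul_lt_mul_of_pos_left hζ hl]

theorem exists_ptx {a : ι → ι → V → ℝ} (ha : IsCoef b a) {m : ℕ} (hm : 1 ≤ m) (hcard : Fintype.card ι = 2 * m) : ∃ P Φ, IsPtx μ b a P Φ := by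
  classical
  obtain ⟨g, hg, hsym, hinv, hpos⟩ := exists_inv ha
  obtain ⟨F, φ, hF, hφ, hF0, hF1, hφ0, hφ1, hφn, hode⟩ := exists_profile m hm
  set q := qq b g with hq
  have hqC := qq_C1 b hg
  have hφ1' : ContDiff ℝ 1 φ := hφ.of_le (by norm_cast)
  have hF1' : ContDiff ℝ 1 F := hF.of_le (by norm_cast)
  have hfr : Module.finrank ℝ V = 2 * m := by rw [Module.finrank_eq_card_basis b, hcard]
  have hfar := qq_far b hg hpos
  have hκC : ContDiff ℝ 1 (fun x => ∫ ζ, φ (q x ζ) ∂μ) := by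
    refine contDiff_param_integral μ (f := fun x ζ => φ (q x ζ)) (hφ1'.comp hqC) fun r => ?_
    obtain ⟨R, _, hR⟩ := hfar r
    exact ⟨R, fun x hx ζ hζ => hφ1 _ (hR x hx ζ hζ)⟩
  have hcs : ∀ x, HasCompactSupport fun ζ => φ (q x ζ) := by
    intro x
    obtain ⟨R, _, hR⟩ := hfar ‖x‖
    exact HasCompactSupport.intro (isCompact_closedBall (0 : V) R) fun ζ hζ => hφ1 _ (hR x le_rfl ζ (by simpa using hζ))
  have hκ : ∀ x, 0 < ∫ ζ, φ (q x ζ) ∂μ := by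
    intro x
    refine Continuous.integral_pos_of_hasCompactSupport_nonneg_nonzero (x := (0 : V)) (hφ.continuous.comp (qq_smooth b x).continuous) (hcs x) (fun ζ => hφ0 _ (qq_nonneg b hpos x ζ)) ?_
    simpa [hq, qq] using hφn
  set w : V → ℝ := fun x => (∫ ζ, φ (q x ζ) ∂μ)⁻¹ with hw
  have hwC : ContDiff ℝ 1 w := hκC.inv fun x => (hκ x).ne'
  have hPs : ∀ x, ContDiff ℝ ∞ fun ζ => F (q x ζ) := fun x => hF.comp (qq_smooth b x)
  have hD : ∀ x ζ i j, D2 (fun ζ => w x * F (q x ζ)) ζ (b i) (b j) = w x * (deriv (deriv F) (q x ζ) * (2 * ∑ k, g i k x * cc b k ζ) * (2 * ∑ k, g j k x * cc b k ζ) + deriv F (q x ζ) * (2 * g i j x)) := by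
    intro x ζ i j
    rw [D2_const_mul (hPs x).two_of_infty, D2_comp_real (hF.of_le (by norm_cast)) (qq_smooth b x).two_of_infty, qq_fderiv b hsym, qq_fderiv b hsym, qq_D2 b hsym]
  have hdF : ContDiff ℝ ∞ (deriv F) := (contDiff_infty_iff_deriv.1 hF).2
  have hddF : ContDiff ℝ ∞ (deriv (deriv F)) := (contDiff_infty_iff_deriv.1 hdF).2
  refine ⟨fun x ζ => w x * F (q x ζ), fun x ζ => w x * φ (q x ζ), ?_, ?_, ?_, ?_, ?_, ?_, ?_⟩
  · exact fun x => contDiff_const.mul (hPs x)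
  · exact (hwC.comp contDiff_fst).mul (hF1'.comp hqC)
  · exact (hwC.comp contDiff_fst).mul (hφ1'.comp hqC)
  · intro i j
    simp only [hD]
    have hl : ∀ i, ContDiff ℝ 1 (fun p : V × V => 2 * ∑ k, g i k p.1 * cc b k p.2) := fun i =>
      contDiff_const.mul (ContDiff.sum fun k _ => ((hg i k).comp contDiff_fst).mul ((cc b k).contDiff.comp contDiff_snd))
    have h1 : ContDiff ℝ 1 fun p : V × V => deriv F (q p.1 p.2) := (hdF.of_le (by norm_cast)).comp hqC
    have h2 : ContDiff ℝ 1 fun p : V × V => deriv (deriv F) (q p.1 p.2) := (hddF.of_le (by norm_cast)).comp hqC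
    exact (hwC.comp contDiff_fst).mul (((h2.mul (hl i)).mul (hl j)).add (h1.mul (contDiff_const.mul ((hg i j).comp contDiff_fst))))
  · intro r
    obtain ⟨R, hR0, hR⟩ := hfar r
    exact ⟨R, hR0, fun x hx ζ hζ => ⟨mul_eq_zero_of_right _ (hF1 _ (hR x hx ζ hζ)), mul_eq_zero_of_right _ (hφ1 _ (hR x hx ζ hζ))⟩⟩
  · intro x
    rw [integral_const_mul]
    exact inv_mul_cancel₀ (hκ x).ne'
  · intro x ζ
    simp only [hD]
    have h2 : q x ((2 : ℝ) • ζ) = 4 * q x ζ := by rw [hq, qq_smul]; norm_num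
    rw [h2, hfr, pow_mul]
    have hA : ∑ i, ∑ j, a i j x * g i j x = 2 * (m : ℝ) := by
      have : ∀ i, ∑ j, a i j x * g i j x = 1 := fun i => by
        have := hinv i i x
        rw [if_pos rfl] at this
        rw [← this]; exact Finset.sum_congr rfl fun j _ => by rw [hsym]
      simp only [this]; simp [hcard]
    have hB : ∑ i, ∑ j, a i j x * ((∑ k, g i k x * cc b k ζ) * (∑ k, g j k x * cc b k ζ)) = q x ζ := by
      have h3 : ∀ i, ∑ j, a i j x * (∑ k, g j k x * cc b k ζ) = cc b i ζ := by
        intro i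
        simp only [Finset.mul_sum, ← mul_assoc]
        rw [Finset.sum_comm]
        simp only [← Finset.sum_mul, hinv]
        simp
      have h4 : ∀ i, ∑ j, a i j x * ((∑ k, g i k x * cc b k ζ) * (∑ k, g j k x * cc b k ζ)) = (∑ k, g i k x * cc b k ζ) * cc b i ζ := by
        intro i
        conv_rhs => rw [← h3 i, Finset.mul_sum]
        exact Finset.sum_congr rfl fun j _ => by ring
      rw [Finset.sum_congr rfl fun i _ => h4 i]
      simp only [hq, qq, Finset.sum_mul]
      exact Finset.sum_congr rfl fun i _ => Finset.sum_congr rfl fun j _ => by ring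
    have hode' := hode (q x ζ)
    have e : ∑ i, ∑ j, a i j x * (w x * (deriv (deriv F) (q x ζ) * (2 * ∑ k, g i k x * cc b k ζ) * (2 * ∑ k, g j k x * cc b k ζ) + deriv F (q x ζ) * (2 * g i j x)))
        = w x * (4 * deriv (deriv F) (q x ζ) * ∑ i, ∑ j, a i j x * ((∑ k, g i k x * cc b k ζ) * (∑ k, g j k x * cc b k ζ)) + 2 * deriv F (q x ζ) * ∑ i, ∑ j, a i j x * g i j x) := by
      exact sum_alg (fun i j => a i j x) (fun i j => g i j x) (fun i => ∑ k, g i k x * cc b k ζ) _ _ _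
    rw [e, hA, hB]
    norm_num
    linear_combination (w x) * hode'
end q
end generic
end
end P12

section P13
open MeasureTheory Filter Topology Complex Metric
open scoped ContDiff

set_option linter.unusedSectionVars false

noncomputable section
section alpha
variable {n : ℕ}

abbrev II (n : ℕ) := (_ : Fin n) × Fin 2

def bb (n : ℕ) : Module.Basis (II n) ℝ (Cn n) := Pi.basis (fun _ : Fin n => Complex.basisOneI)

lemma bb_zero (j : Fin n) : bb n ⟨j, 0⟩ = Pi.single j 1 := by
  simp [bb, Pi.basis_apply]

lemma bb_one (j : Fin n) : bb n ⟨j, 1⟩ = Pi.single j Complex.I := by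
  simp [bb, Pi.basis_apply]

lemma card_II : Fintype.card (II n) = 2 * n := by simp [II, mul_comm]

def aR (A : AlphaForm n) (i j : II n) (z : Cn n) : ℝ :=
  if i.2 = 0 then (if j.2 = 0 then (A.coeff i.1 j.1 z).re / 4 else -(A.coeff i.1 j.1 z).im / 4)
  else (if j.2 = 0 then (A.coeff i.1 j.1 z).im / 4 else (A.coeff i.1 j.1 z).re / 4)

lemma aR00 (A : AlphaForm n) (j k : Fin n) : aR A ⟨j, 0⟩ ⟨k, 0⟩ = fun z => (A.coeff j k z).re / 4 := rfl
lemma aR01 (A : AlphaForm n) (j k : Fin n) : aR A ⟨j, 0⟩ ⟨k, 1⟩ = fun z => -(A.coeff j k z).im / 4 := rfl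
lemma aR10 (A : AlphaForm n) (j k : Fin n) : aR A ⟨j, 1⟩ ⟨k, 0⟩ = fun z => (A.coeff j k z).im / 4 := rfl
lemma aR11 (A : AlphaForm n) (j k : Fin n) : aR A ⟨j, 1⟩ ⟨k, 1⟩ = fun z => (A.coeff j k z).re / 4 := rfl

lemma fderiv_re {f : Cn n → ℂ} (hf : ContDiff ℝ 1 f) (z v : Cn n) : fderiv ℝ (fun w => (f w).re) z v = (fderiv ℝ f z v).re := by
  have h := Complex.reCLM.hasFDerivAt.comp z (hf.differentiable one_ne_zero z).hasFDerivAt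
  have h2 : fderiv ℝ (fun w => (f w).re) z = _ := h.fderiv
  rw [h2]; rfl

lemma fderiv_im {f : Cn n → ℂ} (hf : ContDiff ℝ 1 f) (z v : Cn n) : fderiv ℝ (fun w => (f w).im) z v = (fderiv ℝ f z v).im := by
  have h := Complex.imCLM.hasFDerivAt.comp z (hf.differentiable one_ne_zero z).hasFDerivAt
  have h2 : fderiv ℝ (fun w => (f w).im) z = _ := h.fderiv
  rw [h2]; rfl

lemma fderiv_ofReal {f : Cn n → ℝ} (hf : ContDiff ℝ 1 f) (z v : Cn n) : fderiv ℝ (fun w => (f w : ℂ)) z v = (fderiv ℝ f z v : ℝ) := by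
  have h := Complex.ofRealCLM.hasFDerivAt.comp z (hf.differentiable one_ne_zero z).hasFDerivAt
  have h2 : fderiv ℝ (fun w => (f w : ℂ)) z = _ := h.fderiv
  rw [h2]; rfl

lemma C1_re {f : Cn n → ℂ} (hf : ContDiff ℝ 1 f) : ContDiff ℝ 1 fun w => (f w).re := Complex.reCLM.contDiff.comp hf
lemma C1_im {f : Cn n → ℂ} (hf : ContDiff ℝ 1 f) : ContDiff ℝ 1 fun w => (f w).im := Complex.imCLM.contDiff.comp hf

lemma fderiv_div4 {f : Cn n → ℝ} (hf : ContDiff ℝ 1 f) (z v : Cn n) : fderiv ℝ (fun w => f w / 4) z v = fderiv ℝ f z v / 4 := by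
  have h := ((hf.differentiable one_ne_zero z).hasFDerivAt.const_mul (1 / 4))
  have e : (fun w => f w / 4) = fun w => 1 / 4 * f w := by funext w; ring
  rw [e, h.fderiv]; simp; ring

lemma fderiv_neg' {f : Cn n → ℝ} (z v : Cn n) : fderiv ℝ (fun w => - f w) z v = - fderiv ℝ f z v := by
  rw [fderiv_fun_neg]; rfl

lemma sum_II (f : II n → ℝ) : ∑ i, f i = ∑ j, (f ⟨j, 0⟩ + f ⟨j, 1⟩) := by
  rw [Fintype.sum_sigma]; simp [Fin.sum_univ_two]

lemma aR_coef (A : AlphaForm n) : IsCoef (bb n) (aR A) := by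
  refine ⟨fun i j => ?_, fun i j x => ?_, fun j x => ?_, fun x ξ hξ => ?_⟩
  · have h1 := C1_re (A.contDiff i.1 j.1)
    have h2 := C1_im (A.contDiff i.1 j.1)
    unfold aR
    split_ifs <;> fun_prop
  · have h := A.hermitian i.1 j.1 x
    have hr := congrArg Complex.re h
    have hi := congrArg Complex.im h
    simp only [Complex.conj_re, Complex.conj_im] at hr hi
    unfold aR
    split_ifs <;> simp [hr, hi]
  · obtain ⟨k, c⟩ := j
    have hcl := A.closed k x
    have hr := congrArg Complex.re hcl
    have hi := congrArg Complex.im hcl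
    simp only [wdz, Complex.re_sum, Complex.im_sum, Complex.zero_re, Complex.zero_im] at hr hi
    rw [sum_II]
    fin_cases c
    · simp only [aR00, aR10, bb_zero, bb_one, Fin.zero_eta, Fin.isValue, fderiv_div4 (C1_re (A.contDiff _ _)), fderiv_div4 (C1_im (A.contDiff _ _)),
        fderiv_re (A.contDiff _ _), fderiv_im (A.contDiff _ _)]
      have : (0 : ℝ) = (1 / 2) * 0 := by norm_num
      rw [this, ← hr, Finset.mul_sum]
      refine Finset.sum_congr rfl fun j _ => ?_
      simp; ring
    · simp only [aR01, aR11, bb_zero, bb_one, Fin.mk_one, Fin.isValue, fderiv_div4 (C1_re (A.contDiff _ _)), fderiv_div4 (C1_im (A.contDiff _ _)).neg,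
        fderiv_re (A.contDiff _ _), fderiv_im (A.contDiff _ _), fderiv_neg']
      have : (0 : ℝ) = (-1 / 2) * 0 := by norm_num
      rw [this, ← hi, Finset.mul_sum]
      refine Finset.sum_congr rfl fun j _ => ?_
      simp; ring
  · have hp := A.strictlyPositive x (fun j => (ξ ⟨j, 0⟩ : ℂ) - Complex.I * ξ ⟨j, 1⟩) (by
      intro h
      apply hξ
      funext ⟨j, c⟩
      have := congrFun h j
      have hr := congrArg Complex.re this
      have hi := congrArg Complex.im this
      simp at hr hi
      fin_cases c
      · simpa using hr
      · simpa using hi)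
    have e : ∑ i, ∑ j, aR A i j x * ξ i * ξ j = (1 / 4) * (∑ j, ∑ k, A.coeff j k x * ((ξ ⟨j, 0⟩ : ℂ) - Complex.I * ξ ⟨j, 1⟩) * starRingEnd ℂ ((ξ ⟨k, 0⟩ : ℂ) - Complex.I * ξ ⟨k, 1⟩)).re := by
      rw [sum_II, Complex.re_sum, Finset.mul_sum]
      refine Finset.sum_congr rfl fun j _ => ?_
      rw [sum_II, sum_II, ← Finset.sum_add_distrib, Complex.re_sum, Finset.mul_sum]
      refine Finset.sum_congr rfl fun k _ => ?_
      simp [aR]; ring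
    rw [e]; linarith

lemma alphaOpR_eq (A : AlphaForm n) {χ : Cn n → ℝ} (hχ : ContDiff ℝ 2 χ) (z : Cn n) : alphaOpR A χ z = Lop (bb n) (aR A) χ z := by
  have h1 : ∀ j, wdz j (fun w => (χ w : ℂ)) = fun z => ((fderiv ℝ χ z (Pi.single j 1) : ℝ) - Complex.I * (fderiv ℝ χ z (Pi.single j Complex.I) : ℝ)) / 2 := by
    intro j; funext z
    simp only [wdz, fderiv_ofReal (hχ.of_le one_le_two)]
  have h2 : ∀ j z v, fderiv ℝ (wdz j (fun w => (χ w : ℂ))) z v = ((D2 χ z v (Pi.single j 1) : ℝ) - Complex.I * (D2 χ z v (Pi.single j Complex.I) : ℝ)) / 2 := by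
    intro j z v
    have hd : ∀ v, HasFDerivAt (fun z => ((fderiv ℝ χ z v : ℝ) : ℂ)) _ z := fun v =>
      Complex.ofRealCLM.hasFDerivAt.comp z ((contDiff_fderiv_apply' hχ (m := 1) (by norm_num) v).differentiable one_ne_zero z).hasFDerivAt
    have := ((hd (Pi.single j 1)).sub ((hd (Pi.single j Complex.I)).const_mul Complex.I)).mul_const ((1 : ℂ) / 2)
    rw [h1]
    have e : (fun z => (((fderiv ℝ χ z (Pi.single j 1) : ℝ) : ℂ) - Complex.I * (fderiv ℝ χ z (Pi.single j Complex.I) : ℝ)) / 2) = fun z => (((fderiv ℝ χ z (Pi.single j 1) : ℝ) : ℂ) - Complex.I * (fderiv ℝ χ z (Pi.single j Complex.I) : ℝ)) * ((1 : ℂ) / 2) := by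
      funext z; ring
    have h3 : fderiv ℝ (fun z => (((fderiv ℝ χ z (Pi.single j 1) : ℝ) : ℂ) - Complex.I * (fderiv ℝ χ z (Pi.single j Complex.I) : ℝ)) * ((1 : ℂ) / 2)) z = _ := this.fderiv
    rw [e, h3, ← fderiv_fderiv_apply hχ, ← fderiv_fderiv_apply hχ]
    simp; ring
  unfold alphaOpR alphaOp Lop
  rw [sum_II, Complex.re_sum]
  refine Finset.sum_congr rfl fun j _ => ?_
  rw [sum_II, sum_II, ← Finset.sum_add_distrib, Complex.re_sum]
  refine Finset.sum_congr rfl fun k _ => ?_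
  simp only [wdzbar, h2, bb_zero, bb_one, aR, D2_symm hχ z (Pi.single k _) (Pi.single j _)]
  simp; ring

/-- α-subharmonic positivity in terms of `IsSub` -/
lemma setInt_eq (A : AlphaForm n) {D : Set (Cn n)} {u χ : Cn n → ℝ} (hχ : IsTest D χ) :
    ∫ z in D, u z * alphaOpR A χ z = TT volume (bb n) (aR A) u χ := by
  unfold TT
  rw [setIntegral_eq_integral_of_forall_compl_eq_zero]
  · simp only [alphaOpR_eq A hχ.1.two_of_infty]
  · intro z hz
    rw [alphaOpR_eq A hχ.1.two_of_infty, Lop_eq_zero _ (fun h => hz (hχ.2.2 h)), mul_zero]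

theorem alpha_max (A : AlphaForm n) {D : Set (Cn n)} (hD : IsOpen D) {u v : Cn n → ℝ} (hu : LocallyIntegrableOn u D volume) (hv : LocallyIntegrableOn v D volume)
    (hsu : IsSub volume (bb n) (aR A) D u) (hsv : IsSub volume (bb n) (aR A) D v) : IsSub volume (bb n) (aR A) D (fun z => max (u z) (v z)) := by
  rcases Nat.eq_zero_or_pos n with rfl | hn
  · intro φ _ _
    simp [TT, Lop]
  · obtain ⟨P, Φ, hp⟩ := exists_ptx volume (bb n) (aR_coef A) (m := n) hn card_II
    exact max_loc volume (aR_coef A) hp hD hu hv hsu hsv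

end alpha
end
end P13

section P14
open MeasureTheory Filter Topology Complex Metric
open scoped ContDiff

set_option linter.unusedSectionVars false

noncomputable section
section main
variable {n : ℕ}

/-- the working (real-valued) description of α-subharmonicity on an open set -/
structure SubR (A : AlphaForm n) (D : Set (Cn n)) (u : Cn n → ℝ) : Prop where
  usc : ∀ z ∈ D, ∀ c, u z < c → ∀ᶠ w in 𝓝 z, u w < c
  strong : ∀ z ∈ D, ∀ S : Set (Cn n), (∃ N ∈ 𝓝 z, volume (N \ S) = 0) → ∀ c, c < u z → ∃ᶠ w in 𝓝[S] z, c < u w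
  loc : LocallyIntegrableOn u D volume
  sub : IsSub volume (bb n) (aR A) D u

lemma subR_iff {A : AlphaForm n} {D : Set (Cn n)} (hD : IsOpen D) {u : Cn n → ℝ} : IsAlphaSubharmonic A D u ↔ SubR A D u := by
  constructor
  · rintro ⟨-, h2, h3, h4, h5⟩
    simp only [EReal.toReal_coe] at h4 h5
    refine ⟨fun z hz c hc => ?_, fun z hz S hS c hc => ?_, h4, fun φ hφ hφ0 => ?_⟩
    · have := h2 z hz (c : EReal) (EReal.coe_lt_coe_iff.2 hc)
      rw [hD.nhdsWithin_eq hz] at this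
      filter_upwards [this] with w hw
      exact EReal.coe_lt_coe_iff.1 hw
    · have h := h3 z hz S hS
      have hc' : (c : EReal) < limsup (fun z => (u z : EReal)) (𝓝[S] z) := by rw [h]; exact EReal.coe_lt_coe_iff.2 hc
      refine (frequently_lt_of_lt_limsup (by isBoundedDefault) hc').mono fun w hw => ?_
      exact EReal.coe_lt_coe_iff.1 hw
    · rw [← setInt_eq A hφ]
      exact h5 φ hφ.1 hφ.2.1 hφ.2.2 hφ0
  · rintro ⟨h2, h3, h4, h5⟩
    refine ⟨fun z _ => EReal.coe_ne_top _, fun z hz y hy => ?_, fun z hz S hS => ?_, by simpa using h4, fun φ a b c d => ?_⟩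
    · obtain ⟨c, hc1, hc2⟩ := EReal.lt_iff_exists_real_btwn.1 hy
      rw [hD.nhdsWithin_eq hz]
      filter_upwards [h2 z hz c (EReal.coe_lt_coe_iff.1 hc1)] with w hw
      exact lt_trans (EReal.coe_lt_coe_iff.2 hw) hc2
    · apply le_antisymm
      · refine le_of_forall_gt_imp_ge_of_dense fun y hy => ?_
        obtain ⟨c, hc1, hc2⟩ := EReal.lt_iff_exists_real_btwn.1 hy
        refine le_trans (limsup_le_of_le (by isBoundedDefault) (a := (c : EReal)) ?_) hc2.le
        filter_upwards [nhdsWithin_le_nhds (h2 z hz c (EReal.coe_lt_coe_iff.1 hc1))] with w hw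
        exact (EReal.coe_lt_coe_iff.2 hw).le
      · refine le_of_forall_lt_imp_le_of_dense fun y hy => ?_
        obtain ⟨c, hc1, hc2⟩ := EReal.lt_iff_exists_real_btwn.1 hy
        refine le_trans hc1.le (le_limsup_of_frequently_le ?_ (by isBoundedDefault))
        refine (h3 z hz S hS c (EReal.coe_lt_coe_iff.1 hc2)).mono fun w hw => ?_
        exact (EReal.coe_lt_coe_iff.2 hw).le
    · have := h5 φ ⟨a, b, c⟩ d
      rw [← setInt_eq A ⟨a, b, c⟩] at this
      simpa using this

lemma SubR.mono {A : AlphaForm n} {D D' : Set (Cn n)} {u : Cn n → ℝ} (h : SubR A D u) (hD : D' ⊆ D) : SubR A D' u :=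
  ⟨fun z hz => h.usc z (hD hz), fun z hz => h.strong z (hD hz), h.loc.mono_set hD,
    fun φ hφ h0 => h.sub φ ⟨hφ.1, hφ.2.1, hφ.2.2.trans hD⟩ h0⟩

lemma SubR.const_mul {A : AlphaForm n} {D : Set (Cn n)} {u : Cn n → ℝ} (h : SubR A D u) {C : ℝ} (hC : 0 < C) : SubR A D (fun z => C * u z) := by
  refine ⟨fun z hz c hc => ?_, fun z hz S hS c hc => ?_, ?_, fun φ hφ h0 => ?_⟩
  · have := h.usc z hz (c / C) (by rw [lt_div_iff₀ hC]; linarith)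
    filter_upwards [this] with w hw
    rw [lt_div_iff₀ hC] at hw; linarith
  · refine (h.strong z hz S hS (c / C) (by rw [div_lt_iff₀ hC]; linarith)).mono fun w hw => ?_
    rw [div_lt_iff₀ hC] at hw; linarith
  · intro z hz
    obtain ⟨s, hs, hi⟩ := h.loc z hz
    exact ⟨s, hs, Integrable.const_mul hi C⟩
  · have := h.sub φ hφ h0
    unfold TT at this ⊢
    simp only [mul_assoc]
    rw [integral_const_mul]
    positivity

lemma TT_integrable_on (A : AlphaForm n) {D : Set (Cn n)} {u φ : Cn n → ℝ} (hu : LocallyIntegrableOn u D volume) (hφ : IsTest D φ) :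
    Integrable (fun z => u z * Lop (bb n) (aR A) φ z) := by
  obtain ⟨u', _, h2, _, h4⟩ := exists_localize volume hu hφ.2.1 hφ.2.2
  have hi := TT_integrable volume (B := bb n) (a := aR A) (fun i j => ((aR_coef A).C1 i j).continuous) h2.locallyIntegrable hφ.1.two_of_infty hφ.2.1
  refine hi.congr ?_
  filter_upwards [h4] with z hz
  by_cases hzK : z ∈ tsupport φ
  · rw [hz hzK]
  · rw [Lop_eq_zero _ hzK]; simp

lemma SubR.sub_const {A : AlphaForm n} {D : Set (Cn n)} {u : Cn n → ℝ} (h : SubR A D u) (ε : ℝ) : SubR A D (fun z => u z - ε) := by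
  refine ⟨fun z hz c hc => ?_, fun z hz S hS c hc => ?_, ?_, fun φ hφ h0 => ?_⟩
  · filter_upwards [h.usc z hz (c + ε) (by linarith)] with w hw
    linarith
  · refine (h.strong z hz S hS (c + ε) (by linarith)).mono fun w hw => by linarith
  · exact h.loc.sub ((locallyIntegrable_const ε).locallyIntegrableOn D)
  · have := h.sub φ hφ h0
    have hL := integral_Lop_eq_zero volume (bb n) (aR A) (aR_coef A).C1 (aR_coef A).div hφ.1.two_of_infty hφ.2.1
    have i1 := TT_integrable_on A h.loc hφ
    have i2 := TT_integrable_on A (u := fun _ => ε) ((locallyIntegrable_const ε).locallyIntegrableOn D) hφ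
    unfold TT at this ⊢
    simp only [sub_mul]
    rw [integral_sub i1 i2, integral_const_mul, hL]
    simpa using this

lemma SubR.max {A : AlphaForm n} {D : Set (Cn n)} (hD : IsOpen D) {u v : Cn n → ℝ} (h : SubR A D u) (h' : SubR A D v) : SubR A D (fun z => max (u z) (v z)) := by
  refine ⟨fun z hz c hc => ?_, fun z hz S hS c hc => ?_, ?_, alpha_max A hD h.loc h'.loc h.sub h'.sub⟩
  · rw [max_lt_iff] at hc
    filter_upwards [h.usc z hz c hc.1, h'.usc z hz c hc.2] with w h1 h2
    exact max_lt h1 h2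
  · rcases lt_max_iff.1 hc with hc | hc
    · exact (h.strong z hz S hS c hc).mono fun w hw => lt_max_of_lt_left hw
    · exact (h'.strong z hz S hS c hc).mono fun w hw => lt_max_of_lt_right hw
  · intro z hz
    obtain ⟨s, hs, hi⟩ := h.loc z hz
    obtain ⟨t, ht, hi'⟩ := h'.loc z hz
    exact ⟨s ∩ t, inter_mem hs ht, Integrable.sup (hi.mono_set Set.inter_subset_left) (hi'.mono_set Set.inter_subset_right)⟩

lemma SubR.congr {A : AlphaForm n} {D : Set (Cn n)} (hD : IsOpen D) {u v : Cn n → ℝ} (h : SubR A D u) (huv : ∀ z ∈ D, v z = u z) : SubR A D v := by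
  refine ⟨fun z hz c hc => ?_, fun z hz S hS c hc => ?_, ?_, fun φ hφ h0 => ?_⟩
  · rw [huv z hz] at hc
    filter_upwards [h.usc z hz c hc, hD.mem_nhds hz] with w h1 h2
    rwa [huv w h2]
  · rw [huv z hz] at hc
    refine ((h.strong z hz S hS c hc).and_eventually (nhdsWithin_le_nhds (hD.mem_nhds hz))).mono fun w hw => ?_
    rw [huv w hw.2]; exact hw.1
  · intro z hz
    obtain ⟨s, hs, hi⟩ := h.loc z hz
    refine ⟨interior D ∩ s, inter_mem (nhdsWithin_le_nhds (isOpen_interior.mem_nhds (by rwa [hD.interior_eq]))) hs, ?_⟩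
    rw [hD.interior_eq]
    have := hi.mono_set (Set.inter_subset_right (s := D))
    refine Integrable.congr this ?_
    have hae : ∀ᵐ x ∂(volume.restrict s).restrict D, x ∈ D := ae_restrict_mem hD.measurableSet
    rw [Measure.restrict_restrict hD.measurableSet] at hae
    filter_upwards [hae] with x hx
    exact (huv x hx).symm
  · rw [TT_congr volume (K := D) (Eventually.of_forall huv) hφ.2.2]
    exact h.sub φ hφ h0

lemma SubR.union {A : AlphaForm n} {D D' : Set (Cn n)} (hD : IsOpen D) (hD' : IsOpen D') {u : Cn n → ℝ} (h : SubR A D u) (h' : SubR A D' u) : SubR A (D ∪ D') u := by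
  have hloc : LocallyIntegrableOn u (D ∪ D') volume := by
    intro z hz
    rw [(hD.union hD').nhdsWithin_eq hz]
    rcases hz with hz | hz
    · have := h.loc z hz; rwa [hD.nhdsWithin_eq hz] at this
    · have := h'.loc z hz; rwa [hD'.nhdsWithin_eq hz] at this
  refine ⟨?_, ?_, hloc, fun φ hφ h0 => ?_⟩
  · rintro z (hz | hz)
    exacts [h.usc z hz, h'.usc z hz]
  · rintro z (hz | hz)
    exacts [h.strong z hz, h'.strong z hz]
  · have hK : IsCompact (tsupport φ \ D') := IsCompact.diff hφ.2.1 hD'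
    obtain ⟨χ, c1, c2, c3, c4, c5, δ, hδ, c6⟩ := exists_cutoff hK hD (fun z hz => (hφ.2.2 hz.1).resolve_right hz.2)
    have t1 : IsTest D (fun z => χ z * φ z) := ⟨c1.mul hφ.1, c2.mul_right, (tsupport_mul_subset_left).trans c3⟩
    have t2 : IsTest D' (fun z => (1 - χ z) * φ z) := by
      refine ⟨(contDiff_const.sub c1).mul hφ.1, HasCompactSupport.mul_left hφ.2.1, fun z hz => ?_⟩
      by_contra hzD
      have hz1 : z ∈ tsupport φ := tsupport_mul_subset_right hz
      have hz2 : z ∈ tsupport (fun z => 1 - χ z) := tsupport_mul_subset_left hz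
      rw [tsupport, mem_closure_iff_nhds] at hz2
      have hzK : z ∈ tsupport φ \ D' := ⟨hz1, hzD⟩
      obtain ⟨w, hw1, hw2⟩ := hz2 _ (isOpen_thickening.mem_nhds (self_subset_thickening hδ _ hzK))
      exact hw2 (by simp [c6 w (thickening_subset_cthickening _ _ hw1)])
    have e : φ = fun z => χ z * φ z + (1 - χ z) * φ z := by funext z; ring
    have i1 := TT_integrable_on A h.loc t1
    have i2 := TT_integrable_on A h'.loc t2
    have g1 := h.sub _ t1 fun z => mul_nonneg (c4 z) (h0 z)
    have g2 := h'.sub _ t2 fun z => mul_nonneg (sub_nonneg.2 (c5 z)) (h0 z)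
    have : TT volume (bb n) (aR A) u φ = TT volume (bb n) (aR A) u (fun z => χ z * φ z) + TT volume (bb n) (aR A) u (fun z => (1 - χ z) * φ z) := by
      unfold TT
      rw [← integral_add i1 i2]
      conv_lhs => rw [e]
      congr 1; funext z
      rw [Lop_add _ t1.1.two_of_infty t2.1.two_of_infty]; ring
    rw [this]; linarith

/-- gluing -/
lemma SubR.glue {A : AlphaForm n} {D D' K : Set (Cn n)} (hD : IsOpen D) (hD' : IsOpen D') (hDD : D' ⊆ D) (hK : IsCompact K) (hKD : K ⊆ D') {u ρ : Cn n → ℝ} (h : SubR A D' u)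
    (hρ : SubR A D ρ) (hle : ∀ z ∈ D', z ∉ K → u z ≤ ρ z) : ∃ v, SubR A D v ∧ (∀ z ∈ D', v z = Max.max (u z) (ρ z)) ∧ ∀ z, z ∉ D' → v z = ρ z := by
  classical
  refine ⟨fun z => if z ∈ D' then Max.max (u z) (ρ z) else ρ z, ?_, fun z hz => if_pos hz, fun z hz => if_neg hz⟩
  have e : D = D' ∪ (D \ K) := by
    ext z; constructor
    · intro hz
      by_cases hzK : z ∈ K
      exacts [Or.inl (hKD hzK), Or.inr ⟨hz, hzK⟩]
    · rintro (hz | hz)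
      exacts [hDD hz, hz.1]
  have ho : IsOpen (D \ K) := hD.sdiff hK.isClosed
  rw [e]
  refine SubR.union hD' ho ?_ ?_
  · exact (SubR.max hD' h (hρ.mono hDD)).congr hD' fun z hz => if_pos hz
  · refine (hρ.mono Set.sdiff_subset).congr ho fun z hz => ?_
    by_cases hz' : z ∈ D'
    · rw [if_pos hz', max_eq_right (hle z hz' hz.2)]
    · rw [if_neg hz']

lemma limsup_le_add {z : Cn n} {f g : Cn n → ℝ} {ε : ℝ} (hfg : ∀ᶠ w in 𝓝 z, f w ≤ g w + ε) (hg : ∀ᶠ w in 𝓝 z, g w ≤ 0) :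
    limsup f (𝓝 z) ≤ limsup g (𝓝 z) + ε := by
  rw [← sub_le_iff_le_add, limsup_eq (u := g)]
  refine le_csInf ⟨0, hg⟩ fun a ha => ?_
  rw [sub_le_iff_le_add, limsup_eq]
  refine csInf_le ⟨f z, fun b hb => Eventually.self_of_nhds (p := fun w => f w ≤ b) hb⟩ ?_
  filter_upwards [hfg, ha] with w h1 h2
  linarith

theorem main_thm (A : AlphaForm n) (D : Set (Cn n))
    (Dseq : ℕ → Set (Cn n)) (hD : IsAlphaRegularDomain A D)
    (hDj : ∀ j, IsAlphaRegularDomain A (Dseq j)) (hmono : ∀ j, Dseq j ⊆ Dseq (j + 1))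
    (hUnion : D = ⋃ j, Dseq j) (E : Set (Cn n)) (hEc : IsCompact (closure E))
    (hE : closure E ⊆ Dseq 0) (ψ : Cn n → ℝ)
    (hbd : ∃ C : ℝ, ∀ z ∈ E, |ψ z| ≤ C) :
    ∀ z ∈ D, Filter.Tendsto (fun j => omegaWStar A E (Dseq j) ψ z) atTop
      (𝓝 (omegaWStar A E D ψ z)) := by
  obtain ⟨hDo, -, hDb, ρ, hρ, hρ0, hρlim⟩ := hD
  have hjo : ∀ j, IsOpen (Dseq j) := fun j => (hDj j).1
  have hsub : ∀ j, Dseq j ⊆ D := fun j => by rw [hUnion]; exact Set.subset_iUnion _ j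
  have hmon : Monotone Dseq := monotone_nat_of_le_succ hmono
  have hED : closure E ⊆ D := hE.trans (hsub 0)
  rw [subR_iff hDo] at hρ
  -- constant
  obtain ⟨C, hC, hCψ⟩ : ∃ C > 0, ∀ z ∈ E, C * ρ z ≤ ψ z := by
    obtain ⟨C0, hC0⟩ := hbd
    rcases E.eq_empty_or_nonempty with rfl | hne
    · exact ⟨1, one_pos, by simp⟩
    have husc : UpperSemicontinuousOn ρ (closure E) := fun z hz c hc => nhdsWithin_le_nhds (hρ.usc z (hED hz) c hc)
    obtain ⟨m, hm, hmax⟩ := husc.exists_isMaxOn hne.closure hEc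
    have hm0 := hρ0 m (hED hm)
    refine ⟨(|C0| + 1) / (-ρ m), div_pos (by positivity) (by linarith), fun z hz => ?_⟩
    have h1 : ρ z ≤ ρ m := hmax (subset_closure hz)
    have h2 : (|C0| + 1) / (-ρ m) * ρ z ≤ (|C0| + 1) / (-ρ m) * ρ m := mul_le_mul_of_nonneg_left h1 (div_pos (by positivity) (by linarith)).le
    have h3 : (|C0| + 1) / (-ρ m) * ρ m = -(|C0| + 1) := by field_simp [hm0.ne]
    have := abs_le.1 (hC0 z hz)
    linarith [le_abs_self C0]
  have hCρ := hρ.const_mul hC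
  have hCρ0 : ∀ z ∈ D, C * ρ z < 0 := fun z hz => mul_neg_of_pos_of_neg hC (hρ0 z hz)
  have hmem : ∀ G, IsOpen G → G ⊆ D → (fun z => C * ρ z) ∈ Uclass A E G ψ := fun G hG hGD =>
    ⟨(subR_iff hG).2 (hCρ.mono hGD), hCψ, fun z hz => hCρ0 z (hGD hz)⟩
  have hbdd : ∀ G z, z ∈ G → BddAbove ((fun u : Cn n → ℝ => u z) '' Uclass A E G ψ) := by
    intro G z hz
    refine ⟨0, ?_⟩
    rintro _ ⟨u, hu, rfl⟩
    exact (hu.2.2 z hz).le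
  have hneg : ∀ G z, z ∈ G → omegaW A E G ψ z ≤ 0 := by
    intro G z hz
    refine Real.sSup_nonpos ?_
    rintro _ ⟨u, hu, rfl⟩
    exact (hu.2.2 z hz).le
  have hlow : ∀ j, ∀ z ∈ Dseq j, omegaW A E D ψ z ≤ omegaW A E (Dseq j) ψ z := by
    intro j z hz
    refine csSup_le ⟨_, _, hmem D hDo subset_rfl, rfl⟩ ?_
    rintro _ ⟨u, hu, rfl⟩
    refine le_csSup (hbdd _ z hz) ⟨u, ⟨?_, hu.2.1, fun w hw => hu.2.2 w (hsub j hw)⟩, rfl⟩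
    exact (subR_iff (hjo j)).2 (((subR_iff hDo).1 hu.1).mono (hsub j))
  have hup : ∀ ε > 0, ∃ j0, ∀ j ≥ j0, ∀ z ∈ Dseq j, omegaW A E (Dseq j) ψ z ≤ omegaW A E D ψ z + ε := by
    intro ε hε
    set O := interior {z | z ∈ D → -ε < C * ρ z} with hO
    have hfr : frontier D ⊆ O := by
      intro ζ hζ
      rw [hO, mem_interior_iff_mem_nhds]
      have h1 : Tendsto (fun z => C * ρ z) (𝓝[D] ζ) (𝓝 (C * 0)) := (hρlim ζ hζ).const_mul C
      have h2 : ∀ᶠ z in 𝓝[D] ζ, -ε < C * ρ z := h1.eventually (lt_mem_nhds (by simpa using hε))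
      exact eventually_nhdsWithin_iff.1 h2
    have hKc : IsCompact (closure D \ O) := (hDb.isCompact_closure).diff isOpen_interior
    have hKD : closure D \ O ⊆ D := by
      intro z hz
      by_contra hzD
      apply hz.2; apply hfr
      rw [hDo.frontier_eq]; exact ⟨hz.1, hzD⟩
    obtain ⟨j0, hj0⟩ := hKc.elim_directed_cover Dseq hjo (by rw [← hUnion]; exact hKD) (directed_of_isDirected_le hmon)
    refine ⟨j0, fun j hj z hz => ?_⟩
    rw [← sub_le_iff_le_add, sub_le_iff_le_add]
    refine csSup_le ⟨_, _, hmem _ (hjo j) (hsub j), rfl⟩ ?_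
    rintro _ ⟨u, hu, rfl⟩
    have hu1 := ((subR_iff (hjo j)).1 hu.1).sub_const ε
    obtain ⟨v, hv, hv1, hv2⟩ := SubR.glue hDo (hjo j) (hsub j) hKc (hj0.trans (hmon hj)) hu1 hCρ (by
      intro w hw hwK
      have h1 := hu.2.2 w hw
      have h2 : w ∈ O := by
        by_contra h; exact hwK ⟨subset_closure (hsub j hw), h⟩
      have h3 := interior_subset h2 (hsub j hw)
      linarith)
    have hvU : v ∈ Uclass A E D ψ := by
      refine ⟨(subR_iff hDo).2 hv, fun w hw => ?_, fun w hw => ?_⟩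
      · rw [hv1 w (hmon (Nat.zero_le j) (hE (subset_closure hw)))]
        exact max_le (by have := hu.2.1 w hw; linarith) (hCψ w hw)
      · by_cases hwj : w ∈ Dseq j
        · rw [hv1 w hwj]
          exact max_lt (by have := hu.2.2 w hwj; linarith) (hCρ0 w hw)
        · rw [hv2 w hwj]; exact hCρ0 w hw
    have h5 : v z ≤ omegaW A E D ψ z := le_csSup (hbdd D z (hsub j hz)) ⟨v, hvU, rfl⟩
    have h6 := le_max_left (u z - ε) (C * ρ z)
    rw [hv1 z hz] at h5
    change u z ≤ _
    linarith
  intro z hz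
  obtain ⟨j1, hj1⟩ : ∃ j, z ∈ Dseq j := by rw [hUnion] at hz; exact Set.mem_iUnion.1 hz
  rw [Metric.tendsto_atTop]
  intro ε hε
  obtain ⟨j0, hj0⟩ := hup (ε / 2) (by linarith)
  refine ⟨max j0 j1, fun j hj => ?_⟩
  have hzj : z ∈ Dseq j := hmon ((le_max_right _ _).trans hj) hj1
  have hnb := (hjo j).mem_nhds hzj
  have a1 : omegaWStar A E D ψ z ≤ omegaWStar A E (Dseq j) ψ z + 0 := by
    refine limsup_le_add ?_ ?_
    · filter_upwards [hnb] with w hw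
      simpa using hlow j w hw
    · filter_upwards [hnb] with w hw
      exact hneg _ w hw
  have a2 : omegaWStar A E (Dseq j) ψ z ≤ omegaWStar A E D ψ z + ε / 2 := by
    refine limsup_le_add ?_ ?_
    · filter_upwards [hnb] with w hw
      exact hj0 j ((le_max_left _ _).trans hj) w hw
    · filter_upwards [hnb] with w hw
      exact hneg _ w (hsub j hw)
  rw [Real.dist_eq, abs_lt]
  constructor <;> linarith
end main
end
end P14

/-- For an increasing sequence of `α`-regular domains `D_j` exhausting
the bounded `α`-regular domain `D`, and `E ⋐ D 0`,
`ω*_α(z,E,D_j,ψ) → ω*_α(z,E,D,ψ)` for every `z ∈ D`. -/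
theorem weighted_measure_increasing_domains {n : ℕ} (A : AlphaForm n) (D : Set (Cn n))
    (Dseq : ℕ → Set (Cn n)) (hD : IsAlphaRegularDomain A D)
    (hDj : ∀ j, IsAlphaRegularDomain A (Dseq j)) (hmono : ∀ j, Dseq j ⊆ Dseq (j + 1))
    (hUnion : D = ⋃ j, Dseq j) (E : Set (Cn n)) (hEc : IsCompact (closure E))
    (hE : closure E ⊆ Dseq 0) (ψ : Cn n → ℝ)
    (hbd : ∃ C : ℝ, ∀ z ∈ E, |ψ z| ≤ C) (hsup : ∃ c < (0 : ℝ), ∀ z ∈ E, ψ z ≤ c) :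
    ∀ z ∈ D, Filter.Tendsto (fun j => omegaWStar A E (Dseq j) ψ z) atTop
      (𝓝 (omegaWStar A E D ψ z)) := by
  
  exact main_thm A D Dseq hD hDj hmono hUnion E hEc hE ψ hbd
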